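/- arXiv:1011.4691 — 3 statements merged into one kernel-verified Lean document; each statement's English description precedes it below -/
import Mathlib

section
/- Let N ≥ 3, α ∈ ℝ and p > 0. The equation −Δu = |x|^α u^{−p} has a C² positive solution on ℝ^N \ {0} if and only if N + α + p(N−2) > 0 and α < −2. Moreover, when these two conditions hold, the function ξ(x) = C |x|^{(2+α)/(1+p)}, where C = [ (1+p)² / ( (−(α+2)) · (N + α + p(N−2)) ) ]^{1/(1+p)}, is a C² positive solution of the equation, and it is the minimal solution: ξ ≤ u on ℝ^N \ {0} for every C² positive solution u. -/
open Metric Set MeasureTheory Filter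

noncomputable def laplacian {N : ℕ} (u : EuclideanSpace ℝ (Fin N) → ℝ)
    (x : EuclideanSpace ℝ (Fin N)) : ℝ :=
  ∑ i, iteratedFDeriv ℝ 2 u x ![EuclideanSpace.single i 1, EuclideanSpace.single i 1]

/-- A `C²` positive solution of `-Δu = φ(|x|) u^{-p}` on `ℝ^N \ {0}`. -/
def IsSol {N : ℕ} (φ : ℝ → ℝ) (p : ℝ) (u : EuclideanSpace ℝ (Fin N) → ℝ) : Prop :=
  ContDiffOn ℝ 2 u {(0 : EuclideanSpace ℝ (Fin N))}ᶜ ∧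
    ∀ x : EuclideanSpace ℝ (Fin N), x ≠ 0 →
      0 < u x ∧ -laplacian u x = φ ‖x‖ * u x ^ (-p)

lemma iter2_eq {N : ℕ} {f : EuclideanSpace ℝ (Fin N) → ℝ} {x : EuclideanSpace ℝ (Fin N)}
    (hf : ContDiffAt ℝ 2 f x) (v : EuclideanSpace ℝ (Fin N)) :
    (∀ᶠ t in nhds (0:ℝ), HasDerivAt (fun t : ℝ => f (x + t • v)) (fderiv ℝ f (x + t • v) v) t) ∧
    HasDerivAt (fun t : ℝ => fderiv ℝ f (x + t • v) v)
      (iteratedFDeriv ℝ 2 f x ![v, v]) 0 := by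
  have hline : ∀ t : ℝ, HasDerivAt (fun t : ℝ => x + t • v) v t := by
    intro t
    simpa using ((hasDerivAt_id t).smul_const v).const_add x
  constructor
  · have h1 : ∀ᶠ y in nhds x, ContDiffAt ℝ 2 f y := hf.eventually (by simp)
    have hc : Tendsto (fun t : ℝ => x + t • v) (nhds 0) (nhds x) := by
      have := (hline 0).continuousAt.tendsto
      simpa using this
    filter_upwards [hc.eventually h1] with t ht
    have := (ht.differentiableAt (by norm_num)).hasFDerivAt
    exact this.comp_hasDerivAt t (hline t)
  · have h2 : ContDiffAt ℝ 1 (fderiv ℝ f) x := hf.fderiv_right (by norm_num)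
    have h3 := (h2.differentiableAt (by norm_num)).hasFDerivAt
    have h3' : HasFDerivAt (fderiv ℝ f) (fderiv ℝ (fderiv ℝ f) x) (x + (0:ℝ) • v) := by simpa using h3
    have h4 := h3'.comp_hasDerivAt (0:ℝ) (hline 0)
    have h5 := h4.clm_apply (hasDerivAt_const (0:ℝ) v)
    rw [iteratedFDeriv_two_apply]
    simpa using h5

lemma iter2_of_line {N : ℕ} {f : EuclideanSpace ℝ (Fin N) → ℝ} {x : EuclideanSpace ℝ (Fin N)}
    (hf : ContDiffAt ℝ 2 f x) (v : EuclideanSpace ℝ (Fin N)) {g : ℝ → ℝ} {d : ℝ}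
    (hg : ∀ᶠ t in nhds (0:ℝ), HasDerivAt (fun t : ℝ => f (x + t • v)) (g t) t)
    (hd : HasDerivAt g d 0) : iteratedFDeriv ℝ 2 f x ![v, v] = d := by
  obtain ⟨h1, h2⟩ := iter2_eq hf v
  refine h2.unique (hd.congr_of_eventuallyEq ?_)
  filter_upwards [h1, hg] with t h h' using h.unique h'

lemma iter2_nonneg {N : ℕ} {f : EuclideanSpace ℝ (Fin N) → ℝ} {x : EuclideanSpace ℝ (Fin N)}
    (hf : ContDiffAt ℝ 2 f x) (v : EuclideanSpace ℝ (Fin N)) (hm : IsLocalMin f x) :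
    0 ≤ iteratedFDeriv ℝ 2 f x ![v, v] := by
  by_contra! hneg
  obtain ⟨h1, h2⟩ := iter2_eq hf v
  set φ : ℝ → ℝ := fun t => f (x + t • v) with hφ
  have hmin : IsLocalMin φ 0 := by
    have hc : Tendsto (fun t : ℝ => x + t • v) (nhds 0) (nhds x) := by
      have : ContinuousAt (fun t : ℝ => x + t • v) 0 := by fun_prop
      simpa [ContinuousAt] using this
    filter_upwards [hc.eventually hm] with t ht
    simpa [hφ] using ht
  have hdd : deriv φ =ᶠ[nhds 0] fun t => fderiv ℝ f (x + t • v) v := by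
    filter_upwards [h1] with t ht using ht.deriv
  have h3 : HasDerivAt (deriv φ) (iteratedFDeriv ℝ 2 f x ![v, v]) 0 := h2.congr_of_eventuallyEq hdd
  have hmax : IsLocalMax φ 0 := by
    apply isLocalMax_of_deriv_deriv_neg
    · rw [h3.deriv]; exact hneg
    · exact hmin.deriv_eq_zero
    · exact h1.self_of_nhds.continuousAt
  have hconst : φ =ᶠ[nhds 0] fun _ => φ 0 := by
    filter_upwards [hmin, hmax] with t a b using le_antisymm b a
  have h4 : deriv φ =ᶠ[nhds 0] fun _ => 0 := by
    have := hconst.deriv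
    simpa using this
  have h5 := h3.congr_of_eventuallyEq h4.symm
  have h6 := h5.unique (hasDerivAt_const (0:ℝ) (0:ℝ))
  linarith

lemma laplacian_nonneg {N : ℕ} {f : EuclideanSpace ℝ (Fin N) → ℝ} {x : EuclideanSpace ℝ (Fin N)}
    (hf : ContDiffAt ℝ 2 f x) (hm : IsLocalMin f x) : 0 ≤ laplacian f x :=
  Finset.sum_nonneg fun _ _ => iter2_nonneg hf _ hm

lemma laplacian_sub {N : ℕ} {f g : EuclideanSpace ℝ (Fin N) → ℝ} {x : EuclideanSpace ℝ (Fin N)}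
    (hf : ContDiffAt ℝ 2 f x) (hg : ContDiffAt ℝ 2 g x) :
    laplacian (fun y => f y - g y) x = laplacian f x - laplacian g x := by
  unfold laplacian
  rw [← Finset.sum_sub_distrib]
  refine Finset.sum_congr rfl fun i _ => ?_
  obtain ⟨a1, a2⟩ := iter2_eq hf (EuclideanSpace.single i 1)
  obtain ⟨b1, b2⟩ := iter2_eq hg (EuclideanSpace.single i 1)
  refine iter2_of_line (hf.sub hg) _ ?_ (a2.sub b2)
  filter_upwards [a1, b1] with t h h' using h.sub h'

lemma laplacian_const_mul {N : ℕ} {f : EuclideanSpace ℝ (Fin N) → ℝ} {x : EuclideanSpace ℝ (Fin N)}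
    (hf : ContDiffAt ℝ 2 f x) (c : ℝ) :
    laplacian (fun y => c * f y) x = c * laplacian f x := by
  unfold laplacian
  rw [Finset.mul_sum]
  refine Finset.sum_congr rfl fun i _ => ?_
  obtain ⟨a1, a2⟩ := iter2_eq hf (EuclideanSpace.single i 1)
  refine iter2_of_line (contDiffAt_const.mul hf) _ ?_ (a2.const_mul c)
  filter_upwards [a1] with t h using h.const_mul c

lemma laplacian_const {N : ℕ} (x : EuclideanSpace ℝ (Fin N)) (c : ℝ) :
    laplacian (fun _ => c) x = 0 := by
  unfold laplacian
  refine Finset.sum_eq_zero fun i _ => ?_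
  refine iter2_of_line (g := fun _ => 0) contDiffAt_const _ ?_ (hasDerivAt_const _ _)
  exact Eventually.of_forall fun t => hasDerivAt_const _ _

lemma contDiffAt_pow {N : ℕ} {x : EuclideanSpace ℝ (Fin N)} (hx : x ≠ 0) (s : ℝ) :
    ContDiffAt ℝ 2 (fun y : EuclideanSpace ℝ (Fin N) => ‖y‖ ^ s) x :=
  (contDiffAt_norm ℝ hx).rpow_const_of_ne (norm_ne_zero_iff.2 hx)

lemma laplacian_pow {N : ℕ} {x : EuclideanSpace ℝ (Fin N)} (hx : x ≠ 0) (s : ℝ) :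
    laplacian (fun y : EuclideanSpace ℝ (Fin N) => ‖y‖ ^ s) x
      = s * (s + N - 2) * ‖x‖ ^ (s - 2) := by
  have hr : 0 < ‖x‖ := norm_pos_iff.2 hx
  have hpow : ∀ (a : ℝ) (y : EuclideanSpace ℝ (Fin N)), ‖y‖ ^ a = (‖y‖ ^ 2) ^ (a / 2) := by
    intro a y
    rw [← Real.rpow_natCast, ← Real.rpow_mul (norm_nonneg y)]
    congr 1; push_cast; ring
  have key : ∀ i : Fin N, iteratedFDeriv ℝ 2 (fun y : EuclideanSpace ℝ (Fin N) => ‖y‖ ^ s) x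
      ![EuclideanSpace.single i 1, EuclideanSpace.single i 1]
      = s * ‖x‖ ^ (s - 2) + s * (s - 2) * ‖x‖ ^ (s - 4) * x i ^ 2 := by
    intro i
    have hq : ∀ t : ℝ, ‖x + t • EuclideanSpace.single i (1:ℝ)‖ ^ 2
        = ‖x‖ ^ 2 + 2 * t * x i + t ^ 2 := by
      intro t
      rw [norm_add_sq_real, inner_smul_right, norm_smul]
      simp [EuclideanSpace.inner_single_right]
      ring
    have hQ : ∀ t : ℝ, HasDerivAt (fun t : ℝ => ‖x‖ ^ 2 + 2 * t * x i + t ^ 2)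
        (2 * x i + 2 * t) t := by
      intro t
      have h := (((hasDerivAt_id t).const_mul 2).mul_const (x i)).const_add (‖x‖ ^ 2)
      have h' := h.add ((hasDerivAt_id t).pow 2)
      exact h'.congr_deriv (by simp)
    have hpos0 : 0 < ‖x‖ ^ 2 + 2 * 0 * x i + 0 ^ 2 := by simp; positivity
    have hpos : ∀ᶠ t in nhds (0:ℝ), 0 < ‖x‖ ^ 2 + 2 * t * x i + t ^ 2 :=
      (hQ 0).continuousAt.eventually (lt_mem_nhds hpos0)
    refine iter2_of_line (g := fun t => (2 * x i + 2 * t) * (s / 2) *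
      (‖x‖ ^ 2 + 2 * t * x i + t ^ 2) ^ (s / 2 - 1)) (contDiffAt_pow hx s) _ ?_ ?_
    · filter_upwards [hpos] with t ht
      have := (hQ t).rpow_const (p := s / 2) (Or.inl ht.ne')
      refine this.congr_of_eventuallyEq (Eventually.of_forall fun t' => ?_)
      simp only
      rw [hpow s, hq]
    · have h1 := (hQ 0).rpow_const (p := s / 2 - 1) (Or.inl hpos0.ne')
      have h2 : HasDerivAt (fun t : ℝ => (2 * x i + 2 * t) * (s / 2)) (s) 0 := by
        have := (((hasDerivAt_id (0:ℝ)).const_mul 2).const_add (2 * x i)).mul_const (s / 2)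
        exact this.congr_deriv (by ring)
      have h3 := h2.mul h1
      refine h3.congr_deriv ?_
      rw [hpow (s - 2), hpow (s - 4)]
      have e1 : (s - 2) / 2 = s / 2 - 1 := by ring
      have e2 : (s - 4) / 2 = s / 2 - 1 - 1 := by ring
      rw [e1, e2]
      simp
      ring
  unfold laplacian
  simp_rw [key]
  rw [Finset.sum_add_distrib, ← Finset.mul_sum, ← Finset.mul_sum, ← EuclideanSpace.real_norm_sq_eq]
  have e : ‖x‖ ^ (s - 2) = ‖x‖ ^ (s - 4) * ‖x‖ ^ 2 := by
    rw [← Real.rpow_natCast, ← Real.rpow_add hr]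
    congr 1; push_cast; ring
  simp only [Finset.sum_const, Finset.card_univ, Fintype.card_fin, nsmul_eq_mul]
  rw [e]; ring

lemma comparison {N : ℕ} {α p : ℝ} (hp : 0 < p)
    {u : EuclideanSpace ℝ (Fin N) → ℝ} (hu : IsSol (fun r => r ^ α) p u)
    {τ c A B : ℝ} (hτ : τ < 0) (hτ' : 0 < τ + N - 2) (hc : 0 < c) (hA : 0 < A) (hB : 0 < B)
    (H : ∀ r : ℝ, 0 < r → A + B * r ^ (2 - (N:ℝ)) < c * r ^ τ →
      c ^ (1 + p) * (-τ * (τ + N - 2)) ≤ r ^ (α + 2 - (1 + p) * τ))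
    (x : EuclideanSpace ℝ (Fin N)) (hx : x ≠ 0) :
    c * ‖x‖ ^ τ - A - B * ‖x‖ ^ (2 - (N:ℝ)) ≤ u x := by
  obtain ⟨hC, hS⟩ := hu
  have hCat : ∀ y, y ≠ 0 → ContDiffAt ℝ 2 u y := fun y hy =>
    hC.contDiffAt (isOpen_compl_singleton.mem_nhds hy)
  -- the comparison function
  set v : EuclideanSpace ℝ (Fin N) → ℝ :=
    fun y => c * ‖y‖ ^ τ - A - B * ‖y‖ ^ (2 - (N:ℝ)) with hv
  have hvC : ∀ y, y ≠ 0 → ContDiffAt ℝ 2 v y := fun y hy =>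
    ((contDiffAt_const.mul (contDiffAt_pow hy τ)).sub contDiffAt_const).sub
      (contDiffAt_const.mul (contDiffAt_pow hy _))
  have hvL : ∀ y, y ≠ 0 → laplacian v y = c * (τ * (τ + N - 2) * ‖y‖ ^ (τ - 2)) := by
    intro y hy
    rw [hv, laplacian_sub ((contDiffAt_const.mul (contDiffAt_pow hy τ)).sub contDiffAt_const)
      (contDiffAt_const.mul (contDiffAt_pow hy _)),
      laplacian_sub (contDiffAt_const.mul (contDiffAt_pow hy τ)) contDiffAt_const,
      laplacian_const_mul (contDiffAt_pow hy τ), laplacian_const_mul (contDiffAt_pow hy _),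
      laplacian_const, laplacian_pow hy, laplacian_pow hy]
    ring
  -- behaviour at infinity
  obtain ⟨R, hR⟩ : ∃ R : ℝ, ∀ r, R ≤ r → c * r ^ τ < A := by
    have h1 : Tendsto (fun r : ℝ => c * r ^ τ) atTop (nhds (c * 0)) := by
      have := tendsto_rpow_neg_atTop (y := -τ) (by linarith)
      rw [neg_neg] at this
      exact this.const_mul c
    rw [mul_zero] at h1
    exact eventually_atTop.1 (h1.eventually (gt_mem_nhds hA))
  -- behaviour at the origin
  obtain ⟨δ, hδ, hδ'⟩ : ∃ δ : ℝ, 0 < δ ∧ ∀ r, 0 < r → r < δ → c * r ^ τ < B * r ^ (2 - (N:ℝ)) := by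
    have h1 : ContinuousAt (fun r : ℝ => c * r ^ (τ + N - 2)) 0 :=
      continuousAt_const.mul (Real.continuousAt_rpow_const _ _ (Or.inr hτ'.le))
    have h2 : ∀ᶠ r in nhds (0:ℝ), c * r ^ (τ + N - 2) < B := by
      refine h1.eventually (gt_mem_nhds ?_)
      simp only
      rw [Real.zero_rpow hτ'.ne']
      simpa using hB
    obtain ⟨δ, hδ, h⟩ := Metric.eventually_nhds_iff.1 h2
    refine ⟨δ, hδ, fun r hr hr' => ?_⟩
    have h3 := h (y := r) (by rw [Real.dist_eq, sub_zero, abs_of_pos hr]; exact hr')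
    have h4 : r ^ τ = r ^ (τ + N - 2) * r ^ (2 - (N:ℝ)) := by
      rw [← Real.rpow_add hr]; congr 1; ring
    rw [h4, ← mul_assoc]
    exact mul_lt_mul_of_pos_right h3 (Real.rpow_pos_of_pos hr _)
  by_contra! hlt
  have hneg : ∀ y, y ≠ 0 → u y - v y < 0 → δ ≤ ‖y‖ ∧ ‖y‖ < R := by
    intro y hy h
    have hyp : 0 < ‖y‖ := norm_pos_iff.2 hy
    have hup := (hS y hy).1
    have hb := Real.rpow_pos_of_pos hyp (2 - (N:ℝ))
    constructor
    · by_contra! hh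
      have := hδ' _ hyp hh
      simp only [hv] at h
      linarith
    · by_contra! hh
      have h1 := hR _ hh
      have h2 := mul_pos hB hb
      simp only [hv] at h
      linarith
  set K : Set (EuclideanSpace ℝ (Fin N)) := closedBall 0 R \ ball 0 (δ / 2) with hK
  have hKc : IsCompact K := (isCompact_closedBall _ _).diff isOpen_ball
  have hK0 : ∀ y ∈ K, y ≠ 0 := by
    rintro y ⟨-, hy⟩ rfl
    exact hy (mem_ball_self (by linarith))
  have hxK : x ∈ K := by
    obtain ⟨a, b⟩ := hneg x hx (by linarith)
    refine ⟨by simpa using b.le, ?_⟩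
    simp only [mem_ball, dist_zero_right, not_lt]; linarith
  have hcont : ContinuousOn (fun y => u y - v y) K := fun y hy =>
    ((hCat y (hK0 y hy)).continuousAt.sub (hvC y (hK0 y hy)).continuousAt).continuousWithinAt
  obtain ⟨y, hyK, hymin⟩ := hKc.exists_isMinOn ⟨x, hxK⟩ hcont
  have hy0 := hK0 y hyK
  have hyneg : u y - v y < 0 := lt_of_le_of_lt (hymin hxK) (by simp only; linarith)
  obtain ⟨hy1, hy2⟩ := hneg y hy0 hyneg
  have hKn : K ∈ nhds y := by
    have h1 : ball (0 : EuclideanSpace ℝ (Fin N)) R ∈ nhds y := isOpen_ball.mem_nhds (by simpa using hy2)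
    have h2 : (closedBall (0 : EuclideanSpace ℝ (Fin N)) (δ / 2))ᶜ ∈ nhds y :=
      isClosed_closedBall.isOpen_compl.mem_nhds (by simp; linarith)
    filter_upwards [h1, h2] with z hz hz'
    exact ⟨ball_subset_closedBall hz, fun h => hz' (ball_subset_closedBall h)⟩
  have hloc : IsLocalMin (fun y => u y - v y) y := hymin.isLocalMin hKn
  have hlap := laplacian_nonneg ((hCat y hy0).sub (hvC y hy0)) hloc
  rw [laplacian_sub (hCat y hy0) (hvC y hy0), hvL y hy0] at hlap
  obtain ⟨hup, heq⟩ := hS y hy0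
  have hr : 0 < ‖y‖ := norm_pos_iff.2 hy0
  set r := ‖y‖ with hrdef
  have hb := mul_pos hB (Real.rpow_pos_of_pos hr (2 - (N:ℝ)))
  have hvy : v y = c * r ^ τ - A - B * r ^ (2 - (N:ℝ)) := rfl
  have hk := H r hr (by linarith)
  have hcr : 0 < c * r ^ τ := mul_pos hc (Real.rpow_pos_of_pos hr _)
  have hlt2 : (c * r ^ τ) ^ (-p) < u y ^ (-p) :=
    Real.rpow_lt_rpow_of_neg hup (by linarith) (by linarith)
  have hra := Real.rpow_pos_of_pos hr α
  have h1 := mul_lt_mul_of_pos_left hlt2 hra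
  have h2 : c * (-τ * (τ + N - 2)) * r ^ (τ - 2) ≤ r ^ α * (c * r ^ τ) ^ (-p) := by
    have e1 : c = c ^ (1 + p) * c ^ (-p) := by
      rw [← Real.rpow_add hc]; simp
    have e2 : r ^ α * (c * r ^ τ) ^ (-p)
        = r ^ (α + 2 - (1 + p) * τ) * (c ^ (-p) * r ^ (τ - 2)) := by
      rw [Real.mul_rpow hc.le (Real.rpow_pos_of_pos hr _).le, ← Real.rpow_mul hr.le]
      have : r ^ (α + 2 - (1 + p) * τ) * (c ^ (-p) * r ^ (τ - 2))
        = c ^ (-p) * (r ^ (α + 2 - (1 + p) * τ) * r ^ (τ - 2)) := by ring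
      rw [this, ← Real.rpow_add hr, mul_left_comm, ← Real.rpow_add hr]
      congr 2; ring
    rw [e2]
    calc c * (-τ * (τ + N - 2)) * r ^ (τ - 2)
        = (c ^ (1 + p) * c ^ (-p)) * (-τ * (τ + N - 2)) * r ^ (τ - 2) := by rw [← e1]
      _ = c ^ (1 + p) * (-τ * (τ + N - 2)) * (c ^ (-p) * r ^ (τ - 2)) := by ring
      _ ≤ _ := mul_le_mul_of_nonneg_right hk
        (mul_pos (Real.rpow_pos_of_pos hc _) (Real.rpow_pos_of_pos hr _)).le
  simp only at heq
  linarith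

lemma exists_delta {N : ℕ} (hN : 3 ≤ N) {p c : ℝ} (hc : 0 < c) :
    ∃ δ : ℝ, 0 < δ ∧ δ ≤ 1 / 2 ∧ c ^ (1 + p) * (δ * (N - 2 - δ)) ≤ 1 := by
  have hN' : (3:ℝ) ≤ N := by exact_mod_cast hN
  have hcp := Real.rpow_pos_of_pos hc (1 + p)
  have hm : 0 < c ^ (1 + p) * ((N:ℝ) - 2) := mul_pos hcp (by linarith)
  refine ⟨1 / (c ^ (1 + p) * ((N:ℝ) - 2) + 2), by positivity, ?_, ?_⟩
  · apply one_div_le_one_div_of_le <;> linarith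
  · set D := c ^ (1 + p) * ((N:ℝ) - 2) + 2 with hD
    have hDp : 0 < D := by linarith
    have h1 : (1 / D) * (N - 2 - 1 / D) ≤ (1 / D) * ((N:ℝ) - 2) := by
      apply mul_le_mul_of_nonneg_left _ (by positivity)
      have : 0 < 1 / D := by positivity
      linarith
    calc _ ≤ c ^ (1 + p) * ((1 / D) * ((N:ℝ) - 2)) := mul_le_mul_of_nonneg_left h1 hcp.le
      _ = (D - 2) / D := by rw [hD]; ring
      _ ≤ 1 := by rw [div_le_one hDp]; linarith

lemma no_sol_one {N : ℕ} (hN : 3 ≤ N) {α p : ℝ} (hp : 0 < p)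
    {u : EuclideanSpace ℝ (Fin N) → ℝ} (hu : IsSol (fun r => r ^ α) p u) : α < -2 := by
  by_contra! hα
  have hN' : (3:ℝ) ≤ N := by exact_mod_cast hN
  set x : EuclideanSpace ℝ (Fin N) := EuclideanSpace.single ⟨0, by omega⟩ 2 with hx
  have hxn : ‖x‖ = 2 := by simp [hx]
  have hx0 : x ≠ 0 := by rw [← norm_pos_iff, hxn]; norm_num
  have hup := (hu.2 x hx0).1
  set c := 5 * (u x + 2) with hcdef
  have hc : 0 < c := by linarith
  obtain ⟨δ, hδ, hδ2, hδ3⟩ := exists_delta hN (p := p) hc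
  have := comparison hp hu (τ := -δ) (c := c) (A := 1) (B := c) (by linarith) (by linarith)
    hc one_pos hc ?_ x hx0
  · rw [hxn] at this
    have h1 : (0.7:ℝ) ≤ 2 ^ (-δ) := by
      have h2 : (2:ℝ) ^ (-(1/2:ℝ)) ≤ 2 ^ (-δ) :=
        Real.rpow_le_rpow_of_exponent_le (by norm_num) (by linarith)
      refine le_trans ?_ h2
      rw [Real.rpow_neg (by norm_num), ← Real.sqrt_eq_rpow]
      have hs : √2 ≤ 10 / 7 := by
        rw [Real.sqrt_le_left (by norm_num)]; norm_num
      have hs0 : 0 < √2 := by positivity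
      rw [le_inv_comm₀ (by norm_num) hs0]
      norm_num at hs ⊢; exact hs
    have h3 : (2:ℝ) ^ (2 - (N:ℝ)) ≤ 0.5 := by
      have : (2:ℝ) ^ (2 - (N:ℝ)) ≤ 2 ^ (-1:ℝ) :=
        Real.rpow_le_rpow_of_exponent_le (by norm_num) (by linarith)
      rw [Real.rpow_neg_one] at this
      norm_num at this ⊢; exact this
    have h4 : c * 0.2 ≤ c * ((2:ℝ) ^ (-δ) - 2 ^ (2 - (N:ℝ))) :=
      mul_le_mul_of_nonneg_left (by norm_num at *; linarith) hc.le
    norm_num at h4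
    rw [mul_sub] at h4
    linarith
  · intro r hr h
    have hr1 : 1 ≤ r := by
      by_contra! hh
      have h1 : r ^ (-δ) ≤ r ^ (2 - (N:ℝ)) :=
        Real.rpow_le_rpow_of_exponent_ge hr hh.le (by linarith)
      have := mul_le_mul_of_nonneg_left h1 hc.le
      linarith
    have e : -(-δ) * (-δ + N - 2) = δ * ((N:ℝ) - 2 - δ) := by ring
    rw [e]
    refine hδ3.trans (Real.one_le_rpow hr1 ?_)
    have : 0 < (1 + p) * δ := by positivity
    linarith

lemma no_sol_two {N : ℕ} (hN : 3 ≤ N) {α p : ℝ} (hp : 0 < p)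
    {u : EuclideanSpace ℝ (Fin N) → ℝ} (hu : IsSol (fun r => r ^ α) p u) :
    0 < (N:ℝ) + α + p * ((N:ℝ) - 2) := by
  by_contra! hα
  have hN' : (3:ℝ) ≤ N := by exact_mod_cast hN
  set x : EuclideanSpace ℝ (Fin N) := EuclideanSpace.single ⟨0, by omega⟩ (1/2) with hx
  have hxn : ‖x‖ = 1/2 := by simp [hx]
  have hx0 : x ≠ 0 := by rw [← norm_pos_iff, hxn]; norm_num
  have hup := (hu.2 x hx0).1
  have hb : 0 < (1/2:ℝ) ^ (2 - (N:ℝ)) := by positivity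
  set c := 5 * (u x + (1/2:ℝ) ^ (2 - (N:ℝ))) with hcdef
  have hc : 0 < c := by linarith
  obtain ⟨δ, hδ, hδ2, hδ3⟩ := exists_delta hN (p := p) hc
  have := comparison hp hu (τ := 2 - N + δ) (c := c) (A := c) (B := 1) (by linarith) (by linarith)
    hc hc one_pos ?_ x hx0
  · rw [hxn] at this
    have h1 : (1.4:ℝ) ≤ (1/2) ^ (2 - N + δ) := by
      have h2 : (1/2:ℝ) ^ (-(1/2:ℝ)) ≤ (1/2) ^ (2 - N + δ) :=
        Real.rpow_le_rpow_of_exponent_ge (by norm_num) (by norm_num) (by linarith)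
      refine le_trans ?_ h2
      rw [Real.rpow_neg (by norm_num), ← Real.inv_rpow (by norm_num), ← Real.sqrt_eq_rpow]
      apply Real.le_sqrt_of_sq_le
      norm_num
    have h4 : c * 0.4 ≤ c * ((1/2:ℝ) ^ (2 - N + δ) - 1) :=
      mul_le_mul_of_nonneg_left (by norm_num at *; linarith) hc.le
    norm_num at h4
    rw [mul_sub] at h4
    norm_num at *
    linarith
  · intro r hr h
    have hr1 : r ≤ 1 := by
      by_contra! hh
      have h1 : r ^ (2 - N + δ) ≤ 1 :=
        Real.rpow_le_one_of_one_le_of_nonpos hh.le (by linarith)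
      have := mul_le_mul_of_nonneg_left h1 hc.le
      have := Real.rpow_pos_of_pos hr (2 - (N:ℝ))
      linarith
    have e : -(2 - N + δ) * (2 - N + δ + N - 2) = δ * ((N:ℝ) - 2 - δ) := by ring
    rw [e]
    refine hδ3.trans (Real.one_le_rpow_of_pos_of_le_one_of_nonpos hr hr1 ?_)
    have : 0 < (1 + p) * δ := by positivity
    nlinarith

lemma const_id {n α p : ℝ} (hp : 0 < p) (h1 : 0 < n + α + p * (n - 2)) (h2 : α < -2) :
    0 < ((1 + p) ^ 2 / ((-(α + 2)) * (n + α + p * (n - 2)))) ^ (1 / (1 + p)) ∧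
    (((1 + p) ^ 2 / ((-(α + 2)) * (n + α + p * (n - 2)))) ^ (1 / (1 + p))) ^ (1 + p) *
      (-((2 + α) / (1 + p)) * ((2 + α) / (1 + p) + n - 2)) = 1 ∧
    (2 + α) / (1 + p) < 0 ∧ 0 < (2 + α) / (1 + p) + n - 2 := by
  have hp1 : 0 < 1 + p := by linarith
  have h3 : 0 < -(α + 2) := by linarith
  have hX : 0 < (1 + p) ^ 2 / ((-(α + 2)) * (n + α + p * (n - 2))) := by positivity
  have e : (2 + α) / (1 + p) + n - 2 = (n + α + p * (n - 2)) / (1 + p) := by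
    field_simp; ring
  refine ⟨Real.rpow_pos_of_pos hX _, ?_, div_neg_of_neg_of_pos (by linarith) hp1, ?_⟩
  · rw [← Real.rpow_mul hX.le, one_div_mul_cancel hp1.ne', Real.rpow_one, e]
    have := h1.ne'
    have := h3.ne'
    have h5 : α + 2 ≠ 0 := by intro h; linarith
    rw [div_mul_eq_mul_div, div_eq_one_iff_eq (by positivity)]
    field_simp
    ring
  · rw [e]; positivity

lemma xi_sol {N : ℕ} {α p s C : ℝ} (hs : s * (1 + p) = 2 + α) (hC : 0 < C)
    (hid : C ^ (1 + p) * (-s * (s + N - 2)) = 1) :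
    IsSol (fun r => r ^ α) p (fun x : EuclideanSpace ℝ (Fin N) => C * ‖x‖ ^ s) := by
  refine ⟨fun x hx => (contDiffAt_const.mul (contDiffAt_pow hx s)).contDiffWithinAt,
    fun x hx => ?_⟩
  have hr : 0 < ‖x‖ := norm_pos_iff.2 hx
  have hrs := Real.rpow_pos_of_pos hr s
  refine ⟨mul_pos hC hrs, ?_⟩
  rw [laplacian_const_mul (contDiffAt_pow hx s), laplacian_pow hx,
    Real.mul_rpow hC.le hrs.le, ← Real.rpow_mul hr.le]
  have e1 : C = C ^ (1 + p) * C ^ (-p) := by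
    rw [← Real.rpow_add hC]; simp
  have e2 : ‖x‖ ^ (s - 2) = ‖x‖ ^ α * ‖x‖ ^ (s * -p) := by
    rw [← Real.rpow_add hr]; congr 1; linarith
  calc -(C * (s * (s + N - 2) * ‖x‖ ^ (s - 2)))
      = C * ((-s * (s + N - 2)) * ‖x‖ ^ (s - 2)) := by ring
    _ = C ^ (1 + p) * C ^ (-p) * ((-s * (s + N - 2)) * ‖x‖ ^ (s - 2)) := by rw [← e1]
    _ = (C ^ (1 + p) * (-s * (s + N - 2))) * (C ^ (-p) * ‖x‖ ^ (s - 2)) := by ring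
    _ = _ := by rw [hid, e2]; ring

lemma xi_min {N : ℕ} {α p s C : ℝ} (hp : 0 < p) (hs : s * (1 + p) = 2 + α) (hC : 0 < C)
    (hid : C ^ (1 + p) * (-s * (s + N - 2)) = 1) (hs1 : s < 0) (hs2 : 0 < s + N - 2)
    {u : EuclideanSpace ℝ (Fin N) → ℝ} (hu : IsSol (fun r => r ^ α) p u)
    (x : EuclideanSpace ℝ (Fin N)) (hx : x ≠ 0) : C * ‖x‖ ^ s ≤ u x := by
  have hb := Real.rpow_pos_of_pos (norm_pos_iff.2 hx) (2 - (N:ℝ))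
  set b := ‖x‖ ^ (2 - (N:ℝ)) with hbdef
  refine le_of_forall_pos_le_add fun ε hε => ?_
  have hη : 0 < ε / (1 + b) := by positivity
  have := comparison hp hu hs1 hs2 hC hη hη (fun r hr _ => by
    rw [hid]
    have : α + 2 - (1 + p) * s = 0 := by linarith
    rw [this, Real.rpow_zero]) x hx
  rw [← hbdef] at this
  have e : ε / (1 + b) + ε / (1 + b) * b = ε := by field_simp
  linarith

/-- Corollary 4.3: the pure power equation `-Δu = |x|^α u^{-p}` has solutions iff
`N + α + p(N-2) > 0` and `α < -2`, and then
`ξ(x) = C |x|^{(2+α)/(1+p)}` is the minimal solution. -/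
theorem statement_17 {N : ℕ} (hN : 3 ≤ N) (α : ℝ) (p : ℝ) (hp : 0 < p) :
    ((∃ u : EuclideanSpace ℝ (Fin N) → ℝ, IsSol (fun r => r ^ α) p u) ↔
      (0 < (N:ℝ) + α + p * ((N:ℝ) - 2) ∧ α < -2)) ∧
    ((0 < (N:ℝ) + α + p * ((N:ℝ) - 2) ∧ α < -2) →
      (IsSol (fun r => r ^ α) p
          (fun x : EuclideanSpace ℝ (Fin N) =>
            ((1 + p) ^ 2 / ((-(α + 2)) * ((N:ℝ) + α + p * ((N:ℝ) - 2)))) ^ (1 / (1 + p)) *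
              ‖x‖ ^ ((2 + α) / (1 + p))) ∧
        ∀ u : EuclideanSpace ℝ (Fin N) → ℝ, IsSol (fun r => r ^ α) p u →
          ∀ x : EuclideanSpace ℝ (Fin N), x ≠ 0 →
            ((1 + p) ^ 2 / ((-(α + 2)) * ((N:ℝ) + α + p * ((N:ℝ) - 2)))) ^ (1 / (1 + p)) *
              ‖x‖ ^ ((2 + α) / (1 + p)) ≤ u x)) := by
  have hp1 : (1 + p) ≠ 0 := by linarith
  have hsol : (0 < (N:ℝ) + α + p * ((N:ℝ) - 2) ∧ α < -2) → IsSol (fun r => r ^ α) p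
      (fun x : EuclideanSpace ℝ (Fin N) =>
        ((1 + p) ^ 2 / ((-(α + 2)) * ((N:ℝ) + α + p * ((N:ℝ) - 2)))) ^ (1 / (1 + p)) *
          ‖x‖ ^ ((2 + α) / (1 + p))) := by
    rintro ⟨h1, h2⟩
    obtain ⟨a, b, -, -⟩ := const_id hp h1 h2
    exact xi_sol (div_mul_cancel₀ _ hp1) a b
  refine ⟨⟨?_, fun h => ⟨_, hsol h⟩⟩, fun h => ⟨hsol h, fun u hu x hx => ?_⟩⟩
  · rintro ⟨u, hu⟩
    exact ⟨no_sol_two hN hp hu, no_sol_one hN hp hu⟩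
  · obtain ⟨a, b, c, d⟩ := const_id hp h.1 h.2
    exact xi_min hp (div_mul_cancel₀ _ hp1) a b c d hu x hx
end

section
/- Let N ≥ 3, α ∈ ℝ and β, p > 0, and set φ(r) = r^α (log(1+r))^β for r > 0. Then the equation −Δu = φ(|x|) u^{−p} has a C² positive solution on ℝ^N \ {0} if and only if N + α + β + p(N−2) > 0 and α < −2. Moreover, when these two conditions hold, every C² positive solution of this equation is radially symmetric. -/
open Metric Set MeasureTheory Filter

/-! ### The orthogonal group and averages -/

abbrev EE (N : ℕ) := EuclideanSpace ℝ (Fin N)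
noncomputable abbrev OG (N : ℕ) := unitary (EE N →L[ℝ] EE N)

instance OG_cstar (N : ℕ) : ContinuousStar (EE N →L[ℝ] EE N) :=
  ⟨(ContinuousLinearMap.adjoint (𝕜 := ℝ) (E := EE N) (F := EE N)).continuous⟩

instance OG_compact (N : ℕ) : CompactSpace (OG N) := by
  have : IsCompact (unitary (EE N →L[ℝ] EE N) : Set (EE N →L[ℝ] EE N)) := by
    apply Metric.isCompact_of_isClosed_isBounded isClosed_unitary
    refine (Metric.isBounded_closedBall (x := (0 : EE N →L[ℝ] EE N)) (r := 1)).subset ?_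
    intro U hU
    rw [mem_closedBall_zero_iff]
    rcases subsingleton_or_nontrivial (EE N →L[ℝ] EE N) with h | h
    · rw [Subsingleton.elim U 0]; simp
    · exact (CStarRing.norm_of_mem_unitary hU).le
  exact isCompact_iff_compactSpace.mp this

noncomputable def hμ (N : ℕ) : Measure (OG N) := Measure.haarMeasure ⊤

instance hμ_haar (N : ℕ) : Measure.IsHaarMeasure (hμ N) := by unfold hμ; infer_instance
instance hμ_prob (N : ℕ) : IsProbabilityMeasure (hμ N) := ⟨by
  have := Measure.haarMeasure_self (K₀ := (⊤ : TopologicalSpace.PositiveCompacts (OG N)))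
  simpa [hμ] using this⟩
instance hμ_right (N : ℕ) : Measure.IsMulRightInvariant (hμ N) := ⟨fun g => by
  have h1 : IsProbabilityMeasure (Measure.map (fun x => x * g) (hμ N)) :=
    Measure.isProbabilityMeasure_map (by fun_prop)
  exact Measure.isHaarMeasure_eq_of_isProbabilityMeasure _ _⟩

noncomputable def av {N : ℕ} (g : EE N → ℝ) (x : EE N) : ℝ :=
  ∫ R : OG N, g ((R : EE N →L[ℝ] EE N) x) ∂(hμ N)

lemma OG_norm {N : ℕ} (R : OG N) (x : EE N) : ‖(R : EE N →L[ℝ] EE N) x‖ = ‖x‖ := by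
  exact (Unitary.linearIsometryEquiv R).norm_map x

lemma OG_ne {N : ℕ} (R : OG N) {x : EE N} (hx : x ≠ 0) : (R : EE N →L[ℝ] EE N) x ≠ 0 := by
  rw [← norm_pos_iff, OG_norm]; exact norm_pos_iff.mpr hx

lemma OG_trans {N : ℕ} {x y : EE N} (h : ‖x‖ = ‖y‖) :
    ∃ S : OG N, (S : EE N →L[ℝ] EE N) x = y := by
  refine ⟨Unitary.linearIsometryEquiv.symm (Submodule.reflection (ℝ ∙ (x - y))ᗮ), ?_⟩
  simpa using Submodule.reflection_sub h

lemma av_rot {N : ℕ} (g : EE N → ℝ) (S : OG N) (x : EE N) :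
    av g ((S : EE N →L[ℝ] EE N) x) = av g x := by
  unfold av
  exact integral_mul_right_eq_self (μ := hμ N) (fun R : OG N => g ((R : EE N →L[ℝ] EE N) x)) S

lemma av_radial {N : ℕ} (g : EE N → ℝ) {x y : EE N} (h : ‖x‖ = ‖y‖) : av g x = av g y := by
  obtain ⟨S, rfl⟩ := OG_trans h
  rw [av_rot]

lemma av_comp {N : ℕ} (g : EE N → ℝ) (S : OG N) (x : EE N) :
    av (fun y => g ((S : EE N →L[ℝ] EE N) y)) x = av g x := by
  unfold av
  exact integral_mul_left_eq_self (μ := hμ N) (fun R : OG N => g ((R : EE N →L[ℝ] EE N) x)) S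

lemma OG_cont {N : ℕ} : Continuous (fun q : OG N × EE N => (q.1 : EE N →L[ℝ] EE N) q.2) := by
  fun_prop

lemma OG_cont1 {N : ℕ} (x : EE N) : Continuous (fun q : OG N => (q : EE N →L[ℝ] EE N) x) := by
  fun_prop

lemma av_cont {N : ℕ} {g : EE N → ℝ} (hg : ContinuousOn g {0}ᶜ) {x : EE N} (hx : x ≠ 0) :
    Continuous (fun R : OG N => g ((R : EE N →L[ℝ] EE N) x)) := by
  rw [← continuousOn_univ]
  exact hg.comp (OG_cont1 x).continuousOn (fun R _ => OG_ne R hx)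

lemma cont_int {N : ℕ} {F : OG N → ℝ} (hF : Continuous F) : Integrable F (hμ N) :=
  hF.integrable_of_hasCompactSupport (HasCompactSupport.of_compactSpace F)

lemma av_int {N : ℕ} {g : EE N → ℝ} (hg : ContinuousOn g {0}ᶜ) {x : EE N} (hx : x ≠ 0) :
    Integrable (fun R : OG N => g ((R : EE N →L[ℝ] EE N) x)) (hμ N) :=
  cont_int (av_cont hg hx)

lemma av_mono {N : ℕ} {g h : EE N → ℝ} (hg : ContinuousOn g {0}ᶜ) (hh : ContinuousOn h {0}ᶜ)
    {x : EE N} (hx : x ≠ 0) (hle : ∀ y, ‖y‖ = ‖x‖ → g y ≤ h y) : av g x ≤ av h x :=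
  integral_mono (av_int hg hx) (av_int hh hx) (fun R => hle _ (OG_norm R x))

lemma av_const {N : ℕ} (c : ℝ) (x : EE N) : av (fun _ => c) x = c := by
  simp [av]

lemma av_add {N : ℕ} {g h : EE N → ℝ} (hg : ContinuousOn g {0}ᶜ) (hh : ContinuousOn h {0}ᶜ)
    {x : EE N} (hx : x ≠ 0) : av (fun y => g y + h y) x = av g x + av h x :=
  integral_add (av_int hg hx) (av_int hh hx)

lemma av_mul_const {N : ℕ} (g : EE N → ℝ) (c : ℝ) (x : EE N) :
    av (fun y => c * g y) x = c * av g x := by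
  simp [av, integral_const_mul]

lemma av_congr {N : ℕ} {g h : EE N → ℝ} {x : EE N} (hle : ∀ y, ‖y‖ = ‖x‖ → g y = h y) :
    av g x = av h x := by
  unfold av; congr 1; ext R; exact hle _ (OG_norm R x)

lemma av_zero {N : ℕ} {g : EE N → ℝ} (hg : ContinuousOn g {0}ᶜ) {x : EE N} (hx : x ≠ 0)
    (h0 : ∀ y, y ≠ 0 → 0 ≤ g y) (h : av g x = 0) : g x = 0 := by
  have h1 := (integral_eq_zero_iff_of_nonneg (fun R => h0 _ (OG_ne R hx)) (av_int hg hx)).mp h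
  have h2 := Continuous.ae_eq_iff_eq (hμ N) (av_cont hg hx) continuous_const |>.mp h1
  have h3 := congrFun h2 1
  exact h3

open Metric Set MeasureTheory Filter
open scoped Topology

/-! ### Second order jets along curves -/

def Jet2 (f : ℝ → ℝ) (a b : ℝ) : Prop :=
  ∃ d : ℝ → ℝ, (∀ᶠ s in 𝓝 0, HasDerivAt f (d s) s) ∧ d 0 = a ∧ HasDerivAt d b 0

lemma Jet2.unique {f : ℝ → ℝ} {a b a' b' : ℝ} (h : Jet2 f a b) (h' : Jet2 f a' b') :
    a = a' ∧ b = b' := by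
  obtain ⟨d, h1, h2, h3⟩ := h
  obtain ⟨d', h1', h2', h3'⟩ := h'
  have he : d =ᶠ[𝓝 0] d' := by
    filter_upwards [h1, h1'] with s hs hs' using hs.unique hs'
  exact ⟨by rw [← h2, ← h2', he.self_of_nhds], (h3.congr_of_eventuallyEq he.symm).unique h3'⟩

lemma Jet2.congr {f g : ℝ → ℝ} {a b : ℝ} (h : Jet2 f a b) (e : f =ᶠ[𝓝 0] g) : Jet2 g a b := by
  obtain ⟨d, h1, h2, h3⟩ := h
  refine ⟨d, ?_, h2, h3⟩
  filter_upwards [h1, e.eventuallyEq_nhds] with s hs hs' using hs.congr_of_eventuallyEq hs'.symm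

lemma Jet2.add {f g : ℝ → ℝ} {a b a' b' : ℝ} (h : Jet2 f a b) (h' : Jet2 g a' b') :
    Jet2 (fun s => f s + g s) (a + a') (b + b') := by
  obtain ⟨d, h1, h2, h3⟩ := h
  obtain ⟨d', h1', h2', h3'⟩ := h'
  refine ⟨fun s => d s + d' s, ?_, by simp [h2, h2'], h3.add h3'⟩
  filter_upwards [h1, h1'] with s hs hs' using hs.add hs'

lemma Jet2.const (c : ℝ) : Jet2 (fun _ => c) 0 0 :=
  ⟨fun _ => 0, Eventually.of_forall fun s => hasDerivAt_const s c, rfl, hasDerivAt_const 0 0⟩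

lemma Jet2.mul {f g : ℝ → ℝ} {a b a' b' : ℝ} (h : Jet2 f a b) (h' : Jet2 g a' b') :
    Jet2 (fun s => f s * g s) (a * g 0 + f 0 * a') (b * g 0 + 2 * (a * a') + f 0 * b') := by
  obtain ⟨d, h1, h2, h3⟩ := h
  obtain ⟨d', h1', h2', h3'⟩ := h'
  refine ⟨fun s => d s * g s + f s * d' s, ?_, by simp [h2, h2'], ?_⟩
  · filter_upwards [h1, h1'] with s hs hs' using hs.mul hs'
  · have e1 := h3.mul h1'.self_of_nhds
    have e2 := h1.self_of_nhds.mul h3'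
    have := e1.add e2
    rw [h2, h2'] at this
    exact this.congr_deriv (by ring)

lemma Jet2.comp {f F F' : ℝ → ℝ} {a b c : ℝ} (h : Jet2 f a b)
    (hF : ∀ᶠ s in 𝓝 (f 0), HasDerivAt F (F' s) s) (hF' : HasDerivAt F' c (f 0)) :
    Jet2 (fun s => F (f s)) (F' (f 0) * a) (c * a ^ 2 + F' (f 0) * b) := by
  obtain ⟨d, h1, h2, h3⟩ := h
  have h0 := h1.self_of_nhds
  refine ⟨fun s => F' (f s) * d s, ?_, by simp [h2], ?_⟩
  · filter_upwards [h1, h0.continuousAt.eventually hF] with s hs hs'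
    exact hs'.comp s hs
  · have := (hF'.comp (0:ℝ) h0).mul h3
    rw [h2] at this
    exact this.congr_deriv (by simp only [Function.comp]; ring)

noncomputable abbrev D2 {N : ℕ} (u : EE N → ℝ) (x : EE N) : EE N →L[ℝ] EE N →L[ℝ] ℝ :=
  fderiv ℝ (fderiv ℝ u) x

lemma laplacian_D2 {N : ℕ} (u : EE N → ℝ) (x : EE N) :
    laplacian u x = ∑ i, D2 u x (EuclideanSpace.single i 1) (EuclideanSpace.single i 1) := by
  unfold laplacian
  simp [iteratedFDeriv_two_apply]

lemma jet2_curve {N : ℕ} {u : EE N → ℝ} {γ γ1 : ℝ → EE N} {γ2 : EE N}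
    (hu : ContDiffAt ℝ 2 u (γ 0)) (h1 : ∀ᶠ s in 𝓝 (0:ℝ), HasDerivAt γ (γ1 s) s)
    (h2 : HasDerivAt γ1 γ2 0) :
    Jet2 (fun s => u (γ s)) (fderiv ℝ u (γ 0) (γ1 0))
      (D2 u (γ 0) (γ1 0) (γ1 0) + fderiv ℝ u (γ 0) γ2) := by
  have h0 := h1.self_of_nhds
  have hd : ∀ᶠ y in 𝓝 (γ 0), DifferentiableAt ℝ u y := by
    filter_upwards [hu.eventually (by simp)] with y hy
    exact hy.differentiableAt (by simp)
  have hd2 : DifferentiableAt ℝ (fderiv ℝ u) (γ 0) :=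
    (hu.fderiv_right (m := 1) (by norm_num)).differentiableAt (by simp)
  refine ⟨fun s => fderiv ℝ u (γ s) (γ1 s), ?_, rfl, ?_⟩
  · filter_upwards [h1, h0.continuousAt.eventually hd] with s hs hs'
    exact hs'.hasFDerivAt.comp_hasDerivAt s hs
  · exact (hd2.hasFDerivAt.comp_hasDerivAt (0:ℝ) h0).clm_apply h2

lemma jet2_line {N : ℕ} {u : EE N → ℝ} {x : EE N} (v : EE N) (hu : ContDiffAt ℝ 2 u x) :
    Jet2 (fun s => u (x + s • v)) (fderiv ℝ u x v) (D2 u x v v) := by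
  have h := jet2_curve (u := u) (γ := fun s => x + s • v) (γ1 := fun _ => v) (γ2 := 0)
    (by simpa using hu)
    (Eventually.of_forall fun s => by
      simpa using ((hasDerivAt_id s).smul_const v).const_add x)
    (hasDerivAt_const _ _)
  simpa using h

lemma lap_of_jet {N : ℕ} {u : EE N → ℝ} {x : EE N} {a b : Fin N → ℝ} (hu : ContDiffAt ℝ 2 u x)
    (h : ∀ i, Jet2 (fun s => u (x + s • EuclideanSpace.single i (1:ℝ))) (a i) (b i)) :
    laplacian u x = ∑ i, b i := by
  rw [laplacian_D2]
  exact Finset.sum_congr rfl fun i _ => ((jet2_line _ hu).unique (h i)).2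

lemma cd_at {N : ℕ} {u : EE N → ℝ} (hu : ContDiffOn ℝ 2 u {0}ᶜ) {x : EE N} (hx : x ≠ 0) :
    ContDiffAt ℝ 2 u x := hu.contDiffAt (isOpen_compl_singleton.mem_nhds hx)

/-! ### Differentiation of averages -/

lemma param_deriv {N : ℕ} {f f' : OG N → ℝ → ℝ} {I : Set ℝ} (hI : IsOpen I) {s0 : ℝ}
    (hs0 : s0 ∈ I) (hf : ∀ s ∈ I, Continuous (fun k => f k s))
    (hder : ∀ k, ∀ s ∈ I, HasDerivAt (f k) (f' k s) s)
    (hf' : ContinuousOn (fun q : OG N × ℝ => f' q.1 q.2) (univ ×ˢ I)) :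
    HasDerivAt (fun s => ∫ k, f k s ∂(hμ N)) (∫ k, f' k s0 ∂(hμ N)) s0 := by
  obtain ⟨δ, hδ, hδI⟩ := Metric.nhds_basis_closedBall.mem_iff.mp (hI.mem_nhds hs0)
  have hK : IsCompact ((univ : Set (OG N)) ×ˢ closedBall s0 δ) :=
    isCompact_univ.prod (isCompact_closedBall s0 δ)
  obtain ⟨C, hC⟩ := hK.exists_bound_of_continuousOn
    (hf'.mono (prod_mono subset_rfl hδI))
  have hc : Continuous (fun k => f' k s0) := by
    rw [← continuousOn_univ]
    exact hf'.comp (f := fun k : OG N => (k, s0)) (by fun_prop) (fun k _ => ⟨mem_univ _, hs0⟩)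
  refine (hasDerivAt_integral_of_dominated_loc_of_deriv_le (bound := fun _ => C)
    (F := fun s k => f k s) (F' := fun s k => f' k s)
    (closedBall_mem_nhds s0 hδ) ?_ (cont_int (hf s0 hs0)) hc.aestronglyMeasurable ?_
    (integrable_const C) ?_).2
  · filter_upwards [hI.mem_nhds hs0] with s hs using (hf s hs).aestronglyMeasurable
  · exact Eventually.of_forall fun k s hs => hC (k, s) ⟨mem_univ _, hs⟩
  · exact Eventually.of_forall fun k s hs => hder k s (hδI hs)

section
variable {N : ℕ} {g : EE N → ℝ}

noncomputable def av1 (g : EE N → ℝ) (v x : EE N) : ℝ :=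
  ∫ R : OG N, fderiv ℝ g ((R : EE N →L[ℝ] EE N) x) ((R : EE N →L[ℝ] EE N) v) ∂(hμ N)
noncomputable def av2 (g : EE N → ℝ) (v x : EE N) : ℝ :=
  ∫ R : OG N, D2 g ((R : EE N →L[ℝ] EE N) x) ((R : EE N →L[ℝ] EE N) v)
    ((R : EE N →L[ℝ] EE N) v) ∂(hμ N)

lemma line_open (x v : EE N) : IsOpen {s : ℝ | x + s • v ≠ 0} :=
  isOpen_compl_singleton.preimage (f := fun s : ℝ => x + s • v) (by fun_prop)

lemma line_maps (x v : EE N) : MapsTo (fun q : OG N × ℝ => (q.1 : EE N →L[ℝ] EE N) (x + q.2 • v))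
    (univ ×ˢ {s : ℝ | x + s • v ≠ 0}) {0}ᶜ := fun q hq => OG_ne q.1 hq.2

lemma cont_fderiv (hg : ContDiffOn ℝ 2 g {0}ᶜ) : ContinuousOn (fderiv ℝ g) {0}ᶜ :=
  hg.continuousOn_fderiv_of_isOpen isOpen_compl_singleton (by norm_num)

lemma cont_D2 (hg : ContDiffOn ℝ 2 g {0}ᶜ) : ContinuousOn (D2 g) {0}ᶜ :=
  (hg.fderiv_of_isOpen (m := 1) isOpen_compl_singleton (by norm_num)).continuousOn_fderiv_of_isOpen
    isOpen_compl_singleton (by norm_num)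

lemma line_der (x v : EE N) (R : OG N) (s : ℝ) :
    HasDerivAt (fun s : ℝ => (R : EE N →L[ℝ] EE N) (x + s • v)) ((R : EE N →L[ℝ] EE N) v) s := by
  have := (R : EE N →L[ℝ] EE N).hasFDerivAt.comp_hasDerivAt s
    (((hasDerivAt_id s).smul_const v).const_add x)
  rw [one_smul] at this
  exact this

lemma curve_der2 {γ : ℝ → EE N} {γ' : EE N} {s : ℝ} (h : HasDerivAt γ γ' s)
    (hd : DifferentiableAt ℝ (fderiv ℝ g) (γ s)) (w : EE N) :
    HasDerivAt (fun s => fderiv ℝ g (γ s) w) (D2 g (γ s) γ' w) s := by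
  have h1 : HasDerivAt (fun s => fderiv ℝ g (γ s)) (D2 g (γ s) γ') s :=
    hd.hasFDerivAt.comp_hasDerivAt s h
  have := h1.clm_apply (hasDerivAt_const s w)
  simpa using this

lemma av_deriv1 (hg : ContDiffOn ℝ 2 g {0}ᶜ) (x v : EE N) {s : ℝ} (hs : x + s • v ≠ 0) :
    HasDerivAt (fun s : ℝ => av g (x + s • v)) (av1 g v (x + s • v)) s := by
  refine param_deriv (line_open x v) hs (fun s hs => av_cont hg.continuousOn hs) ?_ ?_
    (f := fun (R : OG N) s => g ((R : EE N →L[ℝ] EE N) (x + s • v)))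
    (f' := fun (R : OG N) s => fderiv ℝ g ((R : EE N →L[ℝ] EE N) (x + s • v)) ((R : EE N →L[ℝ] EE N) v))
  · intro R s hs
    exact ((cd_at hg (OG_ne R hs)).differentiableAt (by simp)).hasFDerivAt.comp_hasDerivAt s
      (line_der x v R s)
  · refine ContinuousOn.clm_apply ((cont_fderiv hg).comp (by fun_prop) (line_maps x v)) ?_
    fun_prop

lemma av_deriv2 (hg : ContDiffOn ℝ 2 g {0}ᶜ) (x v : EE N) {s : ℝ} (hs : x + s • v ≠ 0) :
    HasDerivAt (fun s : ℝ => av1 g v (x + s • v)) (av2 g v (x + s • v)) s := by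
  have hc2 : ContinuousOn (fun q : OG N × ℝ => fderiv ℝ g ((q.1 : EE N →L[ℝ] EE N) (x + q.2 • v))
      ((q.1 : EE N →L[ℝ] EE N) v)) (univ ×ˢ {s : ℝ | x + s • v ≠ 0}) := by
    refine ContinuousOn.clm_apply ((cont_fderiv hg).comp (by fun_prop) (line_maps x v)) ?_
    fun_prop
  refine param_deriv (line_open x v) hs ?_ ?_ ?_
    (f := fun (R : OG N) s => fderiv ℝ g ((R : EE N →L[ℝ] EE N) (x + s • v)) ((R : EE N →L[ℝ] EE N) v))
    (f' := fun (R : OG N) s => D2 g ((R : EE N →L[ℝ] EE N) (x + s • v)) ((R : EE N →L[ℝ] EE N) v)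
      ((R : EE N →L[ℝ] EE N) v))
  · intro s hs
    rw [← continuousOn_univ]
    exact hc2.comp (f := fun R : OG N => (R, s)) (by fun_prop) (fun k _ => ⟨mem_univ _, hs⟩)
  · intro R s hs
    have hd : DifferentiableAt ℝ (fderiv ℝ g) ((R : EE N →L[ℝ] EE N) (x + s • v)) :=
      ((cd_at hg (OG_ne R hs)).fderiv_right (m := 1) (by norm_num)).differentiableAt (by simp)
    exact curve_der2 (line_der x v R s) hd _
  · refine ContinuousOn.clm_apply (ContinuousOn.clm_apply
      ((cont_D2 hg).comp (by fun_prop) (line_maps x v)) ?_) ?_ <;> fun_prop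

end

open Metric Set MeasureTheory Filter
open scoped Topology

section
variable {N : ℕ} {g : EE N → ℝ}

noncomputable abbrev eb (i : Fin N) : EE N := EuclideanSpace.single i (1:ℝ)

lemma lap_rot (g : EE N → ℝ) (R : OG N) (x : EE N) :
    ∑ i, D2 g x ((R : EE N →L[ℝ] EE N) (eb i)) ((R : EE N →L[ℝ] EE N) (eb i))
      = laplacian g x := by
  have h1 := InnerProductSpace.laplacian_eq_iteratedFDeriv_orthonormalBasis g
    ((EuclideanSpace.basisFun (Fin N) ℝ).map (Unitary.linearIsometryEquiv R))
  have h2 := InnerProductSpace.laplacian_eq_iteratedFDeriv_orthonormalBasis g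
    (EuclideanSpace.basisFun (Fin N) ℝ)
  rw [h1] at h2
  have h3 := congrFun h2 x
  simp only [iteratedFDeriv_two_apply] at h3
  rw [laplacian_D2]
  simp only [OrthonormalBasis.map_apply, EuclideanSpace.basisFun_apply] at h3
  exact h3

lemma cont_lap (hg : ContDiffOn ℝ 2 g {0}ᶜ) : ContinuousOn (laplacian g) {0}ᶜ := by
  have : laplacian g = fun x => ∑ i, D2 g x (eb i) (eb i) := by
    ext x; exact laplacian_D2 g x
  rw [this]
  refine continuousOn_finsetSum _ fun i _ => ?_
  exact ((cont_D2 hg).clm_apply continuousOn_const).clm_apply continuousOn_const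

lemma av_lap (hg : ContDiffOn ℝ 2 g {0}ᶜ) {x : EE N} (hx : x ≠ 0) :
    av (laplacian g) x = ∑ i, av2 g (eb i) x := by
  unfold av av2
  rw [← integral_finsetSum]
  · congr 1; ext R; rw [lap_rot]
  · intro i _
    apply cont_int
    have hc : Continuous (fun R : OG N => D2 g ((R : EE N →L[ℝ] EE N) x)) := by
      rw [← continuousOn_univ]
      exact (cont_D2 hg).comp (OG_cont1 x).continuousOn (fun R _ => OG_ne R hx)
    exact (hc.clm_apply (OG_cont1 _)).clm_apply (OG_cont1 _)

lemma jet2_sqrt {r : ℝ} (hr : 0 < r) : Jet2 (fun s => Real.sqrt (r ^ 2 + s ^ 2)) 0 (1 / r) := by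
  have h1 : Jet2 (fun s => r ^ 2 + s ^ 2) 0 2 := by
    refine ⟨fun s => 2 * s, Eventually.of_forall fun s => ?_, by simp, ?_⟩
    · simpa using (hasDerivAt_pow 2 s).const_add (r ^ 2)
    · simpa using (hasDerivAt_id (0:ℝ)).const_mul 2
  have hr2 : 0 < r ^ 2 := by positivity
  have h2 := h1.comp (F := Real.sqrt) (F' := fun y => 1 / (2 * Real.sqrt y))
    (c := deriv (fun y => 1 / (2 * Real.sqrt y)) (r ^ 2)) (by
      have : r ^ 2 + (0:ℝ) ^ 2 ∈ Ioi (0:ℝ) := by simpa using hr2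
      filter_upwards [isOpen_Ioi.mem_nhds this] with s hs
      exact Real.hasDerivAt_sqrt hs.ne') (by
      simp only [ne_eq, OfNat.ofNat_ne_zero, not_false_eq_true, zero_pow, add_zero]
      apply DifferentiableAt.hasDerivAt
      have := Real.hasDerivAt_sqrt hr2.ne'
      have h3 : (2 * Real.sqrt (r ^ 2)) ≠ 0 := by rw [Real.sqrt_sq hr.le]; positivity
      exact (differentiableAt_const _).div (this.differentiableAt.const_mul 2) h3)
  convert h2 using 1
  · simp
  · simp [Real.sqrt_sq hr.le]

lemma eb_norm (i : Fin N) : ‖eb i‖ = 1 := by simp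

lemma smul_ne {i : Fin N} {r : ℝ} (hr : r ≠ 0) : r • eb i ≠ 0 := by
  rw [← norm_pos_iff, norm_smul, eb_norm]; simpa using hr

lemma av_ode (hg : ContDiffOn ℝ 2 g {0}ᶜ) (i0 : Fin N) {r : ℝ} (hr : 0 < r) :
    av2 g (eb i0) (r • eb i0) + ((N:ℝ) - 1) / r * av1 g (eb i0) (r • eb i0)
      = av (laplacian g) (r • eb i0) := by
  have hx : r • eb i0 ≠ 0 := smul_ne hr.ne'
  have ha1 : ∀ s : ℝ, s ≠ 0 → HasDerivAt (fun s : ℝ => av g (s • eb i0))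
      (av1 g (eb i0) (s • eb i0)) s := fun s hs => by
    simpa using av_deriv1 hg 0 (eb i0) (s := s) (by simpa using hs)
  have ha2 : ∀ s : ℝ, s ≠ 0 → HasDerivAt (fun s : ℝ => av1 g (eb i0) (s • eb i0))
      (av2 g (eb i0) (s • eb i0)) s := fun s hs => by
    simpa using av_deriv2 hg 0 (eb i0) (s := s) (by simpa using hs)
  rw [av_lap hg hx, ← Finset.add_sum_erase _ _ (Finset.mem_univ i0)]
  congr 1
  have key : ∀ i ∈ Finset.univ.erase i0, av2 g (eb i) (r • eb i0)
      = 1 / r * av1 g (eb i0) (r • eb i0) := by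
    intro i hi
    have hii : i ≠ i0 := Finset.ne_of_mem_erase hi
    have hinner : inner ℝ (r • eb i0) (eb i) = 0 := by
      simp [inner_smul_left, EuclideanSpace.inner_single_left, hii.symm]
    have hnorm : ∀ s : ℝ, ‖r • eb i0 + s • eb i‖ = Real.sqrt (r ^ 2 + s ^ 2) := by
      intro s
      rw [← Real.sqrt_sq (norm_nonneg (r • eb i0 + s • eb i)), norm_add_sq_real,
        inner_smul_right, hinner, norm_smul, norm_smul, eb_norm, eb_norm]
      simp
    have hpos : ∀ s : ℝ, 0 < Real.sqrt (r ^ 2 + s ^ 2) := fun s => by positivity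
    have J1 : Jet2 (fun s => av g (r • eb i0 + s • eb i)) (av1 g (eb i) (r • eb i0))
        (av2 g (eb i) (r • eb i0)) := by
      refine ⟨fun s => av1 g (eb i) (r • eb i0 + s • eb i), Eventually.of_forall fun s => ?_,
        by simp, ?_⟩
      · exact av_deriv1 hg _ _ (by rw [← norm_pos_iff, hnorm]; exact hpos s)
      · simpa using av_deriv2 hg (r • eb i0) (eb i) (s := 0) (by simpa using hx)
    have J2 := (jet2_sqrt hr).comp (F := fun s : ℝ => av g (s • eb i0))
      (F' := fun s : ℝ => av1 g (eb i0) (s • eb i0)) (c := av2 g (eb i0) (r • eb i0)) (by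
        filter_upwards [isOpen_Ioi.mem_nhds (hpos 0)] with s hs
        exact ha1 s (ne_of_gt hs)) (by
        simp only [ne_eq, OfNat.ofNat_ne_zero, not_false_eq_true, zero_pow, add_zero,
          Real.sqrt_sq hr.le]
        exact ha2 r hr.ne')
    have e : (fun s => av g (r • eb i0 + s • eb i))
        = fun s => av g (Real.sqrt (r ^ 2 + s ^ 2) • eb i0) := by
      ext s
      apply av_radial
      rw [hnorm, norm_smul, eb_norm, mul_one, Real.norm_of_nonneg (hpos s).le]
    rw [e] at J1
    have := (J1.unique J2).2
    rw [this]
    simp [Real.sqrt_sq hr.le]; ring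
  rw [Finset.sum_congr rfl key, Finset.sum_const, Finset.card_erase_of_mem (Finset.mem_univ _)]
  have hN : 1 ≤ N := by have := i0.2; omega
  simp [Nat.cast_sub hN]
  ring

noncomputable def tau (x : EE N) : ℝ := ‖x‖ ^ (-((N:ℝ) - 2))

lemma tau_pos {x : EE N} (hx : x ≠ 0) : 0 < tau x := Real.rpow_pos_of_pos (norm_pos_iff.mpr hx) _

noncomputable def rad (N : ℕ) (t : ℝ) : ℝ := t ^ (-(1 / ((N:ℝ) - 2)))

lemma rad_pos {t : ℝ} (ht : 0 < t) : 0 < rad N t := Real.rpow_pos_of_pos ht _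

lemma nn_pos (hN : 3 ≤ N) : 0 < (N:ℝ) - 2 := by
  have : (3:ℝ) ≤ N := by exact_mod_cast hN
  linarith

lemma rad_tau (hN : 3 ≤ N) {x : EE N} (hx : x ≠ 0) : rad N (tau x) = ‖x‖ := by
  have := nn_pos hN
  unfold rad tau
  rw [← Real.rpow_mul (norm_nonneg _)]
  have : -((N:ℝ) - 2) * -(1 / ((N:ℝ) - 2)) = 1 := by field_simp
  rw [this, Real.rpow_one]

lemma tau_rad (hN : 3 ≤ N) {t : ℝ} (ht : 0 < t) {x : EE N} (hx : ‖x‖ = rad N t) : tau x = t := by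
  have := nn_pos hN
  unfold tau
  rw [hx, rad, ← Real.rpow_mul ht.le]
  have : -(1 / ((N:ℝ) - 2)) * -((N:ℝ) - 2) = 1 := by field_simp
  rw [this, Real.rpow_one]

lemma exists_tau (hN : 3 ≤ N) {t : ℝ} (ht : 0 < t) : ∃ x : EE N, x ≠ 0 ∧ tau x = t := by
  refine ⟨rad N t • eb ⟨0, by omega⟩, smul_ne (rad_pos ht).ne', tau_rad hN ht ?_⟩
  rw [norm_smul, eb_norm, mul_one, Real.norm_of_nonneg (rad_pos ht).le]

lemma rad_deriv (hN : 3 ≤ N) {t : ℝ} (ht : 0 < t) :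
    HasDerivAt (rad N) (-(1 / ((N:ℝ) - 2)) * rad N t ^ ((N:ℝ) - 1)) t := by
  have h := Real.hasDerivAt_rpow_const (x := t) (p := -(1 / ((N:ℝ) - 2))) (Or.inl ht.ne')
  refine h.congr_deriv ?_
  unfold rad
  rw [← Real.rpow_mul ht.le]
  congr 2
  have := nn_pos hN
  field_simp
  ring

lemma av_W (hN : 3 ≤ N) (hg : ContDiffOn ℝ 2 g {0}ᶜ) :
    ∃ w w1 : ℝ → ℝ, (∀ x : EE N, x ≠ 0 → av g x = w (tau x)) ∧
      (∀ t, 0 < t → HasDerivAt w (w1 t) t) ∧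
      (∀ x : EE N, x ≠ 0 → HasDerivAt w1
        (‖x‖ ^ (2 * ((N:ℝ) - 1)) / ((N:ℝ) - 2) ^ 2 * av (laplacian g) x) (tau x)) := by
  set i0 : Fin N := ⟨0, by omega⟩
  have hn := nn_pos hN
  have ha1 : ∀ s : ℝ, s ≠ 0 → HasDerivAt (fun s : ℝ => av g (s • eb i0))
      (av1 g (eb i0) (s • eb i0)) s := fun s hs => by
    simpa using av_deriv1 hg 0 (eb i0) (s := s) (by simpa using hs)
  have ha2 : ∀ s : ℝ, s ≠ 0 → HasDerivAt (fun s : ℝ => av1 g (eb i0) (s • eb i0))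
      (av2 g (eb i0) (s • eb i0)) s := fun s hs => by
    simpa using av_deriv2 hg 0 (eb i0) (s := s) (by simpa using hs)
  refine ⟨fun t => av g (rad N t • eb i0),
    fun t => av1 g (eb i0) (rad N t • eb i0) * (-(1 / ((N:ℝ) - 2)) * rad N t ^ ((N:ℝ) - 1)),
    ?_, ?_, ?_⟩
  · intro x hx
    apply av_radial
    rw [rad_tau hN hx, norm_smul, eb_norm]; simp
  · intro t ht
    exact (ha1 _ (rad_pos ht).ne').comp t (rad_deriv hN ht)
  · intro x hx
    have ht := tau_pos hx
    have hr := rad_pos (N := N) ht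
    have h1 := (ha2 _ hr.ne').comp _ (rad_deriv hN ht)
    have h2 := ((Real.hasDerivAt_rpow_const (x := rad N (tau x)) (p := (N:ℝ) - 1)
      (Or.inl hr.ne')).comp _ (rad_deriv hN ht)).const_mul (-(1 / ((N:ℝ) - 2)))
    have h3 := h1.mul h2
    refine h3.congr_deriv ?_
    have hax : av (laplacian g) x = av (laplacian g) (rad N (tau x) • eb i0) := by
      apply av_radial
      rw [norm_smul, eb_norm, rad_tau hN hx]; simp
    rw [hax, ← av_ode hg i0 hr, ← rad_tau hN hx]
    simp only [rad_tau hN hx, Function.comp]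
    have hx0 := norm_pos_iff.mpr hx
    have e1 : ‖x‖ ^ (2 * ((N:ℝ) - 1)) = ‖x‖ ^ ((N:ℝ) - 1) * ‖x‖ ^ ((N:ℝ) - 1) := by
      rw [← Real.rpow_add hx0]; congr 1; ring
    have e2 : ‖x‖ ^ ((N:ℝ) - 1 - 1) = ‖x‖ ^ ((N:ℝ) - 1) / ‖x‖ := by
      rw [Real.rpow_sub hx0, Real.rpow_one]
    rw [e1, e2]
    field_simp
    try ring

end

open Metric Set MeasureTheory Filter
open scoped Topology

section
variable {N : ℕ} {g : EE N → ℝ}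

/-! ### One-dimensional concavity facts -/

lemma conc_mono {w : ℝ → ℝ} (hw : ConcaveOn ℝ (Ioi 0) w) (h0 : ∀ t, 0 < t → 0 ≤ w t)
    {s t : ℝ} (hs : 0 < s) (hst : s ≤ t) : w s ≤ w t := by
  rcases hst.eq_or_lt with rfl | hst
  · exact le_rfl
  by_contra! hlt
  have ht : 0 < t := hs.trans hst
  set k := (w t - w s) / (t - s) with hk
  have hk0 : k < 0 := div_neg_of_neg_of_pos (by linarith) (by linarith)
  set T := t + (w t / (-k) + 1) with hT
  have h1 : 0 ≤ w t / (-k) := div_nonneg (h0 t ht) (by linarith)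
  have hT0 : t < T := by linarith
  have h2 := hw.slope_anti_adjacent (x := s) (y := t) (z := T) hs (ht.trans hT0) hst hT0
  rw [← hk, div_le_iff₀ (by linarith)] at h2
  have h3 : k * (T - t) = - w t + k := by
    have hkne : k ≠ 0 := hk0.ne
    rw [hT]; clear_value k; field_simp; ring
  have h4 := h0 T (ht.trans hT0)
  linarith

lemma conc_div {w : ℝ → ℝ} (hw : ConcaveOn ℝ (Ioi 0) w) (h0 : ∀ t, 0 < t → 0 ≤ w t)
    {s t : ℝ} (hs : 0 < s) (hst : s ≤ t) : w t * s ≤ w s * t := by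
  rcases hst.eq_or_lt with rfl | hst
  · exact le_rfl
  have ht : 0 < t := hs.trans hst
  have key : ∀ᶠ δ in 𝓝[>] (0:ℝ), (w t - w s) * (s - δ) ≤ w s * (t - s) := by
    filter_upwards [Ioo_mem_nhdsGT hs] with δ hδ
    have h2 := hw.slope_anti_adjacent (x := δ) (y := s) (z := t) hδ.1 ht hδ.2 hst
    have hd := h0 δ hδ.1
    have hsd : 0 < s - δ := by linarith [hδ.2]
    rw [div_le_div_iff₀ (by linarith) hsd] at h2
    nlinarith
  have lim : Tendsto (fun δ => (w t - w s) * (s - δ)) (𝓝[>] (0:ℝ)) (𝓝 ((w t - w s) * (s - 0))) := by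
    apply Tendsto.mono_left _ nhdsWithin_le_nhds
    apply Continuous.tendsto
    fun_prop
  have := le_of_tendsto lim key
  nlinarith

lemma tau_surj_der (hN : 3 ≤ N) {w1 : ℝ → ℝ} {c : EE N → ℝ}
    (h : ∀ x : EE N, x ≠ 0 → HasDerivAt w1 (c x) (tau x)) {t : ℝ} (ht : 0 < t) :
    ∃ x : EE N, x ≠ 0 ∧ tau x = t ∧ HasDerivAt w1 (c x) t := by
  obtain ⟨x, hx, rfl⟩ := exists_tau hN ht
  exact ⟨x, hx, rfl, h x hx⟩

lemma av_nonpos {f : EE N → ℝ} {x : EE N} (hx : x ≠ 0) (h : ∀ x, x ≠ 0 → f x ≤ 0) :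
    av f x ≤ 0 := integral_nonpos fun R => h _ (OG_ne R hx)

lemma av_nonneg {f : EE N → ℝ} {x : EE N} (hx : x ≠ 0) (h : ∀ x, x ≠ 0 → 0 ≤ f x) :
    0 ≤ av f x := integral_nonneg fun R => h _ (OG_ne R hx)

lemma coef_nonneg (x : EE N) : 0 ≤ ‖x‖ ^ (2 * ((N:ℝ) - 1)) / ((N:ℝ) - 2) ^ 2 := by positivity

lemma av_concave (hN : 3 ≤ N) (hg : ContDiffOn ℝ 2 g {0}ᶜ)
    (hl : ∀ x, x ≠ 0 → laplacian g x ≤ 0) :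
    ∃ w : ℝ → ℝ, ConcaveOn ℝ (Ioi 0) w ∧ ∀ x : EE N, x ≠ 0 → av g x = w (tau x) := by
  obtain ⟨w, w1, h1, h2, h3⟩ := av_W hN hg
  refine ⟨w, ?_, h1⟩
  refine concaveOn_of_hasDerivWithinAt2_nonpos (f' := w1) (f'' := deriv w1) (convex_Ioi 0)
    (fun t ht => (h2 t ht).continuousAt.continuousWithinAt) ?_ ?_ ?_
  · rw [interior_Ioi]; exact fun t ht => (h2 t ht).hasDerivWithinAt
  · rw [interior_Ioi]; intro t ht
    obtain ⟨x, hx, hxt, hd⟩ := tau_surj_der hN h3 ht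
    rw [hd.deriv]; exact hd.hasDerivWithinAt
  · rw [interior_Ioi]; intro t ht
    obtain ⟨x, hx, hxt, hd⟩ := tau_surj_der hN h3 ht
    rw [hd.deriv]
    exact mul_nonpos_of_nonneg_of_nonpos (coef_nonneg x) (av_nonpos hx hl)

lemma av_convex (hN : 3 ≤ N) (hg : ContDiffOn ℝ 2 g {0}ᶜ)
    (hl : ∀ x, x ≠ 0 → 0 ≤ laplacian g x) :
    ∃ w : ℝ → ℝ, ConvexOn ℝ (Ioi 0) w ∧ ∀ x : EE N, x ≠ 0 → av g x = w (tau x) := by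
  obtain ⟨w, w1, h1, h2, h3⟩ := av_W hN hg
  refine ⟨w, ?_, h1⟩
  refine convexOn_of_hasDerivWithinAt2_nonneg (f' := w1) (f'' := deriv w1) (convex_Ioi 0)
    (fun t ht => (h2 t ht).continuousAt.continuousWithinAt) ?_ ?_ ?_
  · rw [interior_Ioi]; exact fun t ht => (h2 t ht).hasDerivWithinAt
  · rw [interior_Ioi]; intro t ht
    obtain ⟨x, hx, hxt, hd⟩ := tau_surj_der hN h3 ht
    rw [hd.deriv]; exact hd.hasDerivWithinAt
  · rw [interior_Ioi]; intro t ht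
    obtain ⟨x, hx, hxt, hd⟩ := tau_surj_der hN h3 ht
    rw [hd.deriv]
    exact mul_nonneg (coef_nonneg x) (av_nonneg hx hl)

/-! ### Necessity -/

/-- Tangent inequality for `s ↦ s^{-p}`. -/
lemma rpow_tangent {p s q : ℝ} (hp : 0 < p) (hs : 0 < s) (hq : 0 < q) :
    q ^ (-p) * (1 - p * (s / q - 1)) ≤ s ^ (-p) := by
  have h1 : s ^ (-p) = q ^ (-p) * (s / q) ^ (-p) := by
    rw [← Real.mul_rpow hq.le (by positivity)]; congr 1; field_simp
  rw [h1]
  apply mul_le_mul_of_nonneg_left _ (by positivity)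
  have hsq : 0 < s / q := by positivity
  rw [Real.rpow_def_of_pos hsq]
  have h2 := Real.add_one_le_exp (Real.log (s / q) * -p)
  have h3 := Real.log_le_sub_one_of_pos hsq
  nlinarith

lemma av_jensen {u : EE N → ℝ} {p : ℝ} (hp : 0 < p) (hu : ContinuousOn u {0}ᶜ)
    (hpos : ∀ x, x ≠ 0 → 0 < u x) {x : EE N} (hx : x ≠ 0) (hq : 0 < av u x) :
    av u x ^ (-p) ≤ av (fun y => u y ^ (-p)) x := by
  have hc : ContinuousOn (fun y => u y ^ (-p)) {0}ᶜ :=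
    hu.rpow_const fun y hy => Or.inl (hpos y hy).ne'
  have hc2 : ContinuousOn (fun y => av u x ^ (-p) * (1 + p)
      + (-(av u x ^ (-p) * p / av u x)) * u y) {0}ᶜ := by fun_prop
  have h := av_mono hc2 hc hx (fun y hy => by
    have hy0 : y ≠ 0 := by rw [← norm_pos_iff, hy]; exact norm_pos_iff.mpr hx
    have := rpow_tangent hp (hpos y hy0) hq
    refine le_trans (le_of_eq ?_) this
    field_simp; ring)
  rw [av_add (by fun_prop) (by fun_prop) hx, av_const, av_mul_const] at h
  refine le_trans (le_of_eq ?_) h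
  field_simp; ring

/-- no positive `w` with second derivative at most `-c/t` near infinity -/
lemma no_end_infty {w1 : ℝ → ℝ} {c : ℝ} (hc : 0 < c)
    (h1 : ∀ t, 0 < t → 0 ≤ w1 t)
    (h2 : ∀ t, 1 < t → ∃ d, HasDerivAt w1 d t ∧ d ≤ -c / t) : False := by
  have anti : AntitoneOn (fun t => w1 t + c * Real.log t) (Ioi 1) := by
    apply antitoneOn_of_deriv_nonpos (convex_Ioi 1)
    · intro t ht
      obtain ⟨d, hd, _⟩ := h2 t ht
      have : (0:ℝ) < t := lt_trans one_pos ht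
      exact (hd.add ((Real.hasDerivAt_log this.ne').const_mul c)).continuousAt.continuousWithinAt
    · rw [interior_Ioi]
      intro t ht
      obtain ⟨d, hd, _⟩ := h2 t ht
      have : (0:ℝ) < t := lt_trans one_pos ht
      exact (hd.add ((Real.hasDerivAt_log this.ne').const_mul c)).differentiableAt.differentiableWithinAt
    · rw [interior_Ioi]
      intro t ht
      obtain ⟨d, hd, hle⟩ := h2 t ht
      have : (0:ℝ) < t := lt_trans one_pos ht
      have e := (hd.add ((Real.hasDerivAt_log this.ne').const_mul c)).deriv
      have e2 : deriv (fun t => w1 t + c * Real.log t) t = d + c * t⁻¹ := e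
      rw [e2]
      have : -c / t = - (c * t⁻¹) := by ring
      linarith
  have ht := Real.tendsto_log_atTop.const_mul_atTop hc
  obtain ⟨T, hT⟩ := ((ht.eventually_gt_atTop (w1 2 + c * Real.log 2)).and
    (eventually_ge_atTop 2)).exists
  have := anti (a := 2) (b := T) (by norm_num) (show (1:ℝ) < T by linarith [hT.2]) hT.2
  simp only at this
  have := h1 T (by linarith [hT.2])
  linarith [hT.1]

lemma no_end_zero {w w1 : ℝ → ℝ} {c : ℝ} (hc : 0 < c)
    (h0 : ∀ t, 0 < t → 0 < w t) (h1 : ∀ t, 0 < t → HasDerivAt w (w1 t) t)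
    (h2 : ∀ t, 0 < t → t < 1 → ∃ d, HasDerivAt w1 d t ∧ d ≤ -c / t ^ 2) : False := by
  have hz : ∀ t, 0 < t → HasDerivAt (fun t => w t - c * Real.log t) (w1 t - c * t⁻¹) t :=
    fun t ht => (h1 t ht).sub ((Real.hasDerivAt_log ht.ne').const_mul c)
  have hz1 : ∀ t, 0 < t → t < 1 → ∃ d, HasDerivAt (fun t => w1 t - c * t⁻¹) d t ∧ d ≤ 0 := by
    intro t ht ht1
    obtain ⟨d, hd, hle⟩ := h2 t ht ht1
    refine ⟨_, hd.sub ((hasDerivAt_inv ht.ne').const_mul c), ?_⟩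
    have : -c / t ^ 2 = c * -(t ^ 2)⁻¹ := by ring
    linarith
  have conc : ConcaveOn ℝ (Ioo 0 1) (fun t => w t - c * Real.log t) := by
    refine concaveOn_of_hasDerivWithinAt2_nonpos (f' := fun t => w1 t - c * t⁻¹)
      (f'' := deriv (fun t => w1 t - c * t⁻¹)) (convex_Ioo 0 1)
      (fun t ht => (hz t ht.1).continuousAt.continuousWithinAt) ?_ ?_ ?_
    · rw [interior_Ioo]; exact fun t ht => (hz t ht.1).hasDerivWithinAt
    · rw [interior_Ioo]; intro t ht
      obtain ⟨d, hd, _⟩ := hz1 t ht.1 ht.2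
      rw [hd.deriv]; exact hd.hasDerivWithinAt
    · rw [interior_Ioo]; intro t ht
      obtain ⟨d, hd, h⟩ := hz1 t ht.1 ht.2
      rw [hd.deriv]; exact h
  set z := fun t => w t - c * Real.log t with hzdef
  -- points 1/3 < 2/3 and t small
  have hlow : ∀ t, 0 < t → t < 1/3 → z t ≤ z (1/3) + |z (2/3) - z (1/3)| := by
    intro t ht ht3
    have h := conc.slope_anti_adjacent (x := t) (y := 1/3) (z := 2/3) ⟨ht, by linarith⟩
      ⟨by norm_num, by norm_num⟩ ht3 (by norm_num)
    rw [div_le_div_iff₀ (by norm_num) (by linarith)] at h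
    have h3 := neg_abs_le (z (2/3) - z (1/3))
    have h4 := abs_nonneg (z (2/3) - z (1/3))
    nlinarith
  have ht : Tendsto (fun t => - Real.log t * c) (𝓝[>] 0) atTop :=
    (tendsto_neg_atBot_atTop.comp Real.tendsto_log_nhdsGT_zero).atTop_mul_const hc
  obtain ⟨t, hT1, hT2⟩ := ((ht.eventually_gt_atTop (z (1/3) + |z (2/3) - z (1/3)|)).and
    (Ioo_mem_nhdsGT (show (0:ℝ) < 1/3 by norm_num))).exists
  have h5 := hlow t hT2.1 hT2.2
  have h6 := h0 t hT2.1
  have : z t = w t - c * Real.log t := rfl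
  linarith
end

open Metric Set MeasureTheory Filter
open scoped Topology

section
variable {N : ℕ}

lemma av_pos {g : EE N → ℝ} (hg : ContinuousOn g {0}ᶜ) {x : EE N} (hx : x ≠ 0)
    (h0 : ∀ y, y ≠ 0 → 0 < g y) : 0 < av g x := by
  have h1 := av_nonneg hx (fun y hy => (h0 y hy).le)
  rcases h1.eq_or_lt with h | h
  · exact absurd (av_zero hg hx (fun y hy => (h0 y hy).le) h.symm) (h0 x hx).ne'
  · exact h

lemma phi_pos {α β r : ℝ} (hr : 0 < r) : 0 < r ^ α * Real.log (1 + r) ^ β := by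
  have : 0 < Real.log (1 + r) := Real.log_pos (by linarith)
  positivity

lemma sol_lap {φ : ℝ → ℝ} {p : ℝ} {u : EE N → ℝ} (hu : IsSol φ p u) {x : EE N} (hx : x ≠ 0) :
    laplacian u x = - (φ ‖x‖ * u x ^ (-p)) := by
  have := (hu.2 x hx).2; linarith

lemma sol_lap_nonpos {φ : ℝ → ℝ} (hφ : ∀ r, 0 < r → 0 < φ r) {p : ℝ} {u : EE N → ℝ}
    (hu : IsSol φ p u) (x : EE N) (hx : x ≠ 0) : laplacian u x ≤ 0 := by
  rw [sol_lap hu hx]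
  have h1 := hφ _ (norm_pos_iff.mpr hx)
  have h2 := Real.rpow_pos_of_pos (hu.2 x hx).1 (-p)
  have := mul_pos h1 h2
  linarith

lemma sol_main (hN : 3 ≤ N) {φ : ℝ → ℝ} (hφ : ∀ r, 0 < r → 0 < φ r) {p : ℝ} (hp : 0 < p)
    {u : EE N → ℝ} (hu : IsSol φ p u) :
    ∃ w w1 : ℝ → ℝ, (∀ t, 0 < t → 0 < w t) ∧ ConcaveOn ℝ (Ioi 0) w ∧
      (∀ t, 0 < t → HasDerivAt w (w1 t) t) ∧ (∀ t, 0 < t → 0 ≤ w1 t) ∧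
      ∀ t, 0 < t → ∃ d, HasDerivAt w1 d t ∧ d ≤
        - (rad N t ^ (2 * ((N:ℝ) - 1)) / ((N:ℝ) - 2) ^ 2 * (φ (rad N t) * w t ^ (-p))) := by
  obtain ⟨w, w1, h1, h2, h3⟩ := av_W hN hu.1
  obtain ⟨w', hc', h1'⟩ := av_concave hN hu.1 (sol_lap_nonpos hφ hu)
  have hww : ∀ t, 0 < t → w' t = w t := by
    intro t ht
    obtain ⟨x, hx, rfl⟩ := exists_tau hN ht
    rw [← h1 x hx, ← h1' x hx]
  have hc : ConcaveOn ℝ (Ioi 0) w := hc'.congr (fun t ht => hww t ht)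
  have hpos : ∀ t, 0 < t → 0 < w t := by
    intro t ht
    obtain ⟨x, hx, rfl⟩ := exists_tau hN ht
    rw [← h1 x hx]
    exact av_pos hu.1.continuousOn hx (fun y hy => (hu.2 y hy).1)
  have hmono : MonotoneOn w (Ioi 0) := fun s hs t _ hst =>
    conc_mono hc (fun t ht => (hpos t ht).le) hs hst
  refine ⟨w, w1, hpos, hc, h2, ?_, ?_⟩
  · intro t ht
    have := hmono.derivWithin_nonneg (x := t)
    rwa [(h2 t ht).hasDerivWithinAt.derivWithin (isOpen_Ioi.uniqueDiffWithinAt ht)] at this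
  · intro t ht
    obtain ⟨x, hx, rfl⟩ := exists_tau hN ht
    refine ⟨_, h3 x hx, ?_⟩
    rw [rad_tau hN hx, ← mul_neg]
    apply mul_le_mul_of_nonneg_left _ (coef_nonneg x)
    have e : av (laplacian u) x = (- φ ‖x‖) * av (fun y => u y ^ (-p)) x := by
      rw [← av_mul_const]
      apply av_congr
      intro y hy
      have hy0 : y ≠ 0 := by rw [← norm_pos_iff, hy]; exact norm_pos_iff.mpr hx
      rw [sol_lap hu hy0, hy]; ring
    have hj := av_jensen hp hu.1.continuousOn (fun y hy => (hu.2 y hy).1) hx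
      (by rw [h1 x hx]; exact hpos _ ht)
    rw [h1 x hx] at hj
    rw [e, neg_mul, neg_le_neg_iff]
    exact mul_le_mul_of_nonneg_left hj (hφ _ (norm_pos_iff.mpr hx)).le

lemma rad_rpow (hN : 3 ≤ N) {t : ℝ} (ht : 0 < t) (a : ℝ) :
    rad N t ^ (((N:ℝ) - 2) * a) = t ^ (-a) := by
  unfold rad
  have := nn_pos hN
  rw [← Real.rpow_mul ht.le]
  congr 1; field_simp

lemma necessity (hN : 3 ≤ N) {α β p : ℝ} (hβ : 0 < β) (hp : 0 < p) {u : EE N → ℝ}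
    (hu : IsSol (fun r => r ^ α * Real.log (1 + r) ^ β) p u) :
    0 < (N:ℝ) + α + β + p * ((N:ℝ) - 2) ∧ α < -2 := by
  obtain ⟨w, w1, hpos, hc, hd1, hw1, hd2⟩ := sol_main hN (fun r hr => phi_pos hr) hp hu
  have hn := nn_pos hN
  have hw0 := hpos 1 one_pos
  constructor
  · by_contra! hκ
    refine no_end_infty (w1 := w1) (c := (1/2) ^ β * w 1 ^ (-p) / ((N:ℝ) - 2) ^ 2)
      (by positivity) hw1 ?_
    intro t ht1
    have ht : 0 < t := by linarith
    obtain ⟨d, hd, hle⟩ := hd2 t ht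
    refine ⟨d, hd, hle.trans ?_⟩
    set r := rad N t with hr
    have hr0 : 0 < r := rad_pos ht
    have hr1 : r ≤ 1 := Real.rpow_le_one_of_one_le_of_nonpos ht1.le (by
      have : 0 < 1 / ((N:ℝ) - 2) := by positivity
      linarith)
    have hwt : w t ≤ w 1 * t := by
      have := conc_div hc (fun t ht => (hpos t ht).le) one_pos ht1.le
      linarith
    have e1 : w 1 ^ (-p) * t ^ (-p) ≤ w t ^ (-p) := by
      rw [← Real.mul_rpow hw0.le ht.le]
      exact Real.rpow_le_rpow_of_nonpos (hpos t ht) hwt (by linarith)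
    have e2 : (1/2) ^ β * r ^ β ≤ Real.log (1 + r) ^ β := by
      rw [← Real.mul_rpow (by norm_num) hr0.le]
      apply Real.rpow_le_rpow (by positivity) _ hβ.le
      have := Real.one_sub_inv_le_log_of_pos (show 0 < 1 + r by linarith)
      refine le_trans ?_ this
      rw [show 1 - (1 + r)⁻¹ = r / (1 + r) by field_simp; ring, le_div_iff₀ (by linarith)]
      nlinarith
    have e3 : t ^ (-p) = r ^ (((N:ℝ) - 2) * p) := (rad_rpow hN ht p).symm
    have e4 : 1 / t = r ^ ((N:ℝ) - 2) := by
      have := rad_rpow hN ht 1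
      rw [mul_one] at this
      rw [this, Real.rpow_neg_one, one_div]
    have e5 : r ^ ((N:ℝ) - 2) ≤ r ^ (2 * ((N:ℝ) - 1)) * (r ^ α * (r ^ β * r ^ (((N:ℝ) - 2) * p))) := by
      rw [← Real.rpow_add hr0, ← Real.rpow_add hr0, ← Real.rpow_add hr0]
      apply Real.rpow_le_rpow_of_exponent_ge hr0 hr1
      linarith
    have hph := (phi_pos (α := α) (β := β) hr0).le
    have e6 : r ^ α * ((1/2) ^ β * r ^ β) * (w 1 ^ (-p) * t ^ (-p))
        ≤ r ^ α * Real.log (1 + r) ^ β * w t ^ (-p) := by gcongr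
    rw [neg_div, neg_le_neg_iff]
    calc (1/2) ^ β * w 1 ^ (-p) / ((N:ℝ) - 2) ^ 2 / t
        = ((1/2) ^ β * w 1 ^ (-p) / ((N:ℝ) - 2) ^ 2) * r ^ ((N:ℝ) - 2) := by rw [← e4]; ring
      _ ≤ ((1/2) ^ β * w 1 ^ (-p) / ((N:ℝ) - 2) ^ 2) *
          (r ^ (2 * ((N:ℝ) - 1)) * (r ^ α * (r ^ β * r ^ (((N:ℝ) - 2) * p)))) := by gcongr
      _ = r ^ (2 * ((N:ℝ) - 1)) / ((N:ℝ) - 2) ^ 2 *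
          (r ^ α * ((1/2) ^ β * r ^ β) * (w 1 ^ (-p) * t ^ (-p))) := by rw [e3]; ring
      _ ≤ _ := by gcongr
  · by_contra! hα
    have hl2 : 0 < Real.log 2 := Real.log_pos (by norm_num)
    refine no_end_zero (w := w) (w1 := w1)
      (c := Real.log 2 ^ β * w 1 ^ (-p) / ((N:ℝ) - 2) ^ 2) (by positivity) hpos hd1 ?_
    intro t ht ht1
    obtain ⟨d, hd, hle⟩ := hd2 t ht
    refine ⟨d, hd, hle.trans ?_⟩
    set r := rad N t with hr
    have hr0 : 0 < r := rad_pos ht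
    have hr1 : 1 ≤ r := Real.one_le_rpow_of_pos_of_le_one_of_nonpos ht ht1.le (by
      have : 0 < 1 / ((N:ℝ) - 2) := by positivity
      linarith)
    have hwt : w t ≤ w 1 := conc_mono hc (fun t ht => (hpos t ht).le) ht ht1.le
    have e1 : w 1 ^ (-p) ≤ w t ^ (-p) :=
      Real.rpow_le_rpow_of_nonpos (hpos t ht) hwt (by linarith)
    have e2 : Real.log 2 ^ β ≤ Real.log (1 + r) ^ β := by
      apply Real.rpow_le_rpow (by positivity) _ hβ.le
      exact Real.log_le_log (by norm_num) (by linarith)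
    have e4 : 1 / t ^ 2 = r ^ (((N:ℝ) - 2) * 2) := by
      rw [rad_rpow hN ht 2, Real.rpow_neg ht.le, one_div]; norm_cast
    have e5 : r ^ (((N:ℝ) - 2) * 2) ≤ r ^ (2 * ((N:ℝ) - 1)) * r ^ α := by
      rw [← Real.rpow_add hr0]
      apply Real.rpow_le_rpow_of_exponent_le hr1
      linarith
    have hph := (phi_pos (α := α) (β := β) hr0).le
    have e6 : r ^ α * Real.log 2 ^ β * w 1 ^ (-p)
        ≤ r ^ α * Real.log (1 + r) ^ β * w t ^ (-p) := by gcongr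
    rw [neg_div, neg_le_neg_iff]
    calc Real.log 2 ^ β * w 1 ^ (-p) / ((N:ℝ) - 2) ^ 2 / t ^ 2
        = (Real.log 2 ^ β * w 1 ^ (-p) / ((N:ℝ) - 2) ^ 2) * r ^ (((N:ℝ) - 2) * 2) := by
          rw [← e4]; ring
      _ ≤ (Real.log 2 ^ β * w 1 ^ (-p) / ((N:ℝ) - 2) ^ 2) *
          (r ^ (2 * ((N:ℝ) - 1)) * r ^ α) := by gcongr
      _ = r ^ (2 * ((N:ℝ) - 1)) / ((N:ℝ) - 2) ^ 2 *
          (r ^ α * Real.log 2 ^ β * w 1 ^ (-p)) := by ring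
      _ ≤ _ := by gcongr
end

open Metric Set MeasureTheory Filter
open scoped Topology

section
variable {N : ℕ}

lemma lap_comp {u : EE N → ℝ} {x : EE N} {F F' : ℝ → ℝ} {c : ℝ} (hu : ContDiffAt ℝ 2 u x)
    (hF : ContDiffAt ℝ 2 F (u x)) (hd : ∀ᶠ s in 𝓝 (u x), HasDerivAt F (F' s) s)
    (hF' : HasDerivAt F' c (u x)) :
    laplacian (fun y => F (u y)) x
      = c * ∑ i, (fderiv ℝ u x (eb i)) ^ 2 + F' (u x) * laplacian u x := by
  have h := lap_of_jet (u := fun y => F (u y)) (x := x) (hF.comp x hu)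
    (fun i => (jet2_line (eb i) hu).comp (F := F) (F' := F') (c := c) (by simpa using hd)
      (by simpa using hF'))
  rw [h, Finset.sum_add_distrib, laplacian_D2, Finset.mul_sum, Finset.mul_sum]
  simp

lemma lap_add {u v : EE N → ℝ} {x : EE N} (hu : ContDiffAt ℝ 2 u x) (hv : ContDiffAt ℝ 2 v x) :
    laplacian (fun y => u y + v y) x = laplacian u x + laplacian v x := by
  have h := lap_of_jet (u := fun y => u y + v y) (x := x) (hu.add hv)
    (fun i => (jet2_line (eb i) hu).add (jet2_line (eb i) hv))
  rw [h, Finset.sum_add_distrib, laplacian_D2, laplacian_D2]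

lemma lap_const_mul {u : EE N → ℝ} {x : EE N} (hu : ContDiffAt ℝ 2 u x) (c : ℝ) :
    laplacian (fun y => c * u y) x = c * laplacian u x := by
  have h := lap_comp (F := fun s => c * s) (F' := fun _ => c) (c := 0) hu
    (contDiffAt_const.mul contDiffAt_id)
    (Eventually.of_forall fun s => by simpa using (hasDerivAt_id s).const_mul c)
    (hasDerivAt_const _ _)
  simpa using h

lemma lap_congr {u v : EE N → ℝ} {x : EE N} (h : u =ᶠ[𝓝 x] v) : laplacian u x = laplacian v x := by
  rw [laplacian_D2, laplacian_D2]
  have : D2 u x = D2 v x := (h.fderiv (𝕜 := ℝ)).fderiv_eq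
  rw [this]

lemma lap_shift {u : EE N → ℝ} {x y : EE N} (hu : ContDiffAt ℝ 2 u (y + x)) :
    laplacian (fun z => u (y + z)) x = laplacian u (y + x) := by
  have h := lap_of_jet (u := fun z => u (y + z)) (x := x)
    (hu.comp x (contDiffAt_const.add contDiffAt_id))
    (fun i => (jet2_line (eb i) hu).congr (Eventually.of_forall fun s => by simp only [add_assoc]))
  rw [h, laplacian_D2]

lemma lap_zero_const (c : ℝ) (x : EE N) : laplacian (fun _ => c) x = 0 := by
  have h := lap_of_jet (u := fun _ : EE N => c) (x := x) contDiffAt_const (fun i => Jet2.const c)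
  simpa using h

lemma lap_rotate {u : EE N → ℝ} {x : EE N} (S : OG N)
    (hu : ContDiffAt ℝ 2 u ((S : EE N →L[ℝ] EE N) x)) :
    laplacian (fun z => u ((S : EE N →L[ℝ] EE N) z)) x = laplacian u ((S : EE N →L[ℝ] EE N) x) := by
  have h := lap_of_jet (u := fun z => u ((S : EE N →L[ℝ] EE N) z)) (x := x)
    (hu.comp x (S : EE N →L[ℝ] EE N).contDiff.contDiffAt)
    (fun i => (jet2_line ((S : EE N →L[ℝ] EE N) (eb i)) hu).congr
      (Eventually.of_forall fun s => by simp [map_add, map_smul]))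
  rw [h, lap_rot]

/-! ### powers of the norm -/

lemma norm_jet (x : EE N) (i : Fin N) :
    Jet2 (fun s => ‖x + s • eb i‖ ^ 2) (2 * x i) 2 := by
  have e : ∀ s : ℝ, ‖x + s • eb i‖ ^ 2 = ‖x‖ ^ 2 + 2 * x i * s + s ^ 2 := by
    intro s
    rw [norm_add_sq_real, norm_smul, eb_norm, inner_smul_right]
    simp [EuclideanSpace.inner_single_right]
    ring
  have : (fun s : ℝ => ‖x + s • eb i‖ ^ 2) = fun s => ‖x‖ ^ 2 + 2 * x i * s + s ^ 2 := funext e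
  rw [this]
  refine ⟨fun s => 2 * x i + 2 * s, Eventually.of_forall fun s => ?_, by simp, ?_⟩
  · have h1 := ((hasDerivAt_id s).const_mul (2 * x i)).const_add (‖x‖ ^ 2)
    have h2 := h1.add (hasDerivAt_pow 2 s)
    exact h2.congr_deriv (by simp)
  · simpa using ((hasDerivAt_id (0:ℝ)).const_mul 2).const_add (2 * x i)

lemma norm_pow_jet {x : EE N} (hx : x ≠ 0) (q : ℝ) (i : Fin N) :
    Jet2 (fun s => (‖x + s • eb i‖ ^ 2) ^ q) (q * (‖x‖ ^ 2) ^ (q - 1) * (2 * x i))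
      (q * (q - 1) * (‖x‖ ^ 2) ^ (q - 2) * (2 * x i) ^ 2 + q * (‖x‖ ^ 2) ^ (q - 1) * 2) := by
  have hr : 0 < ‖x‖ ^ 2 := by have := norm_pos_iff.mpr hx; positivity
  have h := (norm_jet x i).comp (F := fun y => y ^ q) (F' := fun y => q * y ^ (q - 1))
    (c := q * ((q - 1) * (‖x‖ ^ 2) ^ (q - 2))) ?_ ?_
  · simpa [mul_assoc] using h
  · simp only [zero_smul, add_zero]
    filter_upwards [lt_mem_nhds hr] with s hs
    exact Real.hasDerivAt_rpow_const (Or.inl hs.ne')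
  · simp only [zero_smul, add_zero]
    have := (Real.hasDerivAt_rpow_const (x := ‖x‖ ^ 2) (p := q - 1) (Or.inl hr.ne')).const_mul q
    rwa [show q - 1 - 1 = q - 2 by ring] at this

lemma sum_sq (x : EE N) : ∑ i, (x i) ^ 2 = ‖x‖ ^ 2 := (EuclideanSpace.real_norm_sq_eq x).symm

lemma sum_pow_jet {x : EE N} (hx : x ≠ 0) (q : ℝ) :
    ∑ i, (q * (q - 1) * (‖x‖ ^ 2) ^ (q - 2) * (2 * x i) ^ 2 + q * (‖x‖ ^ 2) ^ (q - 1) * 2)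
      = 2 * q * (2 * q - 2 + N) * (‖x‖ ^ 2) ^ (q - 1) := by
  have hr : 0 < ‖x‖ ^ 2 := by have := norm_pos_iff.mpr hx; positivity
  have e : (‖x‖ ^ 2) ^ (q - 1) = (‖x‖ ^ 2) ^ (q - 2) * ‖x‖ ^ 2 := by
    rw [← Real.rpow_add_one hr.ne']; congr 1; ring
  rw [Finset.sum_add_distrib, Finset.sum_const, ← Finset.mul_sum]
  simp only [mul_pow]
  rw [← Finset.mul_sum, sum_sq, e]
  simp
  ring

lemma tau_eq (x : EE N) : tau x = (‖x‖ ^ 2) ^ (-((N:ℝ) - 2) / 2) := by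
  unfold tau
  rw [← Real.rpow_natCast, ← Real.rpow_mul (norm_nonneg _)]
  congr 1; push_cast; ring

lemma pow_cd {x : EE N} (hx : x ≠ 0) (q : ℝ) :
    ContDiffAt ℝ 2 (fun x : EE N => (‖x‖ ^ 2) ^ q) x := by
  have hr : 0 < ‖x‖ ^ 2 := by have := norm_pos_iff.mpr hx; positivity
  exact ContDiffAt.rpow_const_of_ne (contDiff_norm_sq ℝ).contDiffAt hr.ne'

lemma tau_cd {x : EE N} (hx : x ≠ 0) : ContDiffAt ℝ 2 (tau : EE N → ℝ) x := by
  have : (tau : EE N → ℝ) = fun x => (‖x‖ ^ 2) ^ (-((N:ℝ) - 2) / 2) := funext tau_eq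
  rw [this]; exact pow_cd hx _

lemma tau_lap {x : EE N} (hx : x ≠ 0) : laplacian (tau : EE N → ℝ) x = 0 := by
  have h := lap_of_jet (tau_cd hx) (fun i => (norm_pow_jet hx (-((N:ℝ) - 2) / 2) i).congr
    (Eventually.of_forall fun s => (tau_eq _).symm))
  rw [h, sum_pow_jet hx]
  ring

lemma tau_grad {x : EE N} (hx : x ≠ 0) :
    ∑ i, (fderiv ℝ (tau : EE N → ℝ) x (eb i)) ^ 2
      = ((N:ℝ) - 2) ^ 2 * ‖x‖ ^ (-(2 * ((N:ℝ) - 1))) := by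
  have e : ∀ i : Fin N, fderiv ℝ (tau : EE N → ℝ) x (eb i)
      = (-((N:ℝ) - 2) / 2) * (‖x‖ ^ 2) ^ ((-((N:ℝ) - 2) / 2) - 1) * (2 * x i) := fun i =>
    ((jet2_line (eb i) (tau_cd hx)).unique ((norm_pow_jet hx (-((N:ℝ) - 2) / 2) i).congr
    (Eventually.of_forall fun s => (tau_eq _).symm))).1
  have hr : 0 < ‖x‖ := norm_pos_iff.mpr hx
  simp only [e, mul_pow]
  rw [← Finset.mul_sum, ← Finset.mul_sum, sum_sq]
  have e2 : (‖x‖ ^ 2) ^ ((-((N:ℝ) - 2) / 2) - 1) = ‖x‖ ^ (-(N:ℝ)) := by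
    rw [← Real.rpow_natCast, ← Real.rpow_mul (norm_nonneg _)]
    congr 1; push_cast; ring
  have e3 : ‖x‖ ^ (-(2 * ((N:ℝ) - 1))) = ‖x‖ ^ (-(N:ℝ)) * ‖x‖ ^ (-(N:ℝ)) * ‖x‖ ^ (2:ℝ) := by
    rw [← Real.rpow_add hr, ← Real.rpow_add hr]; congr 1; ring
  rw [e2, e3]
  norm_num
  ring
end

open Metric Set MeasureTheory Filter
open scoped Topology

section
variable {N : ℕ}

lemma pospart_deriv (n : ℕ) (z : ℝ) :
    HasDerivAt (fun z : ℝ => max z 0 ^ (n + 2)) ((n + 2 : ℝ) * max z 0 ^ (n + 1)) z := by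
  rcases lt_trichotomy z 0 with h | h | h
  · have : (fun z : ℝ => max z 0 ^ (n + 2)) =ᶠ[𝓝 z] fun _ => 0 := by
      filter_upwards [gt_mem_nhds h] with s hs
      rw [max_eq_right hs.le]; simp
    rw [max_eq_right h.le]
    refine ((hasDerivAt_const z (0:ℝ)).congr_of_eventuallyEq this).congr_deriv (by simp)
  · subst h
    have h1 : (fun z : ℝ => max z 0 ^ (n + 2)) =O[𝓝 0] fun x => ‖x - 0‖ ^ (n + 2) := by
      apply Asymptotics.IsBigO.of_bound 1
      refine Eventually.of_forall fun x => ?_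
      rw [one_mul, norm_pow, norm_pow, norm_norm, sub_zero]
      gcongr
      rw [Real.norm_of_nonneg (le_max_right _ _)]
      exact max_le (le_abs_self x) (abs_nonneg x)
    have h2 := h1.hasFDerivAt (𝕜 := ℝ) (by omega)
    have h3 := h2.hasDerivAt
    refine h3.congr_deriv (by simp)
  · have : (fun z : ℝ => max z 0 ^ (n + 2)) =ᶠ[𝓝 z] fun z => z ^ (n + 2) := by
      filter_upwards [lt_mem_nhds h] with s hs
      rw [max_eq_left hs.le]
    rw [max_eq_left h.le]
    refine ((hasDerivAt_pow (n + 2) z).congr_of_eventuallyEq this).congr_deriv (by simp)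

noncomputable def FK (K s : ℝ) : ℝ := K / 3 * (1 - max (1 - s / K) 0 ^ 3)
noncomputable def FK1 (K s : ℝ) : ℝ := max (1 - s / K) 0 ^ 2
noncomputable def FK2 (K s : ℝ) : ℝ := - (2 / K) * max (1 - s / K) 0

lemma FK_d1 {K : ℝ} (hK : 0 < K) (s : ℝ) : HasDerivAt (FK K) (FK1 K s) s := by
  have h := (pospart_deriv 1 (1 - s / K)).comp s (((hasDerivAt_id s).div_const K).const_sub 1)
  have h2 := (h.const_sub 1).const_mul (K / 3)
  refine h2.congr_deriv ?_
  unfold FK1; field_simp; norm_num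

lemma FK_d2 {K : ℝ} (hK : 0 < K) (s : ℝ) : HasDerivAt (FK1 K) (FK2 K s) s := by
  have h := (pospart_deriv 0 (1 - s / K)).comp s (((hasDerivAt_id s).div_const K).const_sub 1)
  refine h.congr_deriv ?_
  unfold FK2; field_simp; norm_num

lemma FK_cd {K : ℝ} (hK : 0 < K) : ContDiff ℝ 2 (FK K) := by
  have e1 : deriv (FK K) = FK1 K := funext fun s => (FK_d1 hK s).deriv
  have e2 : deriv (FK1 K) = FK2 K := funext fun s => (FK_d2 hK s).deriv
  rw [show (2 : WithTop ℕ∞) = 1 + 1 by norm_num, contDiff_succ_iff_deriv]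
  refine ⟨fun s => (FK_d1 hK s).differentiableAt, by simp, ?_⟩
  rw [e1, contDiff_one_iff_deriv]
  refine ⟨fun s => (FK_d2 hK s).differentiableAt, ?_⟩
  rw [e2]; unfold FK2; fun_prop

lemma FK_top {K s : ℝ} (hK : 0 < K) (hs : K ≤ s) : FK K s = K / 3 := by
  have : 1 - s / K ≤ 0 := by rw [sub_nonpos, one_le_div hK]; exact hs
  simp [FK, max_eq_right this]

lemma FK_nonneg {K s : ℝ} (hK : 0 < K) (hs : 0 ≤ s) : 0 ≤ FK K s := by
  have h2 : 0 ≤ s / K := by positivity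
  have h1 : max (1 - s / K) 0 ≤ 1 := max_le (by linarith) zero_le_one
  have := pow_le_one₀ (n := 3) (le_max_right (1 - s / K) 0) h1
  unfold FK
  apply mul_nonneg (by positivity) (by linarith)

lemma FK_le {K s : ℝ} (hK : 0 < K) : FK K s ≤ K / 3 := by
  have : 0 ≤ max (1 - s / K) 0 ^ 3 := pow_nonneg (le_max_right _ _) _
  unfold FK
  have : K / 3 * (1 - max (1 - s / K) 0 ^ 3) ≤ K / 3 * 1 := by gcongr; linarith
  linarith

lemma FK_le_self {K s : ℝ} (hK : 0 < K) (hs : 0 ≤ s) : FK K s ≤ s := by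
  set z := s / K with hz
  have hsz : s = K * z := by rw [hz]; field_simp
  have hz0 : 0 ≤ z := by positivity
  have key : 1 - max (1 - z) 0 ^ 3 ≤ 3 * z := by
    rcases le_total (1 - z) 0 with h | h
    · rw [max_eq_right h]; norm_num; linarith
    · rw [max_eq_left h]; nlinarith [mul_nonneg hz0 (mul_nonneg hz0 h), sq_nonneg z]
  unfold FK
  rw [← hz]
  calc K / 3 * (1 - max (1 - z) 0 ^ 3) ≤ K / 3 * (3 * z) := by gcongr
    _ = s := by rw [hsz]; ring

lemma FK_ge {K s : ℝ} (hK : 0 < K) (hs : 0 ≤ s) : s - s ^ 2 / K ≤ FK K s := by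
  set z := s / K with hz
  have hsz : s = K * z := by rw [hz]; field_simp
  have hz0 : 0 ≤ z := by positivity
  have key : 3 * z - 3 * z ^ 2 ≤ 1 - max (1 - z) 0 ^ 3 := by
    rcases le_total (1 - z) 0 with h | h
    · rw [max_eq_right h]; norm_num; nlinarith
    · rw [max_eq_left h]; nlinarith [pow_nonneg hz0 3]
  unfold FK
  rw [← hz]
  calc s - s ^ 2 / K = K / 3 * (3 * z - 3 * z ^ 2) := by rw [hsz]; field_simp
    _ ≤ _ := by gcongr

/-! ### mean value inequality -/

lemma tau_anti (hN : 3 ≤ N) {x y : EE N} (hx : x ≠ 0) (h : ‖x‖ ≤ ‖y‖) : tau y ≤ tau x := by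
  have := nn_pos hN
  exact Real.rpow_le_rpow_of_nonpos (norm_pos_iff.mpr hx) h (by linarith)

lemma smv (hN : 3 ≤ N) {g : EE N → ℝ} (hg : ContDiff ℝ 2 g) (h0 : ∀ x, 0 ≤ g x)
    (hl : ∀ x, laplacian g x ≤ 0) (y x : EE N) : av (fun z => g (y + z)) x ≤ g y := by
  by_cases hx : x = 0
  · subst hx; simp [av]
  have hgy : ContDiff ℝ 2 (fun z => g (y + z)) := hg.comp (contDiff_const.add contDiff_id)
  obtain ⟨w, hc, hw⟩ := av_concave hN hgy.contDiffOn (fun z _ => by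
    rw [lap_shift hg.contDiffAt]; exact hl _)
  have hw0 : ∀ t, 0 < t → 0 ≤ w t := by
    intro t ht
    obtain ⟨z, hz, rfl⟩ := exists_tau hN ht
    rw [← hw z hz]; exact av_nonneg hz (fun _ _ => h0 _)
  apply le_of_forall_pos_le_add
  intro η hη
  have hcont : Continuous (fun z => g (y + z)) := hgy.continuous
  have : ∀ᶠ z in 𝓝 (0 : EE N), g (y + z) < g y + η := by
    have := hcont.continuousAt (x := (0 : EE N)).eventually_lt_const (u := g y + η)
      (by simpa using hη)
    exact this
  obtain ⟨δ, hδ, hb⟩ := Metric.eventually_nhds_iff.mp this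
  have hxn := norm_pos_iff.mpr hx
  set k := min 1 (δ / 2 / ‖x‖) with hk
  have hk0 : 0 < k := lt_min one_pos (by positivity)
  have hkx : k • x ≠ 0 := smul_ne_zero hk0.ne' hx
  have hkn : ‖k • x‖ = k * ‖x‖ := by rw [norm_smul, Real.norm_of_nonneg hk0.le]
  have h1 : ‖k • x‖ ≤ ‖x‖ := by
    rw [hkn]; nlinarith [min_le_left 1 (δ / 2 / ‖x‖)]
  have h2 : ‖k • x‖ < δ := by
    rw [hkn]
    calc k * ‖x‖ ≤ δ / 2 / ‖x‖ * ‖x‖ := by gcongr; exact min_le_right _ _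
      _ = δ / 2 := by field_simp
      _ < δ := by linarith
  calc av (fun z => g (y + z)) x = w (tau x) := hw x hx
    _ ≤ w (tau (k • x)) := conc_mono hc hw0 (tau_pos hx) (tau_anti hN hkx h1)
    _ = av (fun z => g (y + z)) (k • x) := (hw _ hkx).symm
    _ ≤ av (fun _ => g y + η) (k • x) := av_mono hcont.continuousOn continuousOn_const hkx
        (fun z hz => (hb (by rw [dist_zero_right, hz]; exact h2)).le)
    _ = g y + η := av_const _ _

lemma av_ball {f : EE N → ℝ} (hf : Continuous f) {M : ℝ} (hM : ∀ x, ‖f x‖ ≤ M) (ρ : ℝ) :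
    Integrable (av f) (volume.restrict (ball (0 : EE N) ρ)) ∧
    ∫ x in ball (0 : EE N) ρ, av f x = ∫ x in ball (0 : EE N) ρ, f x := by
  have : IsFiniteMeasure (volume.restrict (ball (0 : EE N) ρ)) :=
    ⟨by simpa using measure_ball_lt_top⟩
  have h_itg : Integrable (fun q : EE N × OG N => f ((q.2 : EE N →L[ℝ] EE N) q.1))
      ((volume.restrict (ball (0 : EE N) ρ)).prod (hμ N)) := by
    apply Integrable.of_bound _ M (Eventually.of_forall fun q => hM _)
    apply Continuous.aestronglyMeasurable
    exact hf.comp (OG_cont.comp continuous_swap)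
  refine ⟨h_itg.integral_prod_left, ?_⟩
  unfold av
  rw [integral_integral_swap (f := fun x (R : OG N) => f ((R : EE N →L[ℝ] EE N) x)) h_itg]
  have : ∀ R : OG N, ∫ x in ball (0 : EE N) ρ, f ((R : EE N →L[ℝ] EE N) x)
      = ∫ x in ball (0 : EE N) ρ, f x := by
    intro R
    have h := (Unitary.linearIsometryEquiv R).measurePreserving.setIntegral_preimage_emb
      (Unitary.linearIsometryEquiv R).toHomeomorph.measurableEmbedding f (ball (0 : EE N) ρ)
    have e : (Unitary.linearIsometryEquiv R) ⁻¹' (ball (0 : EE N) ρ) = ball 0 ρ := by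
      ext x; simp
    rw [e] at h
    exact h
  simp [this]

lemma ball_vol (hN : 3 ≤ N) {ρ : ℝ} (hρ : 0 ≤ ρ) : 
    volume.real (ball (0 : EE N) ρ) = ρ ^ N * volume.real (ball (0 : EE N) 1) := by
  have h3 : Nonempty (Fin N) := ⟨⟨0, by omega⟩⟩
  have := Measure.addHaar_ball (volume : Measure (EE N)) 0 hρ
  rw [measureReal_def, this, ENNReal.toReal_mul, measureReal_def,
    ENNReal.toReal_ofReal (by positivity)]
  simp

lemma smv2 (hN : 3 ≤ N) {g : EE N → ℝ} (hg : ContDiff ℝ 2 g) {M : ℝ} (h0 : ∀ x, 0 ≤ g x)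
    (hM : ∀ x, g x ≤ M) (hl : ∀ x, laplacian g x ≤ 0) (y : EE N) {c ρ : ℝ} 
    (hρ : 1 ≤ ρ) (hav : ∀ x : EE N, 1 ≤ ‖x‖ → ‖x‖ ≤ ρ → c ≤ av g x) :
    c * (ρ ^ N - 1) ≤ g y * (ρ + ‖y‖) ^ N := by
  set V := volume.real (ball (0 : EE N) 1) with hV
  have hVpos : 0 < V := by
    rw [hV, measureReal_def]
    exact ENNReal.toReal_pos (measure_ball_pos _ _ one_pos).ne' measure_ball_lt_top.ne
  have hb : ∀ x, ‖g x‖ ≤ M := fun x => by rw [Real.norm_of_nonneg (h0 x)]; exact hM x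
  have hcs : Continuous (fun z => g (y + z)) := hg.continuous.comp (by fun_prop)
  have a1 := av_ball hg.continuous hb ρ
  have a2 := av_ball hcs (fun x => hb (y + x)) (ρ + ‖y‖)
  have hfin : ∀ (z : EE N) r, volume (ball z r) ≠ ⊤ := fun z r => measure_ball_lt_top.ne
  -- upper bound
  have s1 : ∫ x in ball (0 : EE N) (ρ + ‖y‖), g (y + x) ≤ g y * ((ρ + ‖y‖) ^ N * V) := by
    rw [← a2.2, ← ball_vol hN (by positivity)]
    calc ∫ x in ball (0 : EE N) (ρ + ‖y‖), av (fun z => g (y + z)) x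
        ≤ ∫ x in ball (0 : EE N) (ρ + ‖y‖), g y :=
          integral_mono a2.1 (integrableOn_const (hfin _ _)) (fun x => smv hN hg h0 hl y x)
      _ = _ := by simp [mul_comm]
  have s2 : ∫ x in ball (0 : EE N) (ρ + ‖y‖), g (y + x) = ∫ x in ball y (ρ + ‖y‖), g x := by
    have h := (measurePreserving_add_left (volume : Measure (EE N)) y).setIntegral_preimage_emb
      (measurableEmbedding_addLeft y) g (ball y (ρ + ‖y‖))
    rw [← h]
    congr 2
    ext x; simp
  have gi : ∀ (z : EE N) r, IntegrableOn g (ball z r) := fun z r => by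
    have : IsFiniteMeasure (volume.restrict (ball z r)) :=
      ⟨by simpa using measure_ball_lt_top⟩
    exact Integrable.of_bound hg.continuous.aestronglyMeasurable M (Eventually.of_forall hb)
  have s3 : ∫ x in ball (0 : EE N) ρ, g x ≤ ∫ x in ball y (ρ + ‖y‖), g x := by
    apply setIntegral_mono_set (gi _ _) (Eventually.of_forall h0)
    apply LE.le.eventuallyLE
    apply ball_subset_ball'
    simp
  have s4 : c * (ρ ^ N * V - V) ≤ ∫ x in ball (0 : EE N) ρ, av g x := by
    have hsub : ball (0 : EE N) 1 ⊆ ball 0 ρ := ball_subset_ball hρ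
    calc c * (ρ ^ N * V - V) = ∫ x in ball (0 : EE N) ρ \ ball 0 1, c := by
          rw [setIntegral_const, measureReal_sdiff hsub measurableSet_ball, ball_vol hN (by linarith)]
          simp [mul_comm, hV]
      _ ≤ ∫ x in ball (0 : EE N) ρ \ ball 0 1, av g x := by
          apply setIntegral_mono_on
          · exact integrableOn_const (measure_ne_top_of_subset sdiff_subset (hfin 0 ρ))
          · exact IntegrableOn.mono_set a1.1 sdiff_subset
          · exact measurableSet_ball.diff measurableSet_ball
          · intro x hx
            simp only [Set.mem_sdiff, mem_ball, dist_zero_right, not_lt] at hx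
            exact hav x hx.2 hx.1.le
      _ ≤ ∫ x in ball (0 : EE N) ρ, av g x := by
          apply setIntegral_mono_set a1.1 
            (Eventually.of_forall fun x => integral_nonneg fun R => h0 _)
          exact (sdiff_subset).eventuallyLE
  have : c * (ρ ^ N - 1) * V ≤ g y * (ρ + ‖y‖) ^ N * V := by
    rw [a1.2] at s4; rw [s2] at s1
    nlinarith
  exact le_of_mul_le_mul_right this hVpos
end

open Metric Set MeasureTheory Filter
open scoped Topology

section
variable {N : ℕ}

lemma lemS_aux (hN : 3 ≤ N) {u : EE N → ℝ} (hu : ContDiffOn ℝ 2 u {0}ᶜ)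
    (hpos : ∀ x, x ≠ 0 → 0 < u x) (hl : ∀ x, x ≠ 0 → laplacian u x ≤ 0) {c : ℝ} 
    (hc : ∀ x, x ≠ 0 → c ≤ av u x) {y : EE N} (hy : y ≠ 0) {ε η ρ : ℝ} (hε : 0 < ε) (hη : 0 < η)
    (hρ : 1 ≤ ρ) :
    (c - η) * (ρ ^ N - 1) ≤ (u y + ε * tau y) * (ρ + ‖y‖) ^ N := by
  have hs2 : ∀ x : EE N, x ≠ 0 → ContDiffAt ℝ 2 (fun x => u x + ε * tau x) x := fun x hx =>
    (cd_at hu hx).add (contDiffAt_const.mul (tau_cd hx))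
  have hspos : ∀ x : EE N, x ≠ 0 → 0 < u x + ε * tau x := fun x hx => by
    have := hpos x hx; have := tau_pos hx; positivity
  have hslap : ∀ x : EE N, x ≠ 0 → laplacian (fun x => u x + ε * tau x) x ≤ 0 := fun x hx => by
    rw [lap_add (cd_at hu hx) (contDiffAt_const.mul (tau_cd hx)), lap_const_mul (tau_cd hx),
      tau_lap hx]
    simpa using hl x hx
  -- bound on the annulus
  obtain ⟨C, hC1, hC⟩ : ∃ C : ℝ, 1 ≤ C ∧ ∀ x : EE N, 1 ≤ ‖x‖ → ‖x‖ ≤ ρ → u x + ε * tau x ≤ C := by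
    have hK : IsCompact (closedBall (0 : EE N) ρ \ ball 0 1) :=
      (isCompact_closedBall _ _).diff isOpen_ball
    have hcont : ContinuousOn (fun x => u x + ε * tau x) (closedBall (0 : EE N) ρ \ ball 0 1) := by
      intro x hx
      have hx0 : x ≠ 0 := by
        rintro rfl
        simp at hx
      exact (hs2 x hx0).continuousAt.continuousWithinAt
    obtain ⟨C, hC⟩ := hK.bddAbove_image hcont
    refine ⟨max C 1, le_max_right _ _, fun x h1 h2 => le_trans (hC ?_) (le_max_left _ _)⟩
    exact mem_image_of_mem _ (by simp [h1, h2])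
  set K := C ^ 2 / η with hKdef
  have hK : 0 < K := by positivity
  set g : EE N → ℝ := fun x => if x = 0 then K / 3 else FK K (u x + ε * tau x) with hgdef
  have hg1 : ∀ x : EE N, x ≠ 0 → g x = FK K (u x + ε * tau x) := fun x hx => by simp [hgdef, hx]
  have hge : ∀ x : EE N, x ≠ 0 → g =ᶠ[𝓝 x] fun x => FK K (u x + ε * tau x) := fun x hx => by
    filter_upwards [isOpen_compl_singleton.mem_nhds hx] with z hz using hg1 z hz
  have hg0 : g =ᶠ[𝓝 0] fun _ => K / 3 := by
    have hr : 0 < rad N (K / ε) := rad_pos (by positivity)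
    filter_upwards [Metric.ball_mem_nhds (0 : EE N) hr] with z hz
    by_cases hz0 : z = 0
    · simp [hgdef, hz0]
    · rw [hg1 z hz0]
      apply FK_top hK
      have : K / ε ≤ tau z := by
        obtain ⟨x, hx, hxt⟩ := exists_tau (N := N) hN (show 0 < K / ε by positivity)
        have h1 : ‖x‖ = rad N (K / ε) := by rw [← hxt, rad_tau hN hx]
        rw [← hxt]
        apply tau_anti hN hz0
        rw [h1]; simpa using (mem_ball.mp hz).le
      rw [div_le_iff₀ hε] at this
      have := hpos z hz0
      linarith
  have hgc : ContDiff ℝ 2 g := by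
    rw [contDiff_iff_contDiffAt]
    intro x
    by_cases hx : x = 0
    · subst hx; exact contDiffAt_const.congr_of_eventuallyEq hg0
    · exact ((FK_cd hK).contDiffAt.comp x (hs2 x hx)).congr_of_eventuallyEq (hge x hx)
  have hgn : ∀ x, 0 ≤ g x := by
    intro x
    by_cases hx : x = 0
    · simp only [hgdef, hx, if_true]; positivity
    · rw [hg1 x hx]; exact FK_nonneg hK (hspos x hx).le
  have hgM : ∀ x, g x ≤ K / 3 := by
    intro x
    by_cases hx : x = 0
    · simp [hgdef, hx]
    · rw [hg1 x hx]; exact FK_le hK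
  have hgl : ∀ x, laplacian g x ≤ 0 := by
    intro x
    by_cases hx : x = 0
    · subst hx; rw [lap_congr hg0, lap_zero_const]
    · rw [lap_congr (hge x hx), lap_comp (hs2 x hx) (FK_cd hK).contDiffAt
        (Eventually.of_forall (FK_d1 hK)) (FK_d2 hK _)]
      have h1 : FK2 K (u x + ε * tau x) ≤ 0 := by
        unfold FK2
        have : 0 ≤ 2 / K * max (1 - (u x + ε * tau x) / K) 0 :=
          mul_nonneg (by positivity) (le_max_right _ _)
        linarith
      have h2 : 0 ≤ FK1 K (u x + ε * tau x) := by unfold FK1; positivity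
      have h3 := mul_nonpos_of_nonpos_of_nonneg h1
        (Finset.sum_nonneg fun i _ => sq_nonneg (fderiv ℝ (fun x => u x + ε * tau x) x (eb i)) : 
          0 ≤ ∑ i, (fderiv ℝ (fun x => u x + ε * tau x) x (eb i)) ^ 2)
      have h4 := mul_nonpos_of_nonneg_of_nonpos h2 (hslap x hx)
      linarith
  have key := smv2 hN hgc hgn hgM hgl y hρ (c := c - η) ?_
  · refine key.trans ?_
    have := FK_le_self hK (hspos y hy).le
    rw [hg1 y hy]
    gcongr
  · intro x h1 h2
    have hx : x ≠ 0 := by rintro rfl; simp at h1; linarith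
    calc c - η ≤ av u x - η := by linarith [hc x hx]
      _ = av (fun z => u z + -η) x := by
        rw [av_add hu.continuousOn continuousOn_const hx, av_const]; ring
      _ ≤ av g x := by
        apply av_mono (by have := hu.continuousOn; fun_prop) hgc.continuous.continuousOn hx
        intro z hz
        have hz0 : z ≠ 0 := by rw [← norm_pos_iff, hz]; exact norm_pos_iff.mpr hx
        rw [hg1 z hz0]
        refine le_trans ?_ (FK_ge hK (hspos z hz0).le)
        have h3 := hC z (by rw [hz]; exact h1) (by rw [hz]; exact h2)
        have h4 : (u z + ε * tau z) ^ 2 / K ≤ η := by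
          rw [div_le_iff₀ hK, hKdef]
          have : (u z + ε * tau z) ^ 2 ≤ C ^ 2 := by
            have := hspos z hz0
            gcongr
          calc _ ≤ C ^ 2 := this
            _ = _ := by field_simp
        have : 0 < ε * tau z := mul_pos hε (tau_pos hz0)
        linarith

lemma lemS (hN : 3 ≤ N) {u : EE N → ℝ} (hu : ContDiffOn ℝ 2 u {0}ᶜ)
    (hpos : ∀ x, x ≠ 0 → 0 < u x) (hl : ∀ x, x ≠ 0 → laplacian u x ≤ 0) {c : ℝ} 
    (hc : ∀ x, x ≠ 0 → c ≤ av u x) {y : EE N} (hy : y ≠ 0) : c ≤ u y := by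
  have h1 : ∀ ρ : ℝ, 1 ≤ ρ → c * (ρ ^ N - 1) ≤ u y * (ρ + ‖y‖) ^ N := by
    intro ρ hρ
    have hh : ∀ᶠ ε in 𝓝[>] (0:ℝ), (c - ε) * (ρ ^ N - 1) ≤ (u y + ε * tau y) * (ρ + ‖y‖) ^ N := by
      filter_upwards [self_mem_nhdsWithin] with ε hε
      exact lemS_aux hN hu hpos hl hc hy hε hε hρ
    have t1 : Tendsto (fun ε : ℝ => (c - ε) * (ρ ^ N - 1)) (𝓝[>] 0) (𝓝 ((c - 0) * (ρ ^ N - 1))) := by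
      apply Tendsto.mono_left _ nhdsWithin_le_nhds
      exact Continuous.tendsto (by fun_prop) 0
    have t2 : Tendsto (fun ε : ℝ => (u y + ε * tau y) * (ρ + ‖y‖) ^ N) (𝓝[>] 0)
        (𝓝 ((u y + 0 * tau y) * (ρ + ‖y‖) ^ N)) := by
      apply Tendsto.mono_left _ nhdsWithin_le_nhds
      exact Continuous.tendsto (f := fun ε : ℝ => (u y + ε * tau y) * (ρ + ‖y‖) ^ N) (by fun_prop) 0
    simpa using le_of_tendsto_of_tendsto t1 t2 hh
  have h2 : ∀ᶠ ρ in atTop, c * (1 - (ρ⁻¹) ^ N) ≤ u y * (1 + ‖y‖ * ρ⁻¹) ^ N := by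
    filter_upwards [eventually_ge_atTop (1:ℝ)] with ρ hρ
    have hρ0 : 0 < ρ := by linarith
    have h3 := h1 ρ hρ
    have e1 : 1 - (ρ⁻¹) ^ N = (ρ ^ N - 1) * (ρ⁻¹) ^ N := by
      rw [sub_mul, ← mul_pow, mul_inv_cancel₀ hρ0.ne', one_pow, one_mul]
    have e2 : (1 + ‖y‖ * ρ⁻¹) ^ N = (ρ + ‖y‖) ^ N * (ρ⁻¹) ^ N := by
      rw [← mul_pow, add_mul, mul_inv_cancel₀ hρ0.ne']
    rw [e1, e2, ← mul_assoc, ← mul_assoc]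
    gcongr
  have t0 : Tendsto (fun ρ : ℝ => ρ⁻¹) atTop (𝓝 0) := tendsto_inv_atTop_zero
  have t1 : Tendsto (fun ρ : ℝ => c * (1 - (ρ⁻¹) ^ N)) atTop (𝓝 (c * (1 - 0 ^ N))) :=
    ((t0.pow N).const_sub 1).const_mul c
  have t2 : Tendsto (fun ρ : ℝ => u y * (1 + ‖y‖ * ρ⁻¹) ^ N) atTop
      (𝓝 (u y * (1 + ‖y‖ * 0) ^ N)) := (((t0.const_mul ‖y‖).const_add 1).pow N).const_mul _
  have := le_of_tendsto_of_tendsto t1 t2 h2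
  rw [zero_pow (by omega)] at this
  simpa using this
end

open Metric Set MeasureTheory Filter
open scoped Topology

section
variable {N : ℕ}

lemma sum_lin (L : EE N →L[ℝ] ℝ) (x : EE N) : ∑ i, x i * L (eb i) = L x := by
  have h := (EuclideanSpace.basisFun (Fin N) ℝ).sum_repr x
  conv_rhs => rw [← h]
  rw [map_sum]
  simp

noncomputable def inv2 (x : EE N) : EE N := (‖x‖ ^ 2)⁻¹ • x

lemma inv2_ne {x : EE N} (hx : x ≠ 0) : inv2 x ≠ 0 := by
  have := norm_pos_iff.mpr hx
  exact smul_ne_zero (by positivity) hx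

lemma inv2_norm {x : EE N} (hx : x ≠ 0) : ‖inv2 x‖ = ‖x‖⁻¹ := by
  have := norm_pos_iff.mpr hx
  unfold inv2
  rw [norm_smul, Real.norm_of_nonneg (by positivity)]
  field_simp

lemma inv2_inv {x : EE N} (hx : x ≠ 0) : inv2 (inv2 x) = x := by
  have := norm_pos_iff.mpr hx
  show (‖inv2 x‖ ^ 2)⁻¹ • inv2 x = x
  rw [inv2_norm hx, inv2, smul_smul]
  have : (‖x‖⁻¹ ^ 2)⁻¹ * (‖x‖ ^ 2)⁻¹ = 1 := by field_simp
  rw [this, one_smul]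

lemma tau_inv2 {x : EE N} (hx : x ≠ 0) : tau (inv2 x) = (tau x)⁻¹ := by
  unfold tau
  rw [inv2_norm hx, Real.inv_rpow (norm_nonneg _)]

lemma inv2_cd {x : EE N} (hx : x ≠ 0) : ContDiffAt ℝ 2 (inv2 : EE N → EE N) x := by
  have := norm_pos_iff.mpr hx
  exact ((contDiff_norm_sq ℝ).contDiffAt.inv (by positivity)).smul contDiffAt_id

noncomputable def kel (u : EE N → ℝ) (x : EE N) : ℝ := tau x * u (inv2 x)

lemma kel_cd {u : EE N → ℝ} (hu : ContDiffOn ℝ 2 u {0}ᶜ) {x : EE N} (hx : x ≠ 0) :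
    ContDiffAt ℝ 2 (kel u) x :=
  (tau_cd hx).mul ((cd_at hu (inv2_ne hx)).comp x (inv2_cd hx))

lemma kel_lap {u : EE N → ℝ} (hu : ContDiffOn ℝ 2 u {0}ᶜ) {x : EE N} (hx : x ≠ 0) :
    laplacian (kel u) x = tau x * ((‖x‖ ^ 2)⁻¹) ^ 2 * laplacian u (inv2 x) := by
  have hxn := norm_pos_iff.mpr hx
  have hR : 0 < ‖x‖ ^ 2 := by positivity
  set P := (‖x‖ ^ 2)⁻¹ with hP
  have hc : ∀ i : Fin N, Jet2 (fun s => u (inv2 (x + s • eb i)))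
      (fderiv ℝ u (inv2 x) ((-(2 * x i) * P ^ 2) • x + P • eb i))
      (D2 u (inv2 x) ((-(2 * x i) * P ^ 2) • x + P • eb i) ((-(2 * x i) * P ^ 2) • x + P • eb i)
        + fderiv ℝ u (inv2 x) ((-2 * P ^ 2 + 2 * (2 * x i) ^ 2 * P ^ 3) • x
          + (-(4 * x i) * P ^ 2) • eb i)) := by
    intro i
    obtain ⟨d, h1, h2, h3⟩ := norm_jet x i
    have hne : ∀ᶠ s in 𝓝 (0:ℝ), ‖x + s • eb i‖ ^ 2 ≠ 0 := by
      have : ContinuousAt (fun s : ℝ => ‖x + s • eb i‖ ^ 2) 0 := by fun_prop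
      exact this.eventually_ne (by simpa using hx)
    have hl : ∀ s : ℝ, HasDerivAt (fun s : ℝ => x + s • eb i) (eb i) s := fun s => by
      simpa using ((hasDerivAt_id s).smul_const (eb i)).const_add x
    have key := jet2_curve (u := u) (γ := fun s : ℝ => inv2 (x + s • eb i))
      (γ1 := fun s => (‖x + s • eb i‖ ^ 2)⁻¹ • eb i
        + (-(d s) / (‖x + s • eb i‖ ^ 2) ^ 2) • (x + s • eb i))
      (γ2 := (-2 * P ^ 2 + 2 * (2 * x i) ^ 2 * P ^ 3) • x + (-(4 * x i) * P ^ 2) • eb i) ?_ ?_ ?_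
    · have e1 : (‖x‖ ^ 2)⁻¹ • eb i + (-(2 * x i) / (‖x‖ ^ 2) ^ 2) • x
          = (-(2 * x i) * P ^ 2) • x + P • eb i := by
        rw [add_comm, hP, inv_pow, div_eq_mul_inv]
      simpa only [zero_smul, add_zero, h2, e1] using key
    · simpa using cd_at hu (inv2_ne hx)
    · filter_upwards [h1, hne] with s hs hs0
      exact (hs.inv hs0).smul (hl s)
    · have g0 := h1.self_of_nhds
      have n0 : ‖x + (0:ℝ) • eb i‖ ^ 2 ≠ 0 := hne.self_of_nhds
      have k1 := (g0.inv n0).smul_const (eb i)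
      have k2 := (h3.neg.div (g0.pow 2) (pow_ne_zero 2 n0)).smul (hl 0)
      refine (k1.add k2).congr_deriv ?_
      simp only [zero_smul, add_zero, h2, Pi.div_apply, Pi.neg_apply, Pi.pow_apply]
      have e1 : -(2 * x i) / (‖x‖ ^ 2) ^ 2 = -(2 * x i) * P ^ 2 := by rw [hP]; field_simp
      have e2 : (-2 * (‖x‖ ^ 2) ^ 2 - -(2 * x i) * (((2:ℕ):ℝ) * (‖x‖ ^ 2) ^ (2 - 1) * (2 * x i))) / ((‖x‖ ^ 2) ^ 2) ^ 2
          = -2 * P ^ 2 + 2 * (2 * x i) ^ 2 * P ^ 3 := by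
        rw [hP]; field_simp; norm_num; ring
      rw [e1, e2]
      module
  have ha : ∀ i : Fin N, _ := fun i => (norm_pow_jet hx (-((N:ℝ) - 2) / 2) i).congr
    (Eventually.of_forall fun s => (tau_eq _).symm)
  have h := lap_of_jet (kel_cd hu hx) (fun i => (ha i).mul (hc i))
  rw [h]
  simp only [zero_smul, add_zero]
  rw [Finset.sum_add_distrib, Finset.sum_add_distrib, ← Finset.sum_mul, sum_pow_jet hx]
  have e0 : (2 * (-((N:ℝ) - 2) / 2) - 2 + N) = 0 := by ring
  rw [e0]
  have et : (‖x‖ ^ 2) ^ (-((N:ℝ) - 2) / 2 - 1) = tau x * P := by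
    rw [Real.rpow_sub_one hR.ne', tau_eq, hP, div_eq_mul_inv]
  rw [et, laplacian_D2]
  set L := fderiv ℝ u (inv2 x) with hL
  set B := D2 u (inv2 x) with hB
  have hPR : P * ‖x‖ ^ 2 = 1 := by rw [hP]; field_simp
  have s1 := sum_lin L x
  have s2 := sum_lin (B x) x
  have s3 : ∑ i, x i * B (eb i) x = B x x := sum_lin (B.flip x) x
  have s4 := sum_sq x
  have E1 : ∑ i, 2 * (-((N:ℝ) - 2) / 2 * (tau x * P) * (2 * x i) *
      L ((-(2 * x i) * P ^ 2) • x + P • eb i)) = 2 * ((N:ℝ) - 2) * tau x * P ^ 2 * L x := by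
    have : ∀ i, 2 * (-((N:ℝ) - 2) / 2 * (tau x * P) * (2 * x i) *
      L ((-(2 * x i) * P ^ 2) • x + P • eb i))
        = (4 * ((N:ℝ) - 2) * tau x * P ^ 3 * L x) * (x i) ^ 2
          + (-2 * ((N:ℝ) - 2) * tau x * P ^ 2) * (x i * L (eb i)) := by
      intro i; simp only [map_add, map_smul, smul_eq_mul]; ring
    simp only [this]
    rw [Finset.sum_add_distrib, ← Finset.mul_sum, ← Finset.mul_sum, s1, s4]
    linear_combination (4 * ((N:ℝ) - 2) * tau x * P ^ 2 * L x) * hPR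
  have E2 : ∑ i, tau x * (B ((-(2 * x i) * P ^ 2) • x + P • eb i)
      ((-(2 * x i) * P ^ 2) • x + P • eb i)
        + L ((-2 * P ^ 2 + 2 * (2 * x i) ^ 2 * P ^ 3) • x + (-(4 * x i) * P ^ 2) • eb i))
      = tau x * P ^ 2 * ∑ i, B (eb i) (eb i) - 2 * ((N:ℝ) - 2) * tau x * P ^ 2 * L x := by
    have : ∀ i, tau x * (B ((-(2 * x i) * P ^ 2) • x + P • eb i)
      ((-(2 * x i) * P ^ 2) • x + P • eb i)
        + L ((-2 * P ^ 2 + 2 * (2 * x i) ^ 2 * P ^ 3) • x + (-(4 * x i) * P ^ 2) • eb i))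
        = (tau x * P ^ 2) * B (eb i) (eb i)
          + ((4 * tau x * P ^ 4 * B x x + 8 * tau x * P ^ 3 * L x) * (x i) ^ 2
          + ((-2 * tau x * P ^ 3) * (x i * B x (eb i))
          + ((-2 * tau x * P ^ 3) * (x i * B (eb i) x)
          + ((-4 * tau x * P ^ 2) * (x i * L (eb i)) + -2 * tau x * P ^ 2 * L x)))) := by
      intro i
      simp only [map_add, map_smul, smul_eq_mul, add_apply,
        smul_apply]
      ring
    simp only [this]
    rw [Finset.sum_add_distrib, Finset.sum_add_distrib, Finset.sum_add_distrib,
      Finset.sum_add_distrib, Finset.sum_add_distrib, ← Finset.mul_sum, ← Finset.mul_sum,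
      ← Finset.mul_sum, ← Finset.mul_sum, ← Finset.mul_sum, s1, s2, s3, s4, Finset.sum_const]
    simp only [Finset.card_univ, Fintype.card_fin, nsmul_eq_mul]
    linear_combination (4 * tau x * P ^ 3 * B x x + 8 * tau x * P ^ 2 * L x) * hPR
  rw [E1, E2]
  ring

lemma av_kel {u : EE N → ℝ} {x : EE N} : av (kel u) x = tau x * av u (inv2 x) := by
  unfold av
  rw [← integral_const_mul]
  congr 1; ext R
  unfold kel tau inv2
  rw [OG_norm, map_smul]

lemma lemK (hN : 3 ≤ N) {u : EE N → ℝ} (hu : ContDiffOn ℝ 2 u {0}ᶜ)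
    (hpos : ∀ x, x ≠ 0 → 0 < u x) (hl : ∀ x, x ≠ 0 → laplacian u x ≤ 0) {c : ℝ} 
    (hc : ∀ x, x ≠ 0 → c * tau x ≤ av u x) {y : EE N} (hy : y ≠ 0) : c * tau y ≤ u y := by
  have h := lemS hN (u := kel u) (c := c)
    (fun x hx => (kel_cd hu hx).contDiffWithinAt)
    (fun x hx => mul_pos (tau_pos hx) (hpos _ (inv2_ne hx)))
    (fun x hx => by
      rw [kel_lap hu hx]
      exact mul_nonpos_of_nonneg_of_nonpos
        (mul_nonneg (tau_pos hx).le (by positivity)) (hl _ (inv2_ne hx)))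
    (fun x hx => by
      rw [av_kel]
      have h1 := hc _ (inv2_ne hx)
      rw [tau_inv2 hx] at h1
      have := tau_pos hx
      rw [← div_eq_mul_inv, div_le_iff₀ this] at h1
      linarith)
    (inv2_ne hy)
  unfold kel at h
  rw [inv2_inv hy, tau_inv2 hy] at h
  have := tau_pos hy
  rwa [← div_eq_inv_mul, le_div_iff₀ this] at h
end

open Metric Set MeasureTheory Filter
open scoped Topology

section
variable {N : ℕ}

noncomputable def HH (w : ℝ) : ℝ := Real.sqrt (1 + w ^ 2) - 1
noncomputable def HH1 (w : ℝ) : ℝ := w / Real.sqrt (1 + w ^ 2)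

lemma one_sq_pos (w : ℝ) : 0 < 1 + w ^ 2 := by positivity

lemma HH_d1 (w : ℝ) : HasDerivAt HH (HH1 w) w := by
  have h1 : HasDerivAt (fun w : ℝ => 1 + w ^ 2) (2 * w) w := by
    simpa using (hasDerivAt_pow 2 w).const_add 1
  have h2 := (h1.sqrt (one_sq_pos w).ne').sub_const 1
  refine h2.congr_deriv ?_
  unfold HH1
  have := Real.sqrt_pos.mpr (one_sq_pos w)
  field_simp

lemma HH_d2 (w : ℝ) : ∃ c, 0 ≤ c ∧ HasDerivAt HH1 c w := by
  have h1 : HasDerivAt (fun w : ℝ => 1 + w ^ 2) (2 * w) w := by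
    simpa using (hasDerivAt_pow 2 w).const_add 1
  have hs := Real.sqrt_pos.mpr (one_sq_pos w)
  have h2 := (hasDerivAt_id w).div (h1.sqrt (one_sq_pos w).ne') hs.ne'
  refine ⟨_, ?_, h2⟩
  apply div_nonneg _ (by positivity)
  have e : Real.sqrt (1 + w ^ 2) * Real.sqrt (1 + w ^ 2) = 1 + w ^ 2 :=
    Real.mul_self_sqrt (one_sq_pos w).le
  have : w * (2 * w / (2 * Real.sqrt (1 + w ^ 2))) ≤ Real.sqrt (1 + w ^ 2) := by
    rw [show w * (2 * w / (2 * Real.sqrt (1 + w ^ 2))) = w ^ 2 / Real.sqrt (1 + w ^ 2) by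
      field_simp, div_le_iff₀ hs, e]
    linarith
  simpa using this

lemma HH_cd : ContDiff ℝ 2 HH := by
  unfold HH
  refine ContDiff.sub (ContDiff.sqrt (by fun_prop) (fun w => (one_sq_pos w).ne')) contDiff_const

lemma HH_nonneg (w : ℝ) : 0 ≤ HH w := by
  have : 1 ≤ Real.sqrt (1 + w ^ 2) := Real.one_le_sqrt.mpr (by nlinarith)
  unfold HH; linarith

lemma HH_le (w : ℝ) : HH w ≤ |w| := by
  have : Real.sqrt (1 + w ^ 2) ≤ 1 + |w| := by
    apply Real.sqrt_le_iff.mpr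
    refine ⟨by positivity, ?_⟩
    nlinarith [sq_abs w, abs_nonneg w]
  unfold HH; linarith

lemma HH_zero {w : ℝ} (h : HH w = 0) : w = 0 := by
  have h1 : Real.sqrt (1 + w ^ 2) = 1 := by unfold HH at h; linarith
  rw [Real.sqrt_eq_one] at h1
  nlinarith

lemma convex_vanish {m W : ℝ → ℝ} (hm : ConvexOn ℝ (Ioi 0) m) (hm0 : ∀ t, 0 < t → 0 ≤ m t)
    (hW : ConcaveOn ℝ (Ioi 0) W) (hW0 : ∀ t, 0 < t → 0 ≤ W t)
    (hA : ∀ c, (∀ t, 0 < t → c ≤ W t) → ∀ t, 0 < t → m t ≤ 2 * (W t - c))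
    (hB : ∀ c, (∀ t, 0 < t → c * t ≤ W t) → ∀ t, 0 < t → m t ≤ 2 * (W t - c * t))
    {t : ℝ} (ht : 0 < t) : m t = 0 := by
  apply le_antisymm _ (hm0 t ht)
  obtain ⟨c0, h01, h02⟩ : ∃ c0, (∀ t, 0 < t → c0 ≤ W t) ∧ ∀ η, 0 < η → ∃ t, 0 < t ∧ W t < c0 + η := by
    have hne : (W '' Ioi 0).Nonempty := ⟨_, mem_image_of_mem _ (mem_Ioi.mpr one_pos)⟩
    have hbd : BddBelow (W '' Ioi 0) := ⟨0, by rintro _ ⟨s, hs, rfl⟩; exact hW0 s hs⟩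
    refine ⟨sInf (W '' Ioi 0), fun t ht => csInf_le hbd (mem_image_of_mem _ ht), fun η hη => ?_⟩
    obtain ⟨_, ⟨s, hs, rfl⟩, h⟩ := exists_lt_of_csInf_lt hne
      (show sInf (W '' Ioi 0) < sInf (W '' Ioi 0) + η by linarith)
    exact ⟨s, hs, h⟩
  obtain ⟨c1, h11, h12⟩ : ∃ c1, (∀ t, 0 < t → c1 ≤ W t / t) ∧
      ∀ η, 0 < η → ∃ t, 0 < t ∧ W t / t < c1 + η := by
    have hne : ((fun t => W t / t) '' Ioi 0).Nonempty :=
      ⟨_, mem_image_of_mem _ (mem_Ioi.mpr one_pos)⟩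
    have hbd : BddBelow ((fun t => W t / t) '' Ioi 0) :=
      ⟨0, by rintro _ ⟨s, hs, rfl⟩; exact div_nonneg (hW0 s hs) (le_of_lt hs)⟩
    refine ⟨sInf ((fun t => W t / t) '' Ioi 0),
      fun t ht => csInf_le hbd (mem_image_of_mem (fun t => W t / t) ht), fun η hη => ?_⟩
    obtain ⟨_, ⟨s, hs, rfl⟩, h⟩ := exists_lt_of_csInf_lt hne
      (show sInf ((fun t => W t / t) '' Ioi 0) < sInf ((fun t => W t / t) '' Ioi 0) + η by linarith)
    exact ⟨s, hs, h⟩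
  have key : ∀ η, 0 < η → m t ≤ 0 + η * (2 * (1 + t)) := by
    intro η hη
    obtain ⟨t1, ht1, hW1⟩ := h02 η hη
    obtain ⟨t2, ht2, hW2⟩ := h12 η hη
    set s := min (t / 2) t1
    set T := max (2 * t) t2
    have hs : 0 < s := lt_min (by linarith) ht1
    have hst : s < t := lt_of_le_of_lt (min_le_left _ _) (by linarith)
    have htT : t < T := lt_of_lt_of_le (by linarith) (le_max_left _ _)
    have hT : 0 < T := by linarith
    have ms : m s ≤ 2 * η := by
      have := hA c0 h01 s hs
      have := conc_mono hW hW0 hs (min_le_right _ _ : s ≤ t1)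
      linarith
    have mT : m T ≤ 2 * η * T := by
      have h1 := hB c1 (fun t ht => (le_div_iff₀ ht).mp (h11 t ht)) T hT
      have h2 := conc_div hW hW0 ht2 (le_max_right _ _ : t2 ≤ T)
      have h3 : W t2 < (c1 + η) * t2 := (div_lt_iff₀ ht2).mp hW2
      have h4 : W T * t2 ≤ ((c1 + η) * T) * t2 := by nlinarith
      have h5 := le_of_mul_le_mul_right h4 ht2
      linarith
    have hTs : T - s ≠ 0 := by linarith
    have q1 : 0 ≤ (T - t) / (T - s) := div_nonneg (by linarith) (by linarith)
    have q2 : 0 ≤ (t - s) / (T - s) := div_nonneg (by linarith) (by linarith)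
    have q3 : (T - t) / (T - s) + (t - s) / (T - s) = 1 := by field_simp; ring
    have hcv := hm.2 (mem_Ioi.mpr hs) (mem_Ioi.mpr hT) q1 q2 q3
    have e : ((T - t) / (T - s)) • s + ((t - s) / (T - s)) • T = t := by
      have : T - s ≠ 0 := by linarith
      simp only [smul_eq_mul]
      field_simp; ring
    rw [e] at hcv
    simp only [smul_eq_mul] at hcv
    have b1 : (T - t) / (T - s) ≤ 1 := by
      rw [div_le_one (by linarith)]; linarith
    have b2 : (t - s) / (T - s) ≤ t / T := by
      rw [div_le_div_iff₀ (by linarith) hT]; nlinarith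
    have c1' : (T - t) / (T - s) * m s ≤ 1 * (2 * η) :=
      mul_le_mul b1 ms (hm0 s hs) zero_le_one
    have c2 : (t - s) / (T - s) * m T ≤ t / T * (2 * η * T) :=
      mul_le_mul b2 mT (hm0 T hT) (by positivity)
    have c3 : t / T * (2 * η * T) = 2 * η * t := by field_simp
    linarith
  by_contra! hlt
  have := key (m t / (4 * (1 + t))) (by positivity)
  have e : m t / (4 * (1 + t)) * (2 * (1 + t)) = m t / 2 := by field_simp; norm_num
  linarith

lemma symm_rot (hN : 3 ≤ N) {φ : ℝ → ℝ} (hφ : ∀ r, 0 < r → 0 < φ r) {p : ℝ} (hp : 0 < p)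
    {u : EE N → ℝ} (hu : IsSol φ p u) (S : OG N) {x : EE N} (hx : x ≠ 0) :
    u x = u ((S : EE N →L[ℝ] EE N) x) := by
  have hpos : ∀ x, x ≠ 0 → 0 < u x := fun x hx => (hu.2 x hx).1
  have hl := sol_lap_nonpos hφ hu
  have hcS : ∀ y : EE N, y ≠ 0 → ContDiffAt ℝ 2 (fun z => u ((S : EE N →L[ℝ] EE N) z)) y :=
    fun y hy => (cd_at hu.1 (OG_ne S hy)).comp y (S : EE N →L[ℝ] EE N).contDiff.contDiffAt
  have hwc : ∀ y : EE N, y ≠ 0 →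
      ContDiffAt ℝ 2 (fun z => u z + -1 * u ((S : EE N →L[ℝ] EE N) z)) y :=
    fun y hy => (cd_at hu.1 hy).add (contDiffAt_const.mul (hcS y hy))
  set h : EE N → ℝ := fun z => HH (u z + -1 * u ((S : EE N →L[ℝ] EE N) z)) with hdef
  have hhc : ContDiffOn ℝ 2 h {0}ᶜ := fun y hy =>
    (HH_cd.contDiffAt.comp y (hwc y hy)).contDiffWithinAt
  have hSc : ContinuousOn (fun z => u ((S : EE N →L[ℝ] EE N) z)) {0}ᶜ := fun y hy =>
    (hcS y hy).continuousAt.continuousWithinAt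
  have hlap : ∀ y, y ≠ 0 → 0 ≤ laplacian h y := by
    intro y hy
    obtain ⟨c, hc0, hc⟩ := HH_d2 (u y + -1 * u ((S : EE N →L[ℝ] EE N) y))
    rw [hdef, lap_comp (hwc y hy) HH_cd.contDiffAt (Eventually.of_forall HH_d1) hc]
    have h1 : 0 ≤ c * ∑ i, (fderiv ℝ (fun z => u z + -1 * u ((S : EE N →L[ℝ] EE N) z)) y (eb i)) ^ 2 :=
      mul_nonneg hc0 (Finset.sum_nonneg fun i _ => sq_nonneg _)
    refine add_nonneg h1 ?_
    rw [lap_add (cd_at hu.1 hy) (contDiffAt_const.mul (hcS y hy)), lap_const_mul (hcS y hy),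
      lap_rotate S (cd_at hu.1 (OG_ne S hy)), sol_lap hu hy, sol_lap hu (OG_ne S hy), OG_norm]
    have hf := hφ _ (norm_pos_iff.mpr hy)
    set a := u y
    set b := u ((S : EE N →L[ℝ] EE N) y)
    have ha : 0 < a := hpos y hy
    have hb : 0 < b := hpos _ (OG_ne S hy)
    have e : -(φ ‖y‖ * a ^ (-p)) + -1 * -(φ ‖y‖ * b ^ (-p)) = φ ‖y‖ * (b ^ (-p) - a ^ (-p)) := by ring
    rw [e]
    unfold HH1
    have hsq := Real.sqrt_pos.mpr (one_sq_pos (a + -1 * b))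
    rcases le_total a b with hab | hab
    · have h2 := Real.rpow_le_rpow_of_nonpos ha hab (by linarith : -p ≤ 0)
      apply mul_nonneg_of_nonpos_of_nonpos
      · exact div_nonpos_of_nonpos_of_nonneg (by linarith) hsq.le
      · exact mul_nonpos_of_nonneg_of_nonpos hf.le (by linarith)
    · have h2 := Real.rpow_le_rpow_of_nonpos hb hab (by linarith : -p ≤ 0)
      apply mul_nonneg
      · exact div_nonneg (by linarith) hsq.le
      · exact mul_nonneg hf.le (by linarith)
  obtain ⟨m, hmc, hm⟩ := av_convex hN hhc hlap
  obtain ⟨W, hWc, hW⟩ := av_concave hN hu.1 hl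
  have hm0 : ∀ t, 0 < t → 0 ≤ m t := by
    intro t ht
    obtain ⟨z, hz, rfl⟩ := exists_tau hN ht
    rw [← hm z hz]; exact av_nonneg hz (fun _ _ => HH_nonneg _)
  have hW0 : ∀ t, 0 < t → 0 ≤ W t := by
    intro t ht
    obtain ⟨z, hz, rfl⟩ := exists_tau hN ht
    rw [← hW z hz]; exact av_nonneg hz (fun y hy => (hpos y hy).le)
  have gen : ∀ (z : EE N) (k : ℝ), z ≠ 0 → (∀ y, ‖y‖ = ‖z‖ → k ≤ u y) →
      m (tau z) ≤ 2 * (W (tau z) - k) := by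
    intro z k hz hk
    rw [← hm z hz, ← hW z hz]
    have hsum : ContinuousOn (fun y => u y + u ((S : EE N →L[ℝ] EE N) y)) {0}ᶜ :=
      hu.1.continuousOn.add hSc
    have hsum2 : ContinuousOn (fun y => u y + u ((S : EE N →L[ℝ] EE N) y) + -2 * k) {0}ᶜ :=
      hsum.add continuousOn_const
    have h1 : av h z ≤ av (fun y => (u y + u ((S : EE N →L[ℝ] EE N) y)) + -2 * k) z := by
      apply av_mono hhc.continuousOn hsum2 hz
      intro y hy
      refine (HH_le _).trans ?_
      have a1 := hk y hy
      have a2 := hk _ ((OG_norm S y).trans hy)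
      rw [abs_le]; constructor <;> linarith
    refine h1.trans (le_of_eq ?_)
    rw [av_add hsum continuousOn_const hz,
      av_add hu.1.continuousOn hSc hz, av_const, av_comp]
    ring
  have hmz : m (tau x) = 0 := by
    refine convex_vanish hmc hm0 hWc hW0 ?_ ?_ (tau_pos hx)
    · intro c hc t ht
      obtain ⟨z, hz, rfl⟩ := exists_tau hN ht
      refine gen z c hz (fun y hy => ?_)
      have hy0 : y ≠ 0 := by rw [← norm_pos_iff, hy]; exact norm_pos_iff.mpr hz
      exact lemS hN hu.1 hpos hl (fun v hv => by rw [hW v hv]; exact hc _ (tau_pos hv)) hy0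
    · intro c hc t ht
      obtain ⟨z, hz, rfl⟩ := exists_tau hN ht
      refine gen z _ hz (fun y hy => ?_)
      have hy0 : y ≠ 0 := by rw [← norm_pos_iff, hy]; exact norm_pos_iff.mpr hz
      have : tau z = tau y := by unfold tau; rw [hy]
      rw [this]
      exact lemK hN hu.1 hpos hl (fun v hv => by rw [hW v hv]; exact hc _ (tau_pos hv)) hy0
  have h0 : h x = 0 := av_zero hhc.continuousOn hx (fun _ _ => HH_nonneg _) ((hm x hx).trans hmz)
  have := HH_zero h0
  linarith

lemma symmetry (hN : 3 ≤ N) {φ : ℝ → ℝ} (hφ : ∀ r, 0 < r → 0 < φ r) {p : ℝ} (hp : 0 < p)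
    {u : EE N → ℝ} (hu : IsSol φ p u) {x y : EE N} (hx : x ≠ 0) (hxy : ‖x‖ = ‖y‖) :
    u x = u y := by
  obtain ⟨S, rfl⟩ := OG_trans hxy
  exact symm_rot hN hφ hp hu S hx
end

open Metric Set MeasureTheory Filter
open scoped Topology

section

lemma q_int_Ioi {q : ℝ → ℝ} (hq : ContinuousOn q (Ioi 0)) (hq0 : ∀ s, 0 < s → 0 ≤ q s)
    (hi : IntegrableOn (fun s => min s 1 * q s) (Ioi 0)) {a : ℝ} (ha : 0 < a) :
    IntegrableOn q (Ioi a) := by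
  have hsub : Ioi a ⊆ Ioi (0:ℝ) := Ioi_subset_Ioi ha.le
  have h1 := (hi.mono_set hsub).const_mul (min a 1)⁻¹
  have hm : 0 < min a 1 := lt_min ha one_pos
  refine Integrable.mono' h1 ((hq.mono hsub).aestronglyMeasurable measurableSet_Ioi) ?_
  refine ae_restrict_of_forall_mem measurableSet_Ioi fun s hs => ?_
  have hs' : a < s := hs
  have h0 := hq0 s (by linarith)
  rw [Real.norm_of_nonneg h0, ← mul_assoc, ← div_eq_inv_mul]
  have : 1 ≤ min s 1 / min a 1 := by
    rw [one_le_div hm]; exact min_le_min_right 1 hs'.le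
  nlinarith

lemma q_int_Ioc {q : ℝ → ℝ} (hq : ContinuousOn q (Ioi 0)) (hq0 : ∀ s, 0 < s → 0 ≤ q s)
    (hi : IntegrableOn (fun s => min s 1 * q s) (Ioi 0)) {t : ℝ} :
    IntegrableOn (fun s => s * q s) (Ioc 0 t) := by
  have hsub : Ioc 0 t ⊆ Ioi (0:ℝ) := Ioc_subset_Ioi_self
  have h1 := (hi.mono_set hsub).const_mul (max t 1)
  refine Integrable.mono' h1 (((continuousOn_id.mul hq).mono hsub).aestronglyMeasurable
    measurableSet_Ioc) ?_
  refine ae_restrict_of_forall_mem measurableSet_Ioc fun s hs => ?_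
  have h0 := hq0 s hs.1
  have hs0 : 0 < s := hs.1
  rw [Real.norm_of_nonneg (mul_nonneg hs0.le h0), ← mul_assoc]
  apply mul_le_mul_of_nonneg_right _ h0
  rcases le_total s 1 with h | h
  · rw [min_eq_left h]; nlinarith [le_max_right t 1]
  · rw [min_eq_right h, mul_one]; exact hs.2.trans (le_max_left _ _)

lemma q_tail {q : ℝ → ℝ} (hq : ContinuousOn q (Ioi 0)) (hq0 : ∀ s, 0 < s → 0 ≤ q s)
    (hi : IntegrableOn (fun s => min s 1 * q s) (Ioi 0)) {t : ℝ} (ht : 0 < t) :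
    HasDerivAt (fun t => ∫ s in Ioi t, q s) (-(q t)) t := by
  have he : (fun t => ∫ s in Ioi t, q s) =ᶠ[𝓝 t]
      fun t => (∫ s in Ioi (1:ℝ), q s) - ∫ s in (1:ℝ)..t, q s := by
    filter_upwards [lt_mem_nhds ht] with b hb
    have := intervalIntegral.integral_interval_add_Ioi (q_int_Ioi hq hq0 hi one_pos)
      (q_int_Ioi hq hq0 hi hb)
    linarith
  have hd : HasDerivAt (fun t => ∫ s in (1:ℝ)..t, q s) (q t) t := by
    apply intervalIntegral.integral_hasDerivAt_right
    · apply ContinuousOn.intervalIntegrable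
      apply hq.mono
      intro s hs
      rw [uIcc, mem_Icc] at hs
      exact lt_of_lt_of_le (lt_min one_pos ht) hs.1
    · exact hq.stronglyMeasurableAtFilter isOpen_Ioi t ht
    · exact hq.continuousAt (Ioi_mem_nhds ht)
  exact (hd.const_sub _).congr_of_eventuallyEq he

lemma q_green {q : ℝ → ℝ} (hq : ContinuousOn q (Ioi 0)) (hq0 : ∀ s, 0 < s → 0 ≤ q s)
    (hi : IntegrableOn (fun s => min s 1 * q s) (Ioi 0)) {t : ℝ} (ht : 0 < t) :
    HasDerivAt (fun t => ∫ s in Ioi (0:ℝ), min s t * q s) (∫ s in Ioi t, q s) t := by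
  have hspl : ∀ b : ℝ, 0 < b → ∫ s in Ioi (0:ℝ), min s b * q s
      = (∫ s in (0:ℝ)..b, s * q s) + b * ∫ s in Ioi b, q s := by
    intro b hb
    have e1 : EqOn (fun s => s * q s) (fun s => min s b * q s) (Ioc 0 b) := fun s hs => by
      simp only [min_eq_left hs.2]
    have e2 : EqOn (fun s => b * q s) (fun s => min s b * q s) (Ioi b) := fun s hs => by
      simp only [min_eq_right (le_of_lt (mem_Ioi.mp hs))]
    have i1 : IntegrableOn (fun s => min s b * q s) (Ioc 0 b) :=
      (q_int_Ioc hq hq0 hi).congr_fun e1 measurableSet_Ioc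
    have i2 : IntegrableOn (fun s => min s b * q s) (Ioi b) :=
      IntegrableOn.congr_fun ((q_int_Ioi hq hq0 hi hb).const_mul b) e2 measurableSet_Ioi
    rw [← Ioc_union_Ioi_eq_Ioi hb.le, setIntegral_union Ioc_disjoint_Ioi_same
      measurableSet_Ioi i1 i2, intervalIntegral.integral_of_le hb.le,
      setIntegral_congr_fun measurableSet_Ioc e1, ← integral_const_mul,
      setIntegral_congr_fun measurableSet_Ioi e2]
  have he : (fun t => ∫ s in Ioi (0:ℝ), min s t * q s) =ᶠ[𝓝 t]
      fun b => (∫ s in (0:ℝ)..b, s * q s) + b * ∫ s in Ioi b, q s := by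
    filter_upwards [lt_mem_nhds ht] with b hb using hspl b hb
  have hc : ContinuousOn (fun s => s * q s) (Ioi 0) := continuousOn_id.mul hq
  have hd : HasDerivAt (fun t => ∫ s in (0:ℝ)..t, s * q s) (t * q t) t := by
    apply intervalIntegral.integral_hasDerivAt_right
    · rw [intervalIntegrable_iff_integrableOn_Ioc_of_le ht.le]
      exact q_int_Ioc hq hq0 hi
    · exact hc.stronglyMeasurableAtFilter isOpen_Ioi t ht
    · exact hc.continuousAt (Ioi_mem_nhds ht)
  have h2 := hd.add ((hasDerivAt_id t).mul (q_tail hq hq0 hi ht))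
  refine (h2.congr_of_eventuallyEq he).congr_deriv ?_
  simp

lemma rpow_lip {p a b l : ℝ} (hp : 0 < p) (hl : 1 ≤ l) (ha : l ≤ a) (hb : l ≤ b) :
    |a ^ (-p) - b ^ (-p)| ≤ p / l * |a - b| := by
  have main : ∀ a b : ℝ, l ≤ a → l ≤ b → a ^ (-p) - b ^ (-p) ≤ p / l * |a - b| := by
    intro a b ha hb
    have ha0 : 0 < a := by linarith
    have hb0 : 0 < b := by linarith
    have h := rpow_tangent hp hb0 ha0
    have h1 : a ^ (-p) ≤ 1 := Real.rpow_le_one_of_one_le_of_nonpos (by linarith) (by linarith)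
    have h2 : 0 < a ^ (-p) := Real.rpow_pos_of_pos ha0 _
    have e : a ^ (-p) * (1 - p * (b / a - 1)) = a ^ (-p) - a ^ (-p) * (p / a) * (b - a) := by
      field_simp
    rw [e] at h
    have h3 : a ^ (-p) * (p / a) ≤ 1 * (p / l) := by gcongr
    have h4 : a ^ (-p) * (p / a) * (b - a) ≤ 1 * (p / l) * |a - b| := by
      have h5 : b - a ≤ |a - b| := by rw [abs_sub_comm]; exact le_abs_self _
      calc _ ≤ a ^ (-p) * (p / a) * |a - b| := by gcongr
        _ ≤ _ := by gcongr
    linarith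
  rw [abs_le]
  constructor
  · have := main b a hb ha
    rw [abs_sub_comm] at this
    linarith
  · exact main a b ha hb

open BoundedContinuousFunction in
lemma ode_fix {ψ : ℝ → ℝ} (hψc : ContinuousOn ψ (Ioi 0)) (hψ0 : ∀ s, 0 < s → 0 ≤ ψ s) {p : ℝ}
    (hp : 0 < p) (h_itg : IntegrableOn (fun s => min s 1 * ψ s * (1 + s) ^ (-p)) (Ioi 0)) :
    ∃ (l : ℝ) (y : ℝ → ℝ), 1 ≤ l ∧ Continuous y ∧ (∀ t, l ≤ y t) ∧
      ∀ t, 0 < t → y t = l + ∫ s in Ioi (0:ℝ), min s |t| / (1 + |t|) * (ψ s * (1 + s) ^ (-p) * y s ^ (-p)) := by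
  set Ψ : ℝ → ℝ := fun s => min s 1 * ψ s * (1 + s) ^ (-p) with hΨ
  have hΨ0 : ∀ s, 0 < s → 0 ≤ Ψ s := fun s hs => by
    have := hψ0 s hs
    have : 0 ≤ min s 1 := le_min hs.le zero_le_one
    positivity
  set I := ∫ s in Ioi (0:ℝ), Ψ s with hI
  have hI0 : 0 ≤ I := setIntegral_nonneg measurableSet_Ioi hΨ0
  set l := 1 + 2 * p * I with hl
  have hl1 : 1 ≤ l := by have : 0 ≤ 2 * p * I := by positivity
                         linarith
  have hk : ∀ t s : ℝ, 0 < s → 0 ≤ min s |t| / (1 + |t|) ∧ min s |t| / (1 + |t|) ≤ min s 1 := by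
    intro t s hs
    have h0 := abs_nonneg t
    have h1 : 0 ≤ min s |t| := le_min hs.le h0
    refine ⟨by positivity, le_min ?_ ?_⟩
    · rw [div_le_iff₀ (by positivity)]
      nlinarith [min_le_left s |t|]
    · rw [div_le_one (by positivity)]
      linarith [min_le_right s |t|]
  have hmx : ∀ z : ℝ, 0 ≤ max z l ^ (-p) ∧ max z l ^ (-p) ≤ 1 := fun z =>
    ⟨Real.rpow_nonneg (le_trans (by linarith) (le_max_right z l)) _,
      Real.rpow_le_one_of_one_le_of_nonpos (le_trans hl1 (le_max_right z l)) (by linarith)⟩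
  -- integrand
  set K : (ℝ → ℝ) → ℝ → ℝ → ℝ := fun y t s =>
    min s |t| / (1 + |t|) * (ψ s * (1 + s) ^ (-p) * max (y s) l ^ (-p)) with hK
  have hKb : ∀ y t s, 0 < s → ‖K y t s‖ ≤ Ψ s := by
    intro y t s hs
    have h1 := hk t s hs
    have h2 := hmx (y s)
    have h3 := hψ0 s hs
    have h4 : 0 ≤ (1 + s) ^ (-p) := by positivity
    have h5 : 0 ≤ min s 1 := le_min hs.le zero_le_one
    rw [Real.norm_of_nonneg (mul_nonneg h1.1 (mul_nonneg (mul_nonneg h3 h4) h2.1))]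
    calc K y t s ≤ min s 1 * (ψ s * (1 + s) ^ (-p) * 1) := by
          apply mul_le_mul h1.2 _ (mul_nonneg (mul_nonneg h3 h4) h2.1) h5
          exact mul_le_mul_of_nonneg_left h2.2 (mul_nonneg h3 h4)
      _ = Ψ s := by rw [hΨ]; ring
  have hKm : ∀ y : ℝ → ℝ, Continuous y → ∀ t,
      AEStronglyMeasurable (K y t) (volume.restrict (Ioi 0)) := by
    intro y hy t
    apply ContinuousOn.aestronglyMeasurable _ measurableSet_Ioi
    apply ContinuousOn.mul (by fun_prop)
    apply ContinuousOn.mul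
    · apply hψc.mul
      exact ContinuousOn.rpow_const (by fun_prop) (fun s hs => Or.inl (by
        have : 0 < s := hs
        linarith))
    · refine Continuous.continuousOn (Continuous.rpow_const (by fun_prop) fun s => Or.inl ?_)
      have := le_max_right (y s) l
      linarith
  have hKi : ∀ y : ℝ → ℝ, Continuous y → ∀ t, IntegrableOn (K y t) (Ioi 0) := fun y hy t =>
    Integrable.mono' h_itg (hKm y hy t)
      (ae_restrict_of_forall_mem measurableSet_Ioi fun s hs => hKb y t s hs)
  have hTc : ∀ y : ℝ → ℝ, Continuous y → Continuous fun t => l + ∫ s in Ioi (0:ℝ), K y t s := by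
    intro y hy
    apply continuous_const.add
    apply continuous_of_dominated (bound := Ψ) (hKm y hy)
    · exact fun t => ae_restrict_of_forall_mem measurableSet_Ioi fun s hs => hKb y t s hs
    · exact h_itg
    · refine Eventually.of_forall fun s => ?_
      have : ∀ t : ℝ, 1 + |t| ≠ 0 := fun t => by positivity
      simp only [hK]
      fun_prop (disch := exact this _)
  have hTb : ∀ y : ℝ → ℝ, ∀ t, ‖l + ∫ s in Ioi (0:ℝ), K y t s‖ ≤ l + I := by
    intro y t
    refine (norm_add_le _ _).trans ?_
    rw [Real.norm_of_nonneg (by linarith : (0:ℝ) ≤ l)]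
    gcongr
    exact norm_integral_le_of_norm_le h_itg
      (ae_restrict_of_forall_mem measurableSet_Ioi fun s hs => hKb y t s hs)
  let T : (ℝ →ᵇ ℝ) → (ℝ →ᵇ ℝ) := fun y =>
    BoundedContinuousFunction.ofNormedAddCommGroup (fun t => l + ∫ s in Ioi (0:ℝ), K y t s)
      (hTc y y.continuous) (l + I) (hTb y)
  have hT : ContractingWith (1 / 2 : NNReal) T := by
    refine ⟨by rw [← NNReal.coe_lt_coe]; norm_num, ?_⟩
    apply LipschitzWith.of_dist_le_mul
    intro y z
    rw [BoundedContinuousFunction.dist_le (by positivity)]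
    intro t
    show dist (l + ∫ s in Ioi (0:ℝ), K y t s) (l + ∫ s in Ioi (0:ℝ), K z t s) ≤ _
    rw [dist_add_left, dist_eq_norm, ← integral_sub (hKi y y.continuous t) (hKi z z.continuous t)]
    have hb : ∀ s, 0 < s → ‖K y t s - K z t s‖ ≤ (p / l * dist y z) * Ψ s := by
      intro s hs
      have h1 := hk t s hs
      have h3 := hψ0 s hs
      have h4 : 0 ≤ (1 + s) ^ (-p) := by positivity
      have h5 : 0 ≤ min s 1 := le_min hs.le zero_le_one
      have e : K y t s - K z t s = min s |t| / (1 + |t|) * (ψ s * (1 + s) ^ (-p)) *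
          (max (y s) l ^ (-p) - max (z s) l ^ (-p)) := by simp only [hK]; ring
      have h6 := rpow_lip hp hl1 (le_max_right (y s) l) (le_max_right (z s) l)
      have h7 : |max (y s) l - max (z s) l| ≤ dist y z := by
        refine (abs_max_sub_max_le_abs _ _ _).trans ?_
        rw [← Real.dist_eq]
        exact BoundedContinuousFunction.dist_coe_le_dist s
      rw [e, norm_mul, Real.norm_of_nonneg (mul_nonneg h1.1 (mul_nonneg h3 h4)), Real.norm_eq_abs]
      calc _ ≤ min s 1 * (ψ s * (1 + s) ^ (-p)) * (p / l * dist y z) := by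
            apply mul_le_mul _ _ (abs_nonneg _) (mul_nonneg h5 (mul_nonneg h3 h4))
            · exact mul_le_mul_of_nonneg_right h1.2 (mul_nonneg h3 h4)
            · refine h6.trans ?_
              gcongr
        _ = _ := by rw [hΨ]; ring
    refine (norm_integral_le_of_norm_le (h_itg.const_mul _)
      (ae_restrict_of_forall_mem measurableSet_Ioi hb)).trans ?_
    rw [integral_const_mul, ← hI]
    have : p / l * I ≤ 1 / 2 := by
      rw [div_mul_eq_mul_div, div_le_iff₀ (by linarith), hl]
      linarith
    have hd : 0 ≤ dist y z := dist_nonneg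
    push_cast
    calc p / l * dist y z * I = (p / l * I) * dist y z := by ring
      _ ≤ _ := by gcongr
  obtain ⟨y, hy⟩ : ∃ y, T y = y := ⟨_, hT.fixedPoint_isFixedPt⟩
  have hy1 : ∀ t, y t = l + ∫ s in Ioi (0:ℝ), K y t s := fun t => by
    conv_lhs => rw [← hy]
    rfl
  have hyl : ∀ t, l ≤ y t := by
    intro t
    rw [hy1 t]
    have : 0 ≤ ∫ s in Ioi (0:ℝ), K y t s := by
      apply setIntegral_nonneg measurableSet_Ioi
      intro s hs
      have hs : 0 < s := hs
      exact mul_nonneg (hk t s hs).1 (mul_nonneg (mul_nonneg (hψ0 s hs) (by positivity)) (hmx _).1)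
    linarith
  refine ⟨l, y, hl1, y.continuous, hyl, fun t _ => ?_⟩
  rw [hy1 t]
  simp only [hK, max_eq_left (hyl _)]

lemma ode_exists {ψ : ℝ → ℝ} (hψc : ContinuousOn ψ (Ioi 0)) (hψ0 : ∀ s, 0 < s → 0 ≤ ψ s) {p : ℝ}
    (hp : 0 < p) (h_itg : IntegrableOn (fun s => min s 1 * ψ s * (1 + s) ^ (-p)) (Ioi 0)) :
    ∃ w w1 : ℝ → ℝ, (∀ t, 0 < t → 0 < w t) ∧ (∀ t, 0 < t → HasDerivAt w (w1 t) t) ∧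
      ∀ t, 0 < t → HasDerivAt w1 (-(ψ t * w t ^ (-p))) t := by
  obtain ⟨l, y, hl, hyc, hyl, hy⟩ := ode_fix hψc hψ0 hp h_itg
  set q : ℝ → ℝ := fun s => ψ s * (1 + s) ^ (-p) * y s ^ (-p) with hq
  have hy0 : ∀ t, 0 < y t := fun t => by linarith [hyl t]
  have hqc : ContinuousOn q (Ioi 0) := by
    apply ContinuousOn.mul
    · apply hψc.mul
      exact ContinuousOn.rpow_const (by fun_prop) (fun s hs => Or.inl (by
        have : 0 < s := hs
        linarith))
    · exact (hyc.rpow_const fun s => Or.inl (hy0 s).ne').continuousOn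
  have hq0 : ∀ s, 0 < s → 0 ≤ q s := fun s hs => by
    have := hψ0 s hs
    have := hy0 s
    positivity
  have hqi : IntegrableOn (fun s => min s 1 * q s) (Ioi 0) := by
    refine Integrable.mono' h_itg (ContinuousOn.aestronglyMeasurable
      (ContinuousOn.mul (by fun_prop) hqc) measurableSet_Ioi) ?_
    refine ae_restrict_of_forall_mem measurableSet_Ioi fun s hs => ?_
    have hs : 0 < s := hs
    have h5 : 0 ≤ min s 1 := le_min hs.le zero_le_one
    have h3 := hψ0 s hs
    have h4 : 0 ≤ (1 + s) ^ (-p) := by positivity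
    have h6 : y s ^ (-p) ≤ 1 :=
      Real.rpow_le_one_of_one_le_of_nonpos (hl.trans (hyl s)) (by linarith)
    rw [Real.norm_of_nonneg (mul_nonneg h5 (hq0 s hs))]
    calc min s 1 * q s = (min s 1 * ψ s * (1 + s) ^ (-p)) * y s ^ (-p) := by rw [hq]; ring
      _ ≤ (min s 1 * ψ s * (1 + s) ^ (-p)) * 1 :=
        mul_le_mul_of_nonneg_left h6 (mul_nonneg (mul_nonneg h5 h3) h4)
      _ = _ := by ring
  have hw : ∀ t, 0 < t → (1 + t) * y t = l * (1 + t) + ∫ s in Ioi (0:ℝ), min s t * q s := by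
    intro t ht
    rw [hy t ht, abs_of_pos ht, mul_add, ← integral_const_mul]
    congr 1
    · ring
    · congr 1; ext s
      simp only [hq]
      have : 1 + t ≠ 0 := by positivity
      field_simp
  refine ⟨fun t => (1 + t) * y t, fun t => l + ∫ s in Ioi t, q s, ?_, ?_, ?_⟩
  · intro t ht
    have := hy0 t
    positivity
  · intro t ht
    have he : (fun t => (1 + t) * y t) =ᶠ[𝓝 t]
        fun t => l * (1 + t) + ∫ s in Ioi (0:ℝ), min s t * q s := by
      filter_upwards [lt_mem_nhds ht] with b hb using hw b hb
    have h1 : HasDerivAt (fun t : ℝ => l * (1 + t)) l t := by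
      simpa using ((hasDerivAt_id t).const_add 1).const_mul l
    exact (h1.add (q_green hqc hq0 hqi ht)).congr_of_eventuallyEq he
  · intro t ht
    refine ((q_tail hqc hq0 hqi ht).const_add l).congr_deriv ?_
    simp only [hq]
    rw [Real.mul_rpow (by positivity) (hy0 t).le]
    ring
end

open Metric Set MeasureTheory Filter
open scoped Topology
section
variable {N : ℕ}

noncomputable def psi (N : ℕ) (α β : ℝ) (s : ℝ) : ℝ :=
  rad N s ^ (2 * ((N:ℝ) - 1)) * (rad N s ^ α * Real.log (1 + rad N s) ^ β) / ((N:ℝ) - 2) ^ 2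

lemma psi_nonneg (hN : 3 ≤ N) {α β s : ℝ} (hs : 0 < s) : 0 ≤ psi N α β s := by
  have h := phi_pos (α := α) (β := β) (rad_pos (N := N) hs)
  have := rad_pos (N := N) hs
  have := nn_pos hN
  unfold psi
  positivity

lemma psi_cont (hN : 3 ≤ N) (α β : ℝ) : ContinuousOn (psi N α β) (Ioi 0) := by
  have hr : ContinuousOn (rad N) (Ioi 0) := fun s hs =>
    (rad_deriv hN hs).continuousAt.continuousWithinAt
  have hl : ContinuousOn (fun s => Real.log (1 + rad N s)) (Ioi 0) :=
    (continuousOn_const.add hr).log fun s hs => by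
      have := rad_pos (N := N) hs
      exact (by linarith : (0:ℝ) < 1 + rad N s).ne'
  unfold psi
  refine ((hr.rpow_const fun s hs => Or.inl (rad_pos hs).ne').mul
    ((hr.rpow_const fun s hs => Or.inl (rad_pos hs).ne').mul
      (hl.rpow_const fun s hs => Or.inl ?_))).div_const _
  have := rad_pos (N := N) hs
  exact (Real.log_pos (by linarith)).ne'

lemma psi_int (hN : 3 ≤ N) {α β p : ℝ} (hβ : 0 < β) (hp : 0 < p)
    (h1 : 0 < (N:ℝ) + α + β + p * ((N:ℝ) - 2)) (h2 : α < -2) :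
    IntegrableOn (fun s => min s 1 * psi N α β s * (1 + s) ^ (-p)) (Ioi 0) := by
  have hn := nn_pos hN
  have hc : ContinuousOn (fun s => min s 1 * psi N α β s * (1 + s) ^ (-p)) (Ioi 0) := by
    refine ((continuous_id.min continuous_const).continuousOn.mul (psi_cont hN α β)).mul
      ((continuousOn_const.add continuousOn_id).rpow_const fun s hs => Or.inl ?_)
    have : (0:ℝ) < s := hs
    exact (by linarith : (0:ℝ) < 1 + s).ne'
  rw [← Ioc_union_Ioi_eq_Ioi (zero_le_one' ℝ)]
  refine IntegrableOn.union ?_ ?_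
  · set ε : ℝ := (-2 - α) / (2 * β) with hε
    have hε0 : 0 < ε := by
      apply div_pos <;> linarith
    set a : ℝ := 1 + (2 + α) / 2 / ((N:ℝ) - 2) with ha
    have hA : IntegrableOn (fun s : ℝ => ((2 ^ ε / ε) ^ β / ((N:ℝ) - 2) ^ 2) * s ^ (-a))
        (Ioc 0 1) := by
      have : IntervalIntegrable (fun s : ℝ => s ^ (-a)) volume 0 1 := by
        apply intervalIntegral.intervalIntegrable_rpow'
        have : (2 + α) / 2 / ((N:ℝ) - 2) < 0 := div_neg_of_neg_of_pos (by linarith) hn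
        linarith
      rw [intervalIntegrable_iff_integrableOn_Ioc_of_le zero_le_one] at this
      exact this.const_mul _
    refine Integrable.mono' hA ((hc.mono fun s hs => hs.1).aestronglyMeasurable
      measurableSet_Ioc) (ae_restrict_of_forall_mem measurableSet_Ioc fun s hs => ?_)
    have hs0 : 0 < s := hs.1
    have hψ := psi_nonneg (α := α) (β := β) hN hs0
    have hr0 := rad_pos (N := N) hs0
    have hr1 : 1 ≤ rad N s := Real.one_le_rpow_of_pos_of_le_one_of_nonpos hs0 hs.2 (by
      have : 0 < 1 / ((N:ℝ) - 2) := by positivity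
      linarith)
    rw [Real.norm_of_nonneg (by positivity), min_eq_left hs.2]
    have hp1 : (1 + s) ^ (-p) ≤ 1 :=
      Real.rpow_le_one_of_one_le_of_nonpos (by linarith) (by linarith)
    have hs' : s = rad N s ^ (-((N:ℝ) - 2)) := by
      have := rad_rpow hN hs0 (-1)
      rw [neg_neg, Real.rpow_one] at this
      rw [mul_neg_one] at this; exact this.symm
    have hlog0 : 0 < Real.log (1 + rad N s) := Real.log_pos (by linarith)
    have hlog : Real.log (1 + rad N s) ^ β ≤ (2 ^ ε / ε) ^ β * rad N s ^ (ε * β) := by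
      rw [Real.rpow_mul hr0.le, ← Real.mul_rpow (by positivity) (by positivity)]
      apply Real.rpow_le_rpow hlog0.le _ hβ.le
      calc _ ≤ (1 + rad N s) ^ ε / ε := Real.log_le_rpow_div (by linarith) hε0
        _ ≤ (2 * rad N s) ^ ε / ε := by gcongr; linarith
        _ = _ := by rw [Real.mul_rpow (by norm_num) hr0.le]; ring
    calc s * psi N α β s * (1 + s) ^ (-p) ≤ s * psi N α β s * 1 := by gcongr
      _ = rad N s ^ (-((N:ℝ) - 2)) * psi N α β s := by rw [← hs', mul_one]
      _ ≤ rad N s ^ (-((N:ℝ) - 2)) * (rad N s ^ (2 * ((N:ℝ) - 1)) * (rad N s ^ α *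
          ((2 ^ ε / ε) ^ β * rad N s ^ (ε * β))) / ((N:ℝ) - 2) ^ 2) := by
        unfold psi; gcongr
      _ = ((2 ^ ε / ε) ^ β / ((N:ℝ) - 2) ^ 2) * (rad N s ^ (-((N:ℝ) - 2)) *
          rad N s ^ (2 * ((N:ℝ) - 1)) * rad N s ^ α * rad N s ^ (ε * β)) := by ring
      _ = _ := by
        rw [← Real.rpow_add hr0, ← Real.rpow_add hr0, ← Real.rpow_add hr0, ← rad_rpow hN hs0]
        congr 2
        rw [ha, hε]; field_simp; ring
  · set κ : ℝ := (N:ℝ) + α + β + p * ((N:ℝ) - 2) with hκ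
    set a : ℝ := 1 + κ / ((N:ℝ) - 2) with ha
    have hA : IntegrableOn (fun s : ℝ => (1 / ((N:ℝ) - 2) ^ 2) * s ^ (-a)) (Ioi 1) := by
      refine (integrableOn_Ioi_rpow_of_lt ?_ one_pos).const_mul _
      have : 0 < κ / ((N:ℝ) - 2) := by positivity
      linarith
    refine Integrable.mono' hA ((hc.mono (Ioi_subset_Ioi zero_le_one)).aestronglyMeasurable
      measurableSet_Ioi) (ae_restrict_of_forall_mem measurableSet_Ioi fun s hs => ?_)
    have hs1 : 1 < s := hs
    have hs0 : 0 < s := by linarith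
    have hψ := psi_nonneg (α := α) (β := β) hN hs0
    have hr0 := rad_pos (N := N) hs0
    rw [Real.norm_of_nonneg (by positivity), min_eq_right hs1.le]
    have hp1 : (1 + s) ^ (-p) ≤ s ^ (-p) :=
      Real.rpow_le_rpow_of_nonpos hs0 (by linarith) (by linarith)
    have hlog0 : 0 < Real.log (1 + rad N s) := Real.log_pos (by linarith)
    have hlog : Real.log (1 + rad N s) ≤ rad N s := by
      have := Real.log_le_sub_one_of_pos (x := 1 + rad N s) (by linarith)
      linarith
    calc 1 * psi N α β s * (1 + s) ^ (-p) ≤ 1 * psi N α β s * s ^ (-p) := by gcongr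
      _ ≤ (rad N s ^ (2 * ((N:ℝ) - 1)) * (rad N s ^ α * rad N s ^ β) / ((N:ℝ) - 2) ^ 2)
          * s ^ (-p) := by
        unfold psi; rw [one_mul]; gcongr
      _ = (1 / ((N:ℝ) - 2) ^ 2) * (rad N s ^ (2 * ((N:ℝ) - 1)) * rad N s ^ α * rad N s ^ β *
          rad N s ^ (((N:ℝ) - 2) * p)) := by rw [rad_rpow hN hs0]; ring
      _ = _ := by
        rw [← Real.rpow_add hr0, ← Real.rpow_add hr0, ← Real.rpow_add hr0, ← rad_rpow hN hs0]
        congr 2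
        rw [ha, hκ]; field_simp; ring

lemma existence (hN : 3 ≤ N) {α β p : ℝ} (hβ : 0 < β) (hp : 0 < p)
    (h1 : 0 < (N:ℝ) + α + β + p * ((N:ℝ) - 2)) (h2 : α < -2) :
    ∃ u : EE N → ℝ, IsSol (fun r => r ^ α * Real.log (1 + r) ^ β) p u := by
  obtain ⟨w, w1, hw0, hw, hw1⟩ := ode_exists (psi_cont hN α β)
    (fun s hs => psi_nonneg hN hs) hp (psi_int hN hβ hp h1 h2)
  have hn := nn_pos hN
  have hwc : ContinuousOn w (Ioi 0) := fun t ht => (hw t ht).continuousAt.continuousWithinAt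
  have hcd1 : ContDiffOn ℝ 1 w1 (Ioi 0) := by
    rw [show (1 : WithTop ℕ∞) = 0 + 1 by norm_num, contDiffOn_succ_iff_deriv_of_isOpen isOpen_Ioi]
    refine ⟨fun t ht => (hw1 t ht).differentiableAt.differentiableWithinAt, by simp, ?_⟩
    rw [contDiffOn_zero]
    refine ContinuousOn.congr (f := fun t => -(psi N α β t * w t ^ (-p))) ?_
      fun t ht => (hw1 t ht).deriv
    exact ((psi_cont hN α β).mul (hwc.rpow_const fun t ht => Or.inl (hw0 t ht).ne')).neg
  have hcd : ContDiffOn ℝ 2 w (Ioi 0) := by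
    rw [show (2 : WithTop ℕ∞) = 1 + 1 by norm_num, contDiffOn_succ_iff_deriv_of_isOpen isOpen_Ioi]
    refine ⟨fun t ht => (hw t ht).differentiableAt.differentiableWithinAt, by simp, ?_⟩
    exact hcd1.congr fun t ht => (hw t ht).deriv
  have hat : ∀ x : EE N, x ≠ 0 → ContDiffAt ℝ 2 w (tau x) := fun x hx =>
    hcd.contDiffAt (Ioi_mem_nhds (tau_pos hx))
  refine ⟨fun x => w (tau x), fun x hx =>
    ((hat x hx).comp x (tau_cd hx)).contDiffWithinAt, fun x hx => ⟨hw0 _ (tau_pos hx), ?_⟩⟩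
  have ht := tau_pos hx
  rw [lap_comp (tau_cd hx) (hat x hx)
    (by filter_upwards [lt_mem_nhds ht] with s hs using hw s hs) (hw1 _ ht),
    tau_lap hx, tau_grad hx, psi, rad_tau hN hx]
  have hx0 := norm_pos_iff.mpr hx
  rw [Real.rpow_neg hx0.le]
  have : 0 < ‖x‖ ^ (2 * ((N:ℝ) - 1)) := by positivity
  field_simp
  ring
end

/-- Corollary 4.4: for `φ(r) = r^α log^β(1+r)`, the equation `-Δu = φ(|x|) u^{-p}` has
solutions iff `N + α + β + p(N-2) > 0` and `α < -2`; in that case every solution is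
radially symmetric. -/
theorem statement_18 {N : ℕ} (hN : 3 ≤ N) (α : ℝ) (β p : ℝ) (hβ : 0 < β) (hp : 0 < p) :
    ((∃ u : EuclideanSpace ℝ (Fin N) → ℝ,
        IsSol (fun r => r ^ α * Real.log (1 + r) ^ β) p u) ↔
      (0 < (N:ℝ) + α + β + p * ((N:ℝ) - 2) ∧ α < -2)) ∧
    ((0 < (N:ℝ) + α + β + p * ((N:ℝ) - 2) ∧ α < -2) →
      ∀ u : EuclideanSpace ℝ (Fin N) → ℝ,
        IsSol (fun r => r ^ α * Real.log (1 + r) ^ β) p u →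
        ∀ x y : EuclideanSpace ℝ (Fin N), x ≠ 0 → y ≠ 0 → ‖x‖ = ‖y‖ → u x = u y) := by
  refine ⟨⟨fun ⟨u, hu⟩ => necessity hN hβ hp hu, fun h => existence hN hβ hp h.1 h.2⟩, ?_⟩
  intro _ u hu x y hx _ hxy
  exact symmetry hN (fun r hr => phi_pos hr) hp hu hx hxy
end

section
/- Let N ≥ 3 and p > 0, and let φ : (0,∞) → (0,∞) be continuous with ∫₁^∞ r·φ(r) dr < ∞. Define D(r) = ∫_r^∞ t^{1−N} (∫₁^t s^{N−1} φ(s) ds) dt for r ≥ 1, and set u(x) = ((p+1) D(|x|))^{1/(p+1)} for |x| > 1. Then D(r) is finite and positive for every r ≥ 1, u is a twice continuously differentiable positive function on {x ∈ ℝ^N : |x| > 1} satisfying −Δu(x) ≥ φ(|x|) u(x)^{−p} for all |x| > 1, and u(x) → 0 as |x| → ∞. -/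
open Metric Set MeasureTheory Filter

lemma aux_hasFDerivAt_norm {N : ℕ} (x : EuclideanSpace ℝ (Fin N)) (hx : 0 < ‖x‖) :
    HasFDerivAt (fun y : EuclideanSpace ℝ (Fin N) => ‖y‖) ((1 / ‖x‖) • innerSL ℝ x) x := by
  have h1 := (hasStrictFDerivAt_norm_sq x).hasFDerivAt
  have h2 := h1.sqrt (by positivity)
  have e : (fun y : EuclideanSpace ℝ (Fin N) => √(‖y‖ ^ 2)) = fun y => ‖y‖ := by
    funext y; exact Real.sqrt_sq (norm_nonneg y)
  rw [e, Real.sqrt_sq (norm_nonneg x)] at h2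
  refine h2.congr_fderiv ?_
  ext v
  simp
  field_simp

lemma aux_fderiv_radial {N : ℕ} (w : ℝ → ℝ) (w' : ℝ) (x : EuclideanSpace ℝ (Fin N))
    (hx : 0 < ‖x‖) (h : HasDerivAt w w' ‖x‖) :
    HasFDerivAt (fun y : EuclideanSpace ℝ (Fin N) => w ‖y‖)
      ((w' / ‖x‖) • innerSL ℝ x) x := by
  have := h.comp_hasFDerivAt x (aux_hasFDerivAt_norm x hx)
  refine HasFDerivAt.congr_fderiv (f := fun y : EuclideanSpace ℝ (Fin N) => w ‖y‖) this ?_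
  rw [smul_smul]; congr 1; ring

lemma aux_laplacian_radial {N : ℕ} (w w1 w2 : ℝ → ℝ)
    (h1 : ∀ r, 1 < r → HasDerivAt w (w1 r) r) (h2 : ∀ r, 1 < r → HasDerivAt w1 (w2 r) r)
    (x : EuclideanSpace ℝ (Fin N)) (hx : 1 < ‖x‖) :
    laplacian (fun y : EuclideanSpace ℝ (Fin N) => w ‖y‖) x
      = w2 ‖x‖ + ((N : ℝ) - 1) / ‖x‖ * w1 ‖x‖ := by
  have hx0 : 0 < ‖x‖ := by linarith
  have hev : ∀ᶠ y in nhds x, 1 < ‖y‖ :=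
    continuous_norm.continuousAt.eventually (lt_mem_nhds hx)
  have hf : fderiv ℝ (fun y : EuclideanSpace ℝ (Fin N) => w ‖y‖) =ᶠ[nhds x]
      fun y => (w1 ‖y‖ / ‖y‖) • innerSL ℝ y := by
    filter_upwards [hev] with y hy
    exact (aux_fderiv_radial w _ y (by linarith) (h1 _ hy)).fderiv
  have hc : HasDerivAt (fun r => w1 r / r) ((w2 ‖x‖ * ‖x‖ - w1 ‖x‖ * 1) / ‖x‖ ^ 2) ‖x‖ :=
    (h2 _ hx).div (hasDerivAt_id _) hx0.ne'
  have hc' := aux_fderiv_radial (fun r => w1 r / r) _ x hx0 hc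
  have hL : HasFDerivAt (fun y : EuclideanSpace ℝ (Fin N) => innerSL ℝ y) (innerSL ℝ) x :=
    (innerSL ℝ (E := EuclideanSpace ℝ (Fin N))).hasFDerivAt
  have h3 := hc'.smul hL
  have h4 : fderiv ℝ (fderiv ℝ (fun y : EuclideanSpace ℝ (Fin N) => w ‖y‖)) x = _ :=
    (h3.congr_of_eventuallyEq hf).fderiv
  unfold laplacian
  have hs := EuclideanSpace.real_norm_sq_eq x
  have : ∀ i : Fin N, fderiv ℝ (fderiv ℝ (fun y : EuclideanSpace ℝ (Fin N) => w ‖y‖)) x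
      (EuclideanSpace.single i 1) (EuclideanSpace.single i 1) = w1 ‖x‖ / ‖x‖ +
      (w2 ‖x‖ * ‖x‖ - w1 ‖x‖) / ‖x‖ ^ 2 / ‖x‖ * (x i) ^ 2 := by
    intro i
    refine (DFunLike.congr_fun (DFunLike.congr_fun h4 (EuclideanSpace.single i 1))
      (EuclideanSpace.single i 1)).trans ?_
    change (w1 ‖x‖ / ‖x‖) * inner ℝ (EuclideanSpace.single i (1:ℝ)) (EuclideanSpace.single i (1:ℝ))
      + (((w2 ‖x‖ * ‖x‖ - w1 ‖x‖ * 1) / ‖x‖ ^ 2 / ‖x‖) * inner ℝ x (EuclideanSpace.single i (1:ℝ)))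
        * inner ℝ x (EuclideanSpace.single i (1:ℝ)) = _
    simp [EuclideanSpace.inner_single_right]
    ring
  simp only [iteratedFDeriv_two_apply]
  refine (Finset.sum_congr rfl (fun i _ => this i)).trans ?_
  rw [Finset.sum_add_distrib, ← Finset.mul_sum, ← hs]
  simp
  field_simp
  ring

lemma aux_contDiff (w w1 w2 : ℝ → ℝ)
    (h1 : ∀ r, 1 < r → HasDerivAt w (w1 r) r) (h2 : ∀ r, 1 < r → HasDerivAt w1 (w2 r) r)
    (h3 : ContinuousOn w2 (Ioi 1)) : ContDiffOn ℝ 2 w (Ioi 1) := by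
  have key : ContDiffOn ℝ 1 w1 (Ioi 1) := by
    have := (contDiffOn_succ_iff_deriv_of_isOpen (𝕜 := ℝ) (n := 0) (f := w1) (isOpen_Ioi (a := (1:ℝ)))).2
      ⟨fun r hr => (h2 r hr).differentiableAt.differentiableWithinAt, by simp,
        contDiffOn_zero.2 (h3.congr fun r hr => (h2 r hr).deriv)⟩
    simpa using this
  have := (contDiffOn_succ_iff_deriv_of_isOpen (𝕜 := ℝ) (n := 1) (f := w) (isOpen_Ioi (a := (1:ℝ)))).2
      ⟨fun r hr => (h1 r hr).differentiableAt.differentiableWithinAt, by simp,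
        (key.congr fun r hr => (h1 r hr).deriv)⟩
  rwa [one_add_one_eq_two] at this

section one_dim

variable {N : ℕ} (φ : ℝ → ℝ)

lemma aux_cont_integrand (hφcont : ContinuousOn φ (Ioi (0:ℝ))) :
    ContinuousOn (fun s : ℝ => s ^ ((N:ℝ) - 1) * φ s) (Ioi 0) :=
  (ContinuousOn.rpow_const continuousOn_id fun _ hx => Or.inl (ne_of_gt hx)).mul hφcont

lemma aux_A_deriv (hφcont : ContinuousOn φ (Ioi (0:ℝ))) (t : ℝ) (ht : 0 < t) :
    HasDerivAt (fun t => ∫ s in (1:ℝ)..t, s ^ ((N:ℝ) - 1) * φ s) (t ^ ((N:ℝ) - 1) * φ t) t := by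
  have hc := aux_cont_integrand (N := N) φ hφcont
  have hsub : uIcc 1 t ⊆ Ioi 0 := fun y hy => lt_of_lt_of_le (lt_min one_pos ht) hy.1
  exact intervalIntegral.integral_hasDerivAt_right ((hc.mono hsub).intervalIntegrable)
    (hc.stronglyMeasurableAtFilter isOpen_Ioi t ht) (hc.continuousAt (Ioi_mem_nhds ht))

lemma aux_A_pos (hφcont : ContinuousOn φ (Ioi (0:ℝ))) (hφpos : ∀ r : ℝ, 0 < r → 0 < φ r)
    (t : ℝ) (ht : 1 < t) : 0 < ∫ s in (1:ℝ)..t, s ^ ((N:ℝ) - 1) * φ s := by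
  have hc := aux_cont_integrand (N := N) φ hφcont
  have hsub : uIcc 1 t ⊆ Ioi 0 := fun y hy => lt_of_lt_of_le (lt_min one_pos (by linarith)) hy.1
  refine intervalIntegral.intervalIntegral_pos_of_pos_on ((hc.mono hsub).intervalIntegrable) ?_ ht
  intro s hs
  have : 0 < s := by linarith [hs.1]
  exact mul_pos (Real.rpow_pos_of_pos this _) (hφpos s this)

lemma aux_g_deriv (hφcont : ContinuousOn φ (Ioi (0:ℝ))) (t : ℝ) (ht : 0 < t) :
    HasDerivAt (fun t : ℝ => t ^ (1 - (N:ℝ)) * ∫ s in (1:ℝ)..t, s ^ ((N:ℝ) - 1) * φ s)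
      (φ t - ((N:ℝ) - 1) / t * (t ^ (1 - (N:ℝ)) * ∫ s in (1:ℝ)..t, s ^ ((N:ℝ) - 1) * φ s)) t := by
  have h := (Real.hasDerivAt_rpow_const (p := 1 - (N:ℝ)) (Or.inl ht.ne')).mul
    (aux_A_deriv (N := N) φ hφcont t ht)
  refine h.congr_deriv ?_
  have e1 : t ^ (1 - (N:ℝ)) * t ^ ((N:ℝ) - 1) = 1 := by
    rw [← Real.rpow_add ht]; simp
  rw [Real.rpow_sub_one ht.ne', ← mul_assoc, e1]
  ring

lemma aux_h_deriv (hφcont : ContinuousOn φ (Ioi (0:ℝ))) (t : ℝ) (ht : 0 < t) :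
    HasDerivAt (fun t : ℝ => t * (t ^ (1 - (N:ℝ)) * ∫ s in (1:ℝ)..t, s ^ ((N:ℝ) - 1) * φ s))
      (t * φ t - ((N:ℝ) - 2) * (t ^ (1 - (N:ℝ)) * ∫ s in (1:ℝ)..t, s ^ ((N:ℝ) - 1) * φ s)) t := by
  refine ((hasDerivAt_id t).mul (aux_g_deriv (N := N) φ hφcont t ht)).congr_deriv ?_
  simp only [id]
  field_simp
  ring

lemma aux_g_cont (hφcont : ContinuousOn φ (Ioi (0:ℝ))) :
    ContinuousOn (fun t : ℝ => t ^ (1 - (N:ℝ)) * ∫ s in (1:ℝ)..t, s ^ ((N:ℝ) - 1) * φ s)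
      (Ioi 0) :=
  fun t ht => (aux_g_deriv φ hφcont t ht).continuousAt.continuousWithinAt

lemma aux_g_pos (hφcont : ContinuousOn φ (Ioi (0:ℝ))) (hφpos : ∀ r : ℝ, 0 < r → 0 < φ r)
    (t : ℝ) (ht : 1 < t) :
    0 < t ^ (1 - (N:ℝ)) * ∫ s in (1:ℝ)..t, s ^ ((N:ℝ) - 1) * φ s :=
  mul_pos (Real.rpow_pos_of_pos (by linarith) _) (aux_A_pos φ hφcont hφpos t ht)

lemma aux_g_int (hN : 3 ≤ N) (hφcont : ContinuousOn φ (Ioi (0:ℝ)))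
    (hφpos : ∀ r : ℝ, 0 < r → 0 < φ r)
    (hφint : IntegrableOn (fun r : ℝ => r * φ r) (Ioi (1:ℝ)) volume) :
    IntegrableOn (fun t : ℝ => t ^ (1 - (N:ℝ)) * ∫ s in (1:ℝ)..t, s ^ ((N:ℝ) - 1) * φ s)
      (Ioi 1) volume := by
  have hN' : (3:ℝ) ≤ N := by exact_mod_cast hN
  have hd := aux_h_deriv (N := N) φ hφcont
  have hgc := aux_g_cont (N := N) φ hφcont
  have hgp := aux_g_pos (N := N) φ hφcont hφpos
  set g : ℝ → ℝ := fun t : ℝ => t ^ (1 - (N:ℝ)) * ∫ s in (1:ℝ)..t, s ^ ((N:ℝ) - 1) * φ s with hg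
  have hsub : ∀ t : ℝ, 1 ≤ t → uIcc 1 t ⊆ Ioi 0 :=
    fun t ht y hy => lt_of_lt_of_le (lt_min one_pos (by linarith)) hy.1
  have hrc : ContinuousOn (fun r => r * φ r) (Ioi 0) := continuousOn_id.mul hφcont
  have hg1 : g 1 = 0 := by simp [hg]
  have hg0 : ∀ t, 1 ≤ t → 0 ≤ g t := by
    intro t ht
    rcases ht.eq_or_lt with rfl | h
    · exact hg1.ge
    · exact (hgp t h).le
  refine integrableOn_Ioi_of_intervalIntegral_norm_bounded (l := atTop) (b := fun t : ℝ => t)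
    (∫ r in Ioi (1:ℝ), r * φ r) 1 ?_ tendsto_id ?_
  · intro t
    rcases le_total t 1 with h | h
    · simp [Ioc_eq_empty_of_le h]
    · exact (intervalIntegrable_iff_integrableOn_Ioc_of_le h).1
        (hgc.mono (hsub t h)).intervalIntegrable
  · filter_upwards [eventually_ge_atTop 1] with t ht
    have i1 : IntervalIntegrable (fun r => r * φ r) volume 1 t :=
      (hrc.mono (hsub t ht)).intervalIntegrable
    have i2 : IntervalIntegrable g volume 1 t := (hgc.mono (hsub t ht)).intervalIntegrable
    have hftc := intervalIntegral.integral_eq_sub_of_hasDerivAt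
      (fun x hx => hd x (hsub t ht hx)) (i1.sub (i2.const_mul ((N:ℝ) - 2)))
    rw [intervalIntegral.integral_sub i1 (i2.const_mul _),
      intervalIntegral.integral_const_mul] at hftc
    have e1 : ∫ x in (1:ℝ)..t, ‖g x‖ = ∫ x in (1:ℝ)..t, g x := by
      refine intervalIntegral.integral_congr fun x hx => ?_
      rw [uIcc_of_le ht] at hx
      exact Real.norm_of_nonneg (hg0 x hx.1)
    rw [e1]
    have e2 : ∫ r in (1:ℝ)..t, r * φ r ≤ ∫ r in Ioi (1:ℝ), r * φ r := by
      rw [intervalIntegral.integral_of_le ht]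
      refine setIntegral_mono_set hφint ?_ (Ioc_subset_Ioi_self.eventuallyLE)
      filter_upwards [ae_restrict_mem measurableSet_Ioi] with r hr
      have : (0:ℝ) < r := by linarith [mem_Ioi.1 hr]
      exact (mul_pos this (hφpos r this)).le
    have e3 : 0 ≤ ∫ x in (1:ℝ)..t, g x :=
      intervalIntegral.integral_nonneg ht fun x hx => hg0 x hx.1
    have e4 : 0 ≤ t * g t := mul_nonneg (by linarith) (hg0 t ht)
    have hftc' : (∫ r in (1:ℝ)..t, r * φ r) - ((N:ℝ) - 2) * (∫ x in (1:ℝ)..t, g x)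
        = t * g t - 1 * g 1 := hftc
    rw [hg1] at hftc'
    nlinarith

end one_dim

/-- The construction in the proof of Theorem 4.1: `u(x) = ((p+1) D(|x|))^{1/(p+1)}` is
a positive `C²` supersolution of `-Δu ≥ φ(|x|) u^{-p}` outside the unit ball, tending to
zero at infinity. -/
theorem statement_19 {N : ℕ} (hN : 3 ≤ N) (p : ℝ) (hp : 0 < p) (φ : ℝ → ℝ)
    (hφcont : ContinuousOn φ (Ioi (0:ℝ))) (hφpos : ∀ r : ℝ, 0 < r → 0 < φ r)
    (hφint : IntegrableOn (fun r : ℝ => r * φ r) (Ioi (1:ℝ)) volume) :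
    (∀ r : ℝ, 1 ≤ r →
      IntegrableOn
        (fun t : ℝ => t ^ (1 - (N:ℝ)) * ∫ s in (1:ℝ)..t, s ^ ((N:ℝ) - 1) * φ s)
        (Ioi r) volume ∧
      0 < ∫ t in Ioi r, t ^ (1 - (N:ℝ)) * ∫ s in (1:ℝ)..t, s ^ ((N:ℝ) - 1) * φ s) ∧
    ContDiffOn ℝ 2
      (fun x : EuclideanSpace ℝ (Fin N) =>
        ((p + 1) * ∫ t in Ioi ‖x‖, t ^ (1 - (N:ℝ)) *
            ∫ s in (1:ℝ)..t, s ^ ((N:ℝ) - 1) * φ s) ^ (1 / (p + 1)))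
      {x : EuclideanSpace ℝ (Fin N) | 1 < ‖x‖} ∧
    (∀ x : EuclideanSpace ℝ (Fin N), 1 < ‖x‖ →
      0 < ((p + 1) * ∫ t in Ioi ‖x‖, t ^ (1 - (N:ℝ)) *
            ∫ s in (1:ℝ)..t, s ^ ((N:ℝ) - 1) * φ s) ^ (1 / (p + 1)) ∧
      φ ‖x‖ * (((p + 1) * ∫ t in Ioi ‖x‖, t ^ (1 - (N:ℝ)) *
            ∫ s in (1:ℝ)..t, s ^ ((N:ℝ) - 1) * φ s) ^ (1 / (p + 1))) ^ (-p) ≤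
        -laplacian
          (fun x : EuclideanSpace ℝ (Fin N) =>
            ((p + 1) * ∫ t in Ioi ‖x‖, t ^ (1 - (N:ℝ)) *
                ∫ s in (1:ℝ)..t, s ^ ((N:ℝ) - 1) * φ s) ^ (1 / (p + 1))) x) ∧
    Tendsto
      (fun x : EuclideanSpace ℝ (Fin N) =>
        ((p + 1) * ∫ t in Ioi ‖x‖, t ^ (1 - (N:ℝ)) *
            ∫ s in (1:ℝ)..t, s ^ ((N:ℝ) - 1) * φ s) ^ (1 / (p + 1)))
      (Filter.cocompact (EuclideanSpace ℝ (Fin N))) (nhds 0) := by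
  have hgint1 := aux_g_int (N := N) φ hN hφcont hφpos hφint
  have hgc := aux_g_cont (N := N) φ hφcont
  have hgp := aux_g_pos (N := N) φ hφcont hφpos
  have hgd := aux_g_deriv (N := N) φ hφcont
  set g : ℝ → ℝ := fun t : ℝ => t ^ (1 - (N:ℝ)) * ∫ s in (1:ℝ)..t, s ^ ((N:ℝ) - 1) * φ s with hg
  have hgint : ∀ r : ℝ, 1 ≤ r → IntegrableOn g (Ioi r) volume :=
    fun r hr => hgint1.mono_set (Ioi_subset_Ioi hr)
  have hsub : ∀ a b : ℝ, 1 ≤ a → 1 ≤ b → uIcc a b ⊆ Ioi 0 :=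
    fun a b ha hb y hy => lt_of_lt_of_le (lt_min (by linarith) (by linarith)) hy.1
  have hii : ∀ a b : ℝ, 1 ≤ a → 1 ≤ b → IntervalIntegrable g volume a b :=
    fun a b ha hb => (hgc.mono (hsub a b ha hb)).intervalIntegrable
  have hsplit : ∀ a b : ℝ, 1 ≤ a → 1 ≤ b →
      (∫ t in a..b, g t) + ∫ t in Ioi b, g t = ∫ t in Ioi a, g t :=
    fun a b ha hb => intervalIntegral.integral_interval_add_Ioi (hgint a ha) (hgint b hb)
  have hDpos : ∀ r : ℝ, 1 ≤ r → 0 < ∫ t in Ioi r, g t := by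
    intro r hr
    rw [← hsplit r (r + 1) hr (by linarith)]
    refine add_pos_of_pos_of_nonneg ?_ ?_
    · exact intervalIntegral.intervalIntegral_pos_of_pos_on (hii _ _ hr (by linarith))
        (fun x hx => hgp x (by linarith [hx.1])) (by linarith)
    · exact setIntegral_nonneg measurableSet_Ioi fun x hx =>
        (hgp x (by linarith [mem_Ioi.1 hx])).le
  set E : ℝ → ℝ := fun r => (p + 1) * ∫ t in Ioi r, g t with hE
  have hp1 : 0 < p + 1 := by linarith
  have hEpos : ∀ r : ℝ, 1 ≤ r → 0 < E r := fun r hr => mul_pos hp1 (hDpos r hr)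
  have hEd : ∀ r : ℝ, 1 < r → HasDerivAt E (-((p + 1) * g r)) r := by
    intro r hr
    have h0 : (0:ℝ) < r := by linarith
    have h1 : HasDerivAt (fun u => ∫ t in (1:ℝ)..u, g t) (g r) r :=
      intervalIntegral.integral_hasDerivAt_right (hii _ _ le_rfl hr.le)
        (hgc.stronglyMeasurableAtFilter isOpen_Ioi r h0) (hgc.continuousAt (Ioi_mem_nhds h0))
    have h2 := (h1.const_sub (∫ t in Ioi (1:ℝ), g t)).const_mul (p + 1)
    have h3 : E =ᶠ[nhds r] fun u => (p + 1) * ((∫ t in Ioi (1:ℝ), g t) - ∫ t in (1:ℝ)..u, g t) := by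
      filter_upwards [lt_mem_nhds hr] with u hu
      rw [← hsplit 1 u le_rfl hu.le]
      simp [hE]
    exact (h2.congr_of_eventuallyEq h3).congr_deriv (by ring)
  have hEt : Tendsto E atTop (nhds 0) := by
    have h1 := intervalIntegral_tendsto_integral_Ioi 1 hgint1 tendsto_id
    have h2 := (h1.const_sub (∫ t in Ioi (1:ℝ), g t)).const_mul (p + 1)
    rw [sub_self, mul_zero] at h2
    refine h2.congr' ?_
    filter_upwards [eventually_ge_atTop 1] with u hu
    rw [← hsplit 1 u le_rfl hu]
    simp [hE]
  set a : ℝ := 1 / (p + 1) with ha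
  have ha0 : 0 < a := by positivity
  have hap : a * (p + 1) = 1 := by rw [ha]; field_simp
  set g' : ℝ → ℝ := fun t => φ t - ((N:ℝ) - 1) / t * g t with hg'
  have hd1 : ∀ r, 1 < r → HasDerivAt (fun r => E r ^ a) (-(g r * E r ^ (a - 1))) r := by
    intro r hr
    refine ((hEd r hr).rpow_const (p := a) (Or.inl (hEpos r hr.le).ne')).congr_deriv ?_
    linear_combination (-g r * E r ^ (a - 1)) * hap
  have hd2 : ∀ r, 1 < r → HasDerivAt (fun r => -(g r * E r ^ (a - 1)))
      (-(g' r * E r ^ (a - 1) + p * g r ^ 2 * E r ^ (a - 1 - 1))) r := by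
    intro r hr
    refine (((hgd r (by linarith)).mul
      ((hEd r hr).rpow_const (p := a - 1) (Or.inl (hEpos r hr.le).ne'))).neg).congr_deriv ?_
    simp only [hg']
    linear_combination (g r ^ 2 * E r ^ (a - 1 - 1)) * hap
  have hEc : ContinuousOn E (Ioi 1) := fun r hr => (hEd r hr).continuousAt.continuousWithinAt
  have hs01 : Ioi (1:ℝ) ⊆ Ioi 0 := Ioi_subset_Ioi zero_le_one
  have hgc1 := hgc.mono hs01
  have hEr : ∀ b : ℝ, ContinuousOn (fun r => E r ^ b) (Ioi 1) := fun b =>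
    hEc.rpow_const fun r hr => Or.inl (hEpos r (le_of_lt hr)).ne'
  have hc2 : ContinuousOn
      (fun r => -(g' r * E r ^ (a - 1) + p * g r ^ 2 * E r ^ (a - 1 - 1))) (Ioi 1) := by
    have hg'c : ContinuousOn g' (Ioi 1) :=
      (hφcont.mono hs01).sub ((continuousOn_const.div continuousOn_id
        fun r hr => (hs01 hr).ne').mul hgc1)
    exact ((hg'c.mul (hEr _)).add ((continuousOn_const.mul (hgc1.pow 2)).mul (hEr _))).neg
  refine ⟨fun r hr => ⟨hgint r hr, hDpos r hr⟩, ?_, ?_, ?_⟩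
  · have hC := aux_contDiff _ _ _ hd1 hd2 hc2
    intro x hx
    have hx0 : x ≠ 0 := by
      rintro rfl
      simp at hx
      linarith
    have := (hC.contDiffAt (Ioi_mem_nhds hx)).comp x (contDiffAt_norm ℝ hx0)
    exact this.contDiffWithinAt
  · intro x hx
    have hE0 := hEpos _ hx.le
    refine ⟨Real.rpow_pos_of_pos hE0 _, ?_⟩
    have hL := aux_laplacian_radial _ _ _ hd1 hd2 x hx
    have hL' : laplacian (fun x : EuclideanSpace ℝ (Fin N) => ((p + 1) * ∫ t in Ioi ‖x‖, g t) ^ a) x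
      = _ := hL
    rw [hL']
    change φ ‖x‖ * (E ‖x‖ ^ a) ^ (-p) ≤ _
    rw [← Real.rpow_mul hE0.le, show a * -p = a - 1 by linear_combination (-1) * hap]
    have : 0 ≤ p * g ‖x‖ ^ 2 * E ‖x‖ ^ (a - 1 - 1) := by positivity
    simp only [hg']
    have hx0 : ‖x‖ ≠ 0 := by linarith
    nlinarith
  · have h1 := (hEt.comp (tendsto_norm_cocompact_atTop (E := EuclideanSpace ℝ (Fin N)))).rpow_const
      (p := a) (Or.inr ha0.le)
    rw [Real.zero_rpow ha0.ne'] at h1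
    exact h1
end
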